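/- Let $k \geq 5$ be a squarefree integer coprime to $6$, let $t \geq 0$ be an integer, let $\Gamma$ be a finite connected cubic graph, let $G$ be a group of automorphisms of $\Gamma$ acting regularly on the set of $(t+1)$-arcs, and let $C$ be a cyclic subgroup of $G$ that is semiregular on the vertices with exactly $k$ orbits. If $G$ is solvable, then $\Gamma$ has at most $6k^2$ vertices. -/

import Mathlib

/-!
The proof analyses the action of `G` on the orbits of its normal subgroups. If a normal subgroup has
at least three vertex orbits, it is semiregular and the quotient graph is again cubic and
arc-transitive. Take `L` maximal among such normal subgroups and an elementary abelian factor `S / L`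
of `G`; then `S` has at most two orbits.

* `S / L` is not a 2-group (`Sys.not_typeII`). Otherwise the quotient by `L` has 2-power order and
  a transitive cyclic group, so it is the complete graph on four vertices. An elementary abelian factor
  `L / L₁` of `G` below `L` has odd order and rank at most two, because `C` is cyclic and its
  number of orbits `k` is squarefree. Elements of `S` moving a vertex to its three neighbours
  are rotated by a vertex stabiliser, and two commuting involutions of a space of rank at most two
  cannot be rotated in this way unless they are trivial (`commutes_of_rotated`). So `S` centralises
  `L / L₁`, which splits off and leaves a normal subgroup with an odd number of orbits, at least three;
  but a cubic graph has even order.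
* So `S / L` has odd order, `S` has exactly two orbits, and in fact `S` has odd order (`Sys.typeI`).
  Otherwise there is a factor `A / B` of 2-power order below `L`. The 2-part of `C` would act on an
  orbit of `A` with a single nilpotent twist, which forces `|A / B| = 2`, so `A / B` is central and
  `S` has a normal subgroup of index two, normal in `G` and with at least four orbits. By the
  pigeonhole principle two neighbours of a vertex lie in one orbit of it, which is impossible.

Hence there is a normal subgroup `N` of odd order with two orbits; a maximal one has vertex
stabilisers of order three (`CubicArc.exists_mem_stab`, `CubicArc.stab_of_odd`). Since `|V|` is even
and `k` is odd, `|C| = 2n` with `n` odd. If `z` is the involution of `C` and `M = N⟨z⟩`, then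
`|M| = 6kn`, and the conjugates of `z` reverse all edges, so that together with an element `a` of
order three fixing a vertex they generate `M`.

What remains is group theory (`order_dvd_three_mul`): in such a group `M`, an element of odd order `n`
commuting with `z` has `n ∣ 3k`. At each prime `p` the `p`-part of `c` has index at most `p` in a
Sylow subgroup. The transfer into an abelian Sylow subgroup kills the involutions and therefore every
element of a group generated by them (`central_eq_one`), so that Sylow subgroup contains no nontrivial
central element; induction over elementary abelian normal subgroups turns this into bounds on
centralisers of `z` (`not_dvd_of_centralizes_sylow`, `pow_eq_one_of_index_p`). Finally
`|V| = 2kn ≤ 6k²`.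
-/

/-- A permutation `g` of the vertices is an automorphism of the graph `Γ`. -/
def IsGraphAut {V : Type*} (Γ : SimpleGraph V) (g : Equiv.Perm V) : Prop :=
  ∀ a b : V, Γ.Adj (g a) (g b) ↔ Γ.Adj a b

/-- A group action is semiregular if only the identity fixes a point. -/
def IsSemiregular (G V : Type*) [Group G] [MulAction G V] : Prop :=
  ∀ g : G, (∃ v : V, g • v = v) → g = 1

/-- An `n`-arc of `Γ` is a sequence of `n + 1` vertices such that consecutive
vertices are adjacent and repeated vertices are more than `2` steps apart. -/
def IsNArc {V : Type*} (Γ : SimpleGraph V) (n : ℕ) (f : Fin (n + 1) → V) : Prop :=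
  (∀ i : Fin n, Γ.Adj (f i.castSucc) (f i.succ)) ∧
  ∀ i j : Fin (n + 1), i < j → f i = f j → 2 < (j : ℕ) - (i : ℕ)

/-- `G` acts regularly on the `n`-arcs of `Γ`. -/
def ArcRegular {V : Type*} (Γ : SimpleGraph V) (G : Subgroup (Equiv.Perm V))
    (n : ℕ) : Prop :=
  ∀ a b : Fin (n + 1) → V, IsNArc Γ n a → IsNArc Γ n b →
    ∃! g : ↥G, ∀ i, (g : Equiv.Perm V) (a i) = b i

/-! ### Elementary abelian factors, and involutions centralising a Sylow subgroup -/

universe u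

/-- A minimal normal subgroup of a solvable group is elementary abelian. -/
theorem exists_minimal_normal_elemAb {X : Type*} [Group X] [Finite X] [Group.IsSolvable X]
    (T : Subgroup X) [T.Normal] (hT : T ≠ ⊥) :
    ∃ (q : ℕ) (S : Subgroup X), q.Prime ∧ S.Normal ∧ S ≠ ⊥ ∧ S ≤ T ∧
      (∀ x ∈ S, ∀ y ∈ S, x * y = y * x) ∧ ∀ x ∈ S, x ^ q = 1 := by
  obtain ⟨S, ⟨hSn, hS0, hST⟩, hmin⟩ :=
    Set.Finite.exists_minimal (s := {S : Subgroup X | S.Normal ∧ S ≠ ⊥ ∧ S ≤ T})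
      (Set.toFinite _) ⟨T, ‹_›, hT, le_rfl⟩
  have hcomm : ∀ x ∈ S, ∀ y ∈ S, x * y = y * x := by
    have h1 : ⁅S, S⁆ < S := Group.IsSolvable.commutator_lt_of_ne_bot hS0
    have h2 : ⁅S, S⁆ = ⊥ := by
      by_contra h
      exact h1.not_ge (hmin (y := ⁅S, S⁆) ⟨inferInstance, h, h1.le.trans hST⟩ h1.le)
    intro x hx y hy
    have := Subgroup.commutator_mem_commutator hx hy
    rw [h2, Subgroup.mem_bot, commutatorElement_eq_one_iff_mul_comm] at this
    exact this
  have hc1 : Nat.card S ≠ 1 := by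
    rwa [Ne, Subgroup.card_eq_one]
  obtain ⟨q, hq, hqd⟩ := Nat.exists_prime_and_dvd hc1
  have := Fact.mk hq
  obtain ⟨x0, hx0⟩ := exists_prime_orderOf_dvd_card' q hqd
  let R : Subgroup X :=
    { carrier := {x | x ∈ S ∧ x ^ q = 1}
      one_mem' := ⟨S.one_mem, one_pow _⟩
      mul_mem' := by
        rintro a b ⟨ha, ha'⟩ ⟨hb, hb'⟩
        refine ⟨S.mul_mem ha hb, ?_⟩
        have : Commute a b := hcomm a ha b hb
        rw [this.mul_pow, ha', hb', one_mul]
      inv_mem' := by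
        rintro a ⟨ha, ha'⟩
        exact ⟨S.inv_mem ha, by rw [inv_pow, ha', inv_one]⟩ }
  have hR : R.Normal := ⟨by
    rintro a ⟨ha, ha'⟩ g
    exact ⟨hSn.conj_mem a ha g, by rw [conj_pow, ha']; simp⟩⟩
  have hR0 : R ≠ ⊥ := by
    intro h
    have h1 : (x0 : X) ∈ R := ⟨x0.2, by
      have := pow_orderOf_eq_one x0
      rw [hx0] at this
      exact_mod_cast congrArg Subtype.val this⟩
    rw [h, Subgroup.mem_bot] at h1
    have : x0 = 1 := Subtype.ext h1
    rw [this, orderOf_one] at hx0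
    exact hq.ne_one hx0.symm
  have hRS : R ≤ S := fun x hx => hx.1
  have := hmin (y := R) ⟨hR, hR0, hRS.trans hST⟩ hRS
  exact ⟨q, S, hq, hSn, hS0, hST, hcomm, fun x hx => (this hx).2⟩

/-- `S / B` is an elementary abelian `q`-group, expressed without forming the quotient. -/
structure ElemAbMod {X : Type*} [Group X] (q : ℕ) (B S : Subgroup X) : Prop where
  comm : ∀ x ∈ S, ∀ y ∈ S, x * y * x⁻¹ * y⁻¹ ∈ B
  pow : ∀ x ∈ S, x ^ q ∈ B

/-- Above a normal subgroup `B` there is a nontrivial elementary abelian factor `S / B` of the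
group, inside any normal subgroup `T` that properly contains `B`. -/
theorem exists_chief {X : Type*} [Group X] [Finite X] [Group.IsSolvable X]
    (B T : Subgroup X) [B.Normal] [T.Normal] (h : B < T) :
    ∃ (q : ℕ) (S : Subgroup X), q.Prime ∧ S.Normal ∧ B < S ∧ S ≤ T ∧ ElemAbMod q B S := by
  have hT' : T.map (QuotientGroup.mk' B) ≠ ⊥ := by
    rw [Ne, Subgroup.map_eq_bot_iff, QuotientGroup.ker_mk']
    exact h.not_ge
  have : (T.map (QuotientGroup.mk' B)).Normal :=
    Subgroup.Normal.map ‹_› _ (QuotientGroup.mk'_surjective B)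
  obtain ⟨q, S, hq, hSn, hS0, hST, hc, hp⟩ := exists_minimal_normal_elemAb _ hT'
  have hBS : B ≤ S.comap (QuotientGroup.mk' B) := by
    intro x hx
    have : (x : X ⧸ B) = 1 := (QuotientGroup.eq_one_iff x).2 hx
    simp [Subgroup.mem_comap, this, S.one_mem]
  refine ⟨q, S.comap (QuotientGroup.mk' B), hq, hSn.comap _, lt_of_le_of_ne hBS ?_, ?_, ?_, ?_⟩
  · intro he
    apply hS0
    rw [← Subgroup.map_comap_eq_self_of_surjective (QuotientGroup.mk'_surjective B) S, ← he,
      Subgroup.map_eq_bot_iff, QuotientGroup.ker_mk']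
  · have := Subgroup.comap_mono (f := QuotientGroup.mk' B) hST
    rw [Subgroup.comap_map_eq, QuotientGroup.ker_mk', sup_of_le_left h.le] at this
    exact this
  · intro x hx y hy
    rw [← QuotientGroup.eq_one_iff]
    have := hc _ hx _ hy
    simp only [QuotientGroup.mk'_apply] at this
    simp only [QuotientGroup.mk_mul, QuotientGroup.mk_inv, this]
    group
  · intro x hx
    rw [← QuotientGroup.eq_one_iff]
    exact hp _ hx

/-- Below a nontrivial normal subgroup `T` there is a nontrivial elementary abelian factor `T / B`.
-/
theorem exists_chief_top {X : Type*} [Group X] [Finite X] [Group.IsSolvable X]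
    (T : Subgroup X) [T.Normal] (h : T ≠ ⊥) :
    ∃ (q : ℕ) (B : Subgroup X), q.Prime ∧ B.Normal ∧ B < T ∧ ElemAbMod q B T := by
  obtain ⟨B, ⟨hBn, hBT⟩, hmax⟩ :=
    Set.Finite.exists_maximal (s := {S : Subgroup X | S.Normal ∧ S < T})
      (Set.toFinite _) ⟨⊥, inferInstance, bot_lt_iff_ne_bot.2 h⟩
  obtain ⟨q, S, hq, hSn, hBS, hST, hE⟩ := exists_chief B T hBT
  rcases hST.eq_or_lt with rfl | hlt
  · exact ⟨q, B, hq, hBn, hBT, hE⟩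
  · exact absurd (hmax (y := S) ⟨hSn, hlt⟩ hBS.le) hBS.not_ge

theorem ElemAbMod.card {X : Type*} [Group X] [Finite X] {q : ℕ} (hq : q.Prime)
    {B S : Subgroup X} [hB : B.Normal] (h : ElemAbMod q B S) (hBS : B ≤ S) :
    ∃ r, Nat.card S = Nat.card B * q ^ r := by
  have := Fact.mk hq
  have hp : IsPGroup q (S ⧸ B.subgroupOf S) := by
    intro g
    induction g using QuotientGroup.induction_on with
    | H g =>
      refine ⟨1, ?_⟩
      rw [pow_one, ← QuotientGroup.mk_pow, QuotientGroup.eq_one_iff, Subgroup.mem_subgroupOf]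
      exact h.pow _ g.2
  obtain ⟨r, hr⟩ := IsPGroup.iff_card.1 hp
  refine ⟨r, ?_⟩
  rw [← hr, (B.subgroupOf S).card_eq_card_quotient_mul_card_subgroup, mul_comm]
  congr 1
  exact Nat.card_congr (Subgroup.subgroupOfEquivOfLe hBS).toEquiv

theorem eq_one_of_sq_of_odd {X : Type*} [Group X] {x : X} (h2 : x * x = 1)
    {n : ℕ} (hn : Odd n) (h : x ^ n = 1) : x = 1 := by
  obtain ⟨m, rfl⟩ := hn
  rwa [pow_succ, pow_mul, pow_two, h2, one_pow, one_mul] at h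

/-- The transfer into an abelian Sylow `p`-subgroup kills the involution `z`, hence everything;
on central elements it is a power map prime to `p`. -/
theorem central_eq_one {E : Type*} [Group E] [Finite E] {p : ℕ} [hp : Fact p.Prime] (hp2 : p ≠ 2)
    {z : E} (hz : z * z = 1) (hcl : Subgroup.normalClosure {z} = ⊤) (P : Sylow p E)
    (hab : ∀ x ∈ P, ∀ y ∈ P, x * y = y * x) {v : E} (hv : v ∈ P)
    (hvc : ∀ g, g * v = v * g) : v = 1 := by
  let _ : CommGroup (P : Subgroup E) :=
    { (inferInstance : Group (P : Subgroup E)) with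
      mul_comm := fun a b => Subtype.ext (hab a a.2 b b.2) }
  let φ : E →* (P : Subgroup E) := MonoidHom.transfer (MonoidHom.id (P : Subgroup E))
  have hodd : Odd (Nat.card (P : Subgroup E)) := by
    obtain ⟨n, hn⟩ := IsPGroup.iff_card.1 P.2
    rw [hn]
    exact (hp.1.odd_of_ne_two hp2).pow
  have hφz : φ z = 1 := by
    apply eq_one_of_sq_of_odd _ hodd pow_card_eq_one'
    rw [← map_mul, hz, map_one]
  have hker : φ.ker = ⊤ := by
    rw [eq_top_iff, ← hcl]
    apply Subgroup.normalClosure_le_normal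
    simpa using hφz
  have h1 : φ v = 1 := by
    rw [← MonoidHom.mem_ker, hker]; trivial
  have hkey : ∀ (k : ℕ) (g₀ : E), g₀⁻¹ * v ^ k * g₀ ∈ (P : Subgroup E) →
      g₀⁻¹ * v ^ k * g₀ = v ^ k := by
    intro k g _
    have : Commute g (v ^ k) := (show Commute g v from hvc g).pow_right k
    rw [mul_assoc, ← this.eq]; simp
  have h2 := MonoidHom.transfer_eq_pow (MonoidHom.id (P : Subgroup E)) v hkey
  change φ v = _ at h2
  rw [h1] at h2
  have h3 : v ^ (P : Subgroup E).index = 1 := by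
    have := congrArg Subtype.val h2
    simpa using this.symm
  have h4 : v ^ Nat.card (P : Subgroup E) = 1 :=
    orderOf_dvd_iff_pow_eq_one.1 ((P : Subgroup E).orderOf_dvd_natCard hv)
  have hco : Nat.Coprime (P : Subgroup E).index (Nat.card (P : Subgroup E)) := 
    P.card_coprime_index.symm
  have := pow_gcd_eq_one.2 ⟨h3, h4⟩
  rwa [hco, pow_one] at this

theorem commute_all_of_normalClosure {E : Type*} [Group E] {z : E}
    (hcl : Subgroup.normalClosure {z} = ⊤) {A : Subgroup E} [A.Normal]
    (h : ∀ a ∈ A, z * a = a * z) : ∀ a ∈ A, ∀ g, g * a = a * g := by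
  have : Subgroup.centralizer (A : Set E) = ⊤ := by
    rw [eq_top_iff, ← hcl]
    apply Subgroup.normalClosure_le_normal
    rw [Set.singleton_subset_iff]
    exact Subgroup.mem_centralizer_iff.2 fun a ha => (h a ha).symm
  intro a ha g
  have hg : g ∈ Subgroup.centralizer (A : Set E) := this ▸ Subgroup.mem_top g
  exact (Subgroup.mem_centralizer_iff.1 hg a ha).symm

theorem normalClosure_quotient {E : Type*} [Group E] {z : E}
    (hcl : Subgroup.normalClosure {z} = ⊤) (A : Subgroup E) [A.Normal] :
    Subgroup.normalClosure {(z : E ⧸ A)} = ⊤ := by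
  have h := Subgroup.map_normalClosure {z} (QuotientGroup.mk' A) (QuotientGroup.mk'_surjective A)
  rw [hcl, Subgroup.map_top_of_surjective _ (QuotientGroup.mk'_surjective A),
    Set.image_singleton] at h
  exact h.symm

theorem card_quotient_lt {E : Type*} [Group E] [Finite E] {A : Subgroup E} (hA : A ≠ ⊥) :
    Nat.card (E ⧸ A) < Nat.card E := by
  rw [A.card_eq_card_quotient_mul_card_subgroup]
  have h1 : 1 < Nat.card A := by
    have h1 : Nat.card A ≠ 1 := by rwa [Ne, Subgroup.card_eq_one]
    have := Nat.card_pos (α := A)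
    omega
  have : 0 < Nat.card (E ⧸ A) := Nat.card_pos
  nlinarith

theorem not_dvd_card_of_pow {E : Type*} [Group E] [Finite E] {p q : ℕ} (hp : p.Prime)
    (hq : q.Prime) (hpq : p ≠ q) {A : Subgroup E} (h : ∀ x ∈ A, x ^ q = 1) :
    ¬ p ∣ Nat.card A := by
  intro hd
  have := Fact.mk hp
  obtain ⟨x, hx⟩ := exists_prime_orderOf_dvd_card' p hd
  have h1 : x ^ q = 1 := Subtype.ext (h x x.2)
  have h2 := orderOf_dvd_of_pow_eq_one h1
  rw [hx] at h2
  exact hpq ((Nat.prime_dvd_prime_iff_eq hp hq).1 h2)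

theorem isPGroup_of_pow {E : Type*} [Group E] {q : ℕ} {A : Subgroup E} (h : ∀ x ∈ A, x ^ q = 1) :
    IsPGroup q A := fun x => ⟨1, Subtype.ext (by simpa using h x x.2)⟩

/-- If an involution whose conjugates generate the solvable group `E` centralises a Sylow
`p`-subgroup, then `p` does not divide `|E|`. By induction, `p` does not divide the order of the
quotient by an elementary abelian normal subgroup `A`; if `A` is a `p`-group, it is central and a
Sylow subgroup, so `central_eq_one` applies. -/
theorem not_dvd_of_centralizes_sylow {p : ℕ} [hp : Fact p.Prime] (hp2 : p ≠ 2) :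
    ∀ (n : ℕ) (E : Type u) [Group E] [Finite E] [Group.IsSolvable E], Nat.card E = n →
    ∀ (z : E), z * z = 1 → Subgroup.normalClosure {z} = ⊤ →
    ∀ (P : Sylow p E), (∀ x ∈ P, z * x = x * z) → ¬ p ∣ Nat.card E := by
  intro n
  induction n using Nat.strong_induction_on with
  | _ n ih =>
  intro E _ _ _ hn z hz hcl P hP
  by_cases htriv : (⊤ : Subgroup E) = ⊥
  · rw [← Subgroup.card_top, htriv, Subgroup.card_bot]
    exact hp.1.one_lt.ne' ∘ Nat.dvd_one.1
  obtain ⟨q, A, hq, hAn, hA0, -, hAc, hAq⟩ := exists_minimal_normal_elemAb (⊤ : Subgroup E) htriv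
  have hsurj := QuotientGroup.mk'_surjective A
  have h1 : ¬ p ∣ Nat.card (E ⧸ A) := by
    refine ih _ (hn ▸ card_quotient_lt hA0) (E ⧸ A) rfl (z : E ⧸ A) ?_
      (normalClosure_quotient hcl A) (P.mapSurjective hsurj) ?_
    · rw [← QuotientGroup.mk_mul, hz, QuotientGroup.mk_one]
    · rintro _ ⟨x, hx, rfl⟩
      simp only [QuotientGroup.mk'_apply, ← QuotientGroup.mk_mul, hP x hx]
  rw [A.card_eq_card_quotient_mul_card_subgroup, hp.1.dvd_mul]
  rintro (h | h)
  · exact h1 h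
  · by_cases hpq : p = q
    · subst hpq
      have hAp : IsPGroup p A := isPGroup_of_pow hAq
      have hcen := commute_all_of_normalClosure hcl (A := A)
        (fun a ha => hP a (hAp.le_sylow_of_normal P ha))
      let P' : Sylow p E := hAp.toSylow h1
      apply hA0
      rw [Subgroup.eq_bot_iff_forall]
      intro v hv
      exact central_eq_one hp2 hz hcl P' hAc hv (hcen v hv)
    · exact not_dvd_card_of_pow hp.1 hq hpq hAq h

/-! ### Involutions centralising a cyclic subgroup of index `p` in a Sylow subgroup -/

/-- Let `⟨c⟩` have index `p` in the `p`-group `P`. Then `⟨c⟩` is normal in `P`, contains all `p`-th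
powers, and together with any element of `P` outside it generates `P`. -/
theorem zpowers_index_p {E : Type*} [Group E] [Finite E] {p : ℕ} [hp : Fact p.Prime]
    {P : Subgroup E} (hP : IsPGroup p P) {c : E} (hc : c ∈ P)
    (hcard : Nat.card P = p * orderOf c) :
    (∀ a ∈ P, a * c * a⁻¹ ∈ Subgroup.zpowers c) ∧ (∀ a ∈ P, a ^ p ∈ Subgroup.zpowers c) ∧
      ∀ a ∈ P, a ∉ Subgroup.zpowers c → ∀ w ∈ P, ∃ i j : ℤ, w = c ^ i * a ^ j := by
  let c' : P := ⟨c, hc⟩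
  have hmem : ∀ a : P, a ∈ Subgroup.zpowers c' ↔ (a : E) ∈ Subgroup.zpowers c := by
    intro a
    simp only [Subgroup.mem_zpowers_iff]
    constructor
    · rintro ⟨k, hk⟩; exact ⟨k, by rw [← hk]; simp [c']⟩
    · rintro ⟨k, hk⟩; exact ⟨k, Subtype.ext (by rw [← hk]; simp [c'])⟩
  have ho : orderOf c' = orderOf c := Subgroup.orderOf_mk c hc
  have hidx : (Subgroup.zpowers c').index = p := by
    have h1 := (Subgroup.zpowers c').card_mul_index
    rw [Nat.card_zpowers, ho, hcard, mul_comm] at h1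
    exact Nat.eq_of_mul_eq_mul_right (orderOf_pos c) h1
  have hmin : (Nat.card P).minFac = p := by
    obtain ⟨n, hn⟩ := IsPGroup.iff_card.1 hP
    rw [hn]
    apply hp.1.pow_minFac
    rintro rfl
    rw [hn] at hcard
    exact hp.1.one_lt.ne' (Nat.dvd_one.1 ⟨_, by simpa using hcard⟩)
  have hN : (Subgroup.zpowers c').Normal :=
    Subgroup.normal_of_index_eq_minFac_card (hidx.trans hmin.symm)
  have hcq : Nat.card (P ⧸ Subgroup.zpowers c') = p := by
    rw [← Subgroup.index_eq_card]; exact hidx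
  refine ⟨?_, ?_, ?_⟩
  · intro a ha
    exact (hmem _).1 (hN.conj_mem c' (Subgroup.mem_zpowers c') ⟨a, ha⟩)
  · intro a ha
    have h : (QuotientGroup.mk (⟨a, ha⟩ ^ p : P) : P ⧸ Subgroup.zpowers c') = 1 := by
      rw [QuotientGroup.mk_pow]
      exact hcq ▸ pow_card_eq_one'
    exact (hmem _).1 ((QuotientGroup.eq_one_iff _).1 h)
  · intro a ha hac w hw
    have h1 : (QuotientGroup.mk (⟨a, ha⟩ : P) : P ⧸ Subgroup.zpowers c') ≠ 1 := by
      rw [Ne, QuotientGroup.eq_one_iff, hmem]; exact hac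
    obtain ⟨j, hj⟩ := Subgroup.mem_zpowers_iff.1
      (mem_zpowers_of_prime_card hcq h1 (g' := QuotientGroup.mk (⟨w, hw⟩ : P)))
    rw [← QuotientGroup.mk_zpow, QuotientGroup.eq] at hj
    have h2 : (⟨w, hw⟩ : P) * (⟨a, ha⟩ ^ j)⁻¹ ∈ Subgroup.zpowers c' :=
      hN.mem_comm hj
    obtain ⟨i, hi⟩ := Subgroup.mem_zpowers_iff.1 h2
    refine ⟨i, j, ?_⟩
    have := congrArg Subtype.val hi
    simp only [c', Subgroup.coe_zpow, Subgroup.coe_mul, Subgroup.coe_inv] at this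
    rw [this]; group

theorem conj_invol_mul {E : Type*} [Group E] {z : E} (hz : z * z = 1) (x y : E) :
    z * (x * y) * z = (z * x * z) * (z * y * z) := by
  have : z * x * z * (z * y * z) = z * x * (z * z) * y * z := by group
  rw [this, hz]; group

theorem conj_zpow_of_comm {E : Type*} [Group E] {z : E} (hz : z * z = 1) {c : E}
    (hzc : z * c = c * z) (i : ℤ) : z * c ^ i * z = c ^ i := by
  have : Commute z (c ^ i) := (show Commute z c from hzc).zpow_right i
  rw [this.eq, mul_assoc, hz, mul_one]

/-- If the involution `z` centralises a cyclic subgroup `⟨c⟩` of index `p` in the `p`-group `P` but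
not `P` itself, then `P` is the product of `⟨c⟩` and a commuting element of order `p` inverted by
`z`; in particular `P` is abelian. -/
theorem exists_inverted {E : Type*} [Group E] [Finite E] {p : ℕ} [hp : Fact p.Prime] (hp2 : p ≠ 2)
    {z : E} (hz : z * z = 1) {P : Subgroup E} (hP : IsPGroup p P)
    (hzP : ∀ x ∈ P, z * x * z ∈ P) {c : E} (hc : c ∈ P) (hzc : z * c = c * z)
    (hcard : Nat.card P = p * orderOf c) {x : E} (hx : x ∈ P) (hne : z * x ≠ x * z) :
    ∃ y, y = x⁻¹ * (z * x * z) ∧ y ∈ P ∧ c * y = y * c ∧ y ^ p = 1 ∧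
      ∀ w ∈ P, ∃ i j : ℤ, w = c ^ i * y ^ j := by
  obtain ⟨h1, h2, h3⟩ := zpowers_index_p hP hc hcard
  have hzinv : z⁻¹ = z := inv_eq_of_mul_eq_one_left hz
  obtain ⟨m, hm⟩ := IsPGroup.iff_card.1 hP
  have hoddP : Odd (Nat.card P) := by
    rw [hm]; exact (hp.1.odd_of_ne_two hp2).pow
  have hpow : ∀ w ∈ P, w ^ Nat.card P = 1 := fun w hw =>
    orderOf_dvd_iff_pow_eq_one.1 (P.orderOf_dvd_natCard hw)
  set y := x⁻¹ * (z * x * z) with hy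
  have hyP : y ∈ P := P.mul_mem (P.inv_mem hx) (hzP x hx)
  have hyz : z * y * z = y⁻¹ := by
    have : z * y * z = z * x⁻¹ * z * x * (z * z) := by rw [hy]; group
    rw [this, hz, hy]
    simp only [mul_inv_rev, inv_inv, hzinv, mul_one]; group
  have hyc : y ∉ Subgroup.zpowers c := by
    rintro ⟨i, hi⟩
    have h4 : z * y * z = y := by
      rw [← hi]; exact conj_zpow_of_comm hz hzc i
    rw [hyz] at h4
    have h5 : y = 1 := eq_one_of_sq_of_odd (by nth_rw 1 [← h4]; simp) hoddP (hpow y hyP)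
    apply hne
    have h6 : z * x * z = x := by
      rw [hy, inv_mul_eq_one] at h5; exact h5.symm
    nth_rw 2 [← h6]
    rw [mul_assoc, hz, mul_one]
  obtain ⟨i, hi⟩ := h1 y hyP
  have hi : c ^ i = y * c * y⁻¹ := hi
  have hi2 : y⁻¹ * c * y = c ^ i := by
    have h4 : z * (y * c * y⁻¹) * z = z * c ^ i * z := by rw [hi]
    rw [conj_zpow_of_comm hz hzc, conj_invol_mul hz, conj_invol_mul hz, hyz] at h4
    have h5 : z * y⁻¹ * z = y := by
      have := congrArg (·⁻¹) hyz
      simp only [mul_inv_rev, inv_inv, hzinv] at this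
      rw [mul_assoc]; exact this
    have h6 : z * c * z = c := by rw [hzc, mul_assoc, hz, mul_one]
    rw [h5, h6] at h4
    exact h4
  have hcy2 : Commute c (y ^ 2) := by
    have h4 : y⁻¹ * c * y = y * c * y⁻¹ := hi2.trans hi
    have h5 : c * y = y * (y * c * y⁻¹) := by rw [← h4]; group
    show c * y ^ 2 = y ^ 2 * c
    rw [pow_two, ← mul_assoc, h5]; group
  have hcy : c * y = y * c := by
    obtain ⟨n, hn⟩ := hoddP
    have h4 := hpow y hyP
    rw [hn, pow_succ, pow_mul] at h4
    have h5 : y = ((y ^ 2) ^ n)⁻¹ := (inv_eq_of_mul_eq_one_right h4).symm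
    have h6 : Commute c (((y ^ 2) ^ n)⁻¹) := (hcy2.pow_right n).inv_right
    rw [← h5] at h6
    exact h6
  refine ⟨y, rfl, hyP, hcy, ?_, h3 y hyP hyc⟩
  obtain ⟨j, hj⟩ := h2 y hyP
  have hj : c ^ j = y ^ p := hj
  have h4 : z * y ^ p * z = (y ^ p)⁻¹ := by
    have : (z * y * z⁻¹) ^ p = z * y ^ p * z⁻¹ := conj_pow
    rw [hzinv, hyz] at this
    rw [← this, inv_pow]
  have h5 : z * y ^ p * z = y ^ p := by
    rw [← hj]; exact conj_zpow_of_comm hz hzc j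
  refine eq_one_of_sq_of_odd ?_ hoddP (hpow _ (P.pow_mem hyP p))
  rw [h5] at h4
  nth_rw 1 [h4]; simp

theorem abelian_of_generated {E : Type*} [Group E] {P : Subgroup E} {c y : E}
    (hcy : c * y = y * c) (h : ∀ w ∈ P, ∃ i j : ℤ, w = c ^ i * y ^ j) :
    ∀ a ∈ P, ∀ b ∈ P, a * b = b * a := by
  intro a ha b hb
  obtain ⟨i, j, rfl⟩ := h a ha
  obtain ⟨i', j', rfl⟩ := h b hb
  have hc : Commute c y := hcy
  exact Commute.mul_left
    (Commute.mul_right (Commute.zpow_zpow_self c i i') (hc.zpow_zpow i j'))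
    (Commute.mul_right (hc.symm.zpow_zpow j i') (Commute.zpow_zpow_self y j j'))

/-- Let `E` be solvable and generated by the conjugates of the involution `z`. If `z` normalises a
Sylow `p`-subgroup `P` and centralises an element `c` of `P` generating a subgroup of index `p`,
then `c ^ p = 1`. The proof is by induction through the quotient by an elementary abelian normal
subgroup `A`. If `A` is a `p`-group, some element of `A` is not centralised by `z`; it generates `P`
together with `c`, so `z` centralises a Sylow subgroup of `E / A`, and `c ∈ A`. -/
theorem pow_eq_one_of_index_p {p : ℕ} [hp : Fact p.Prime] (hp2 : p ≠ 2) :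
    ∀ (n : ℕ) (E : Type u) [Group E] [Finite E] [Group.IsSolvable E], Nat.card E = n →
    ∀ (z : E), z * z = 1 → Subgroup.normalClosure {z} = ⊤ →
    ∀ (P : Sylow p E), (∀ x ∈ P, z * x * z ∈ P) → ∀ c ∈ P, z * c = c * z →
      Nat.card P = p * orderOf c → c ^ p = 1 := by
  intro n
  induction n using Nat.strong_induction_on with
  | _ n ih =>
  intro E _ _ _ hn z hz hcl P hzP c hc hzc hcard
  by_cases hex : ∃ x ∈ P, z * x ≠ x * z
  swap
  · push Not at hex
    exfalso
    have h1 := not_dvd_of_centralizes_sylow hp2 _ E rfl z hz hcl P hex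
    exact h1 ((Dvd.intro _ hcard.symm).trans (P : Subgroup E).card_subgroup_dvd_card)
  obtain ⟨x, hx, hne⟩ := hex
  obtain ⟨y, -, hyP, hcy, -, hgen⟩ := exists_inverted hp2 hz P.2 hzP hc hzc hcard hx hne
  have hab := abelian_of_generated hcy hgen
  have htriv : (⊤ : Subgroup E) ≠ ⊥ := by
    intro h
    have : x ∈ (⊥ : Subgroup E) := h ▸ Subgroup.mem_top x
    rw [Subgroup.mem_bot] at this
    apply hne; rw [this]; simp
  obtain ⟨q, A, hq, hAn, hA0, -, hAc, hAq⟩ := exists_minimal_normal_elemAb (⊤ : Subgroup E) htriv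
  have hsurj := QuotientGroup.mk'_surjective A
  have hz' : (z : E ⧸ A) * (z : E ⧸ A) = 1 := by
    rw [← QuotientGroup.mk_mul, hz, QuotientGroup.mk_one]
  by_cases hpq : p = q
  · subst hpq
    have hAp : IsPGroup p A := isPGroup_of_pow hAq
    have hAP : A ≤ P := hAp.le_sylow_of_normal P
    have : ∃ a ∈ A, z * a ≠ a * z := by
      by_contra! hcon
      have hcen := commute_all_of_normalClosure hcl hcon
      apply hA0
      rw [Subgroup.eq_bot_iff_forall]
      intro v hv
      exact central_eq_one hp2 hz hcl P hab (hAP hv) (hcen v hv)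
    obtain ⟨a, ha, haz⟩ := this
    have hac : a ∉ Subgroup.zpowers c := by
      rintro ⟨i, hi⟩
      apply haz
      rw [← hi]
      exact (show Commute z c from hzc).zpow_right i
    have hgen' := (zpowers_index_p P.2 hc hcard).2.2 a (hAP ha) hac
    have h1 : ¬ p ∣ Nat.card (E ⧸ A) := by
      refine not_dvd_of_centralizes_sylow hp2 _ (E ⧸ A) rfl (z : E ⧸ A) hz'
        (normalClosure_quotient hcl A) (P.mapSurjective hsurj) ?_
      rintro _ ⟨w, hw, rfl⟩
      obtain ⟨i, j, rfl⟩ := hgen' w hw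
      have ha1 : (a : E ⧸ A) = 1 := (QuotientGroup.eq_one_iff a).2 ha
      simp only [QuotientGroup.mk'_apply, QuotientGroup.mk_mul, QuotientGroup.mk_zpow, ha1,
        one_zpow, mul_one]
      have : Commute (z : E ⧸ A) (c : E ⧸ A) := by
        show (z : E ⧸ A) * c = c * z
        rw [← QuotientGroup.mk_mul, hzc, QuotientGroup.mk_mul]
      exact this.zpow_right i
    apply hAq
    rw [← QuotientGroup.eq_one_iff]
    obtain ⟨m, hm⟩ := IsPGroup.iff_card.1 P.2
    have h2 : c ^ p ^ m = 1 := by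
      rw [← hm]
      exact orderOf_dvd_iff_pow_eq_one.1 ((P : Subgroup E).orderOf_dvd_natCard hc)
    have h3 : (c : E ⧸ A) ^ p ^ m = 1 := by
      rw [← QuotientGroup.mk_pow, h2, QuotientGroup.mk_one]
    have h4 : (c : E ⧸ A) ^ Nat.card (E ⧸ A) = 1 := pow_card_eq_one'
    have h5 := pow_gcd_eq_one.2 ⟨h3, h4⟩
    have h6 : Nat.Coprime (p ^ m) (Nat.card (E ⧸ A)) :=
      Nat.Coprime.pow_left _ ((Nat.Prime.coprime_iff_not_dvd hp.1).2 h1)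
    rwa [h6, pow_one] at h5
  · have hdisj : ∀ w ∈ P, w ∈ A → w = 1 := by
      intro w hw hwA
      obtain ⟨m, hm⟩ := IsPGroup.iff_card.1 P.2
      have h2 : w ^ p ^ m = 1 := by
        rw [← hm]
        exact orderOf_dvd_iff_pow_eq_one.1 ((P : Subgroup E).orderOf_dvd_natCard hw)
      have h5 := pow_gcd_eq_one.2 ⟨h2, hAq w hwA⟩
      have h6 : Nat.Coprime (p ^ m) q :=
        Nat.Coprime.pow_left _ ((Nat.coprime_primes hp.1 hq).2 hpq)
      rwa [h6, pow_one] at h5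
    apply hdisj _ (P.pow_mem hc p)
    rw [← QuotientGroup.eq_one_iff, QuotientGroup.mk_pow]
    refine ih _ (hn ▸ card_quotient_lt hA0) (E ⧸ A) rfl (z : E ⧸ A) hz'
      (normalClosure_quotient hcl A) (P.mapSurjective hsurj) ?_ (c : E ⧸ A) ⟨c, hc, rfl⟩ ?_ ?_
    · rintro _ ⟨w, hw, rfl⟩
      exact ⟨z * w * z, hzP w hw, rfl⟩
    · rw [← QuotientGroup.mk_mul, hzc, QuotientGroup.mk_mul]
    · have e1 : Nat.card (P.mapSurjective hsurj) = Nat.card P := by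
        have hinj : Function.Injective ((QuotientGroup.mk' A).comp (P : Subgroup E).subtype) := by
          rw [injective_iff_map_eq_one]
          rintro ⟨w, hw⟩ h
          exact Subtype.ext (hdisj w hw ((QuotientGroup.eq_one_iff w).1 h))
        have : ((P.mapSurjective hsurj : Sylow p (E ⧸ A)) : Subgroup (E ⧸ A)) =
          ((QuotientGroup.mk' A).comp (P : Subgroup E).subtype).range := by
          rw [MonoidHom.range_comp, Subgroup.range_subtype]; rfl
        show Nat.card ((P.mapSurjective hsurj : Sylow p (E ⧸ A)) : Subgroup (E ⧸ A)) = _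
        rw [this]
        exact (Nat.card_congr (MonoidHom.ofInjective hinj).toEquiv).symm
      have e2 : orderOf (c : E ⧸ A) = orderOf c := by
        apply Nat.dvd_antisymm
        · exact orderOf_map_dvd (QuotientGroup.mk' A) c
        · apply orderOf_dvd_of_pow_eq_one
          apply hdisj _ (P.pow_mem hc _)
          rw [← QuotientGroup.eq_one_iff, QuotientGroup.mk_pow, pow_orderOf_eq_one]
      rw [e1, e2]; exact hcard

/-! ### Groups of order not divisible by four -/

theorem card_sylow_two {E : Type*} [Group E] [Finite E] (h4 : ¬ 4 ∣ Nat.card E) {a : E}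
    (ha : a * a = 1) (ha1 : a ≠ 1) (P : Sylow 2 E) : Nat.card P = 2 := by
  have ho : orderOf a = 2 := orderOf_eq_prime (by rw [pow_two, ha]) ha1
  have h2 : 2 ∣ Nat.card E := ho ▸ orderOf_dvd_natCard a
  have h3 : 2 ∣ Nat.card P := P.dvd_card_of_dvd_card h2
  obtain ⟨m, hm⟩ := IsPGroup.iff_card.1 P.2
  have h5 : Nat.card P ∣ Nat.card E := (P : Subgroup E).card_subgroup_dvd_card
  change Nat.card P = 2 ^ m at hm
  rw [hm] at h3 h5 ⊢
  match m with
  | 0 => omega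
  | 1 => rfl
  | m + 2 => exact absurd ((Dvd.intro_left (2 ^ m) (by ring)).trans h5) h4

/-- If four does not divide the order of a group, all its involutions are conjugate. -/
theorem exists_conj_invol {E : Type*} [Group E] [Finite E] (h4 : ¬ 4 ∣ Nat.card E) {a b : E}
    (ha : a * a = 1) (ha1 : a ≠ 1) (hb : b * b = 1) (hb1 : b ≠ 1) : ∃ g, g * a * g⁻¹ = b := by
  have hoa : IsPGroup 2 (Subgroup.zpowers a) := by
    apply IsPGroup.of_card (n := 1)
    rw [Nat.card_zpowers, orderOf_eq_prime (by rw [pow_two, ha]) ha1, pow_one]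
  have hob : IsPGroup 2 (Subgroup.zpowers b) := by
    apply IsPGroup.of_card (n := 1)
    rw [Nat.card_zpowers, orderOf_eq_prime (by rw [pow_two, hb]) hb1, pow_one]
  obtain ⟨P, hP⟩ := hoa.exists_le_sylow
  obtain ⟨Q, hQ⟩ := hob.exists_le_sylow
  obtain ⟨g, rfl⟩ := MulAction.exists_smul_eq E P Q
  refine ⟨g, ?_⟩
  have h1 : g * a * g⁻¹ ∈ g • P :=
    Subgroup.smul_mem_pointwise_smul _ (MulAut.conj g) _ (hP (Subgroup.mem_zpowers a))
  have h2 : b ∈ g • P := hQ (Subgroup.mem_zpowers b)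
  have hc := card_sylow_two h4 ha ha1 (g • P)
  obtain ⟨x, -, hx⟩ := Nat.card_eq_two_iff' (1 : (g • P : Sylow 2 E)) |>.1 hc
  have e1 := hx ⟨_, h1⟩ (by
    intro h
    have : g * a * g⁻¹ = 1 := congrArg Subtype.val h
    exact ha1 (by simpa using this))
  have e2 := hx ⟨_, h2⟩ (fun h => hb1 (congrArg Subtype.val h))
  exact congrArg Subtype.val (e1.trans e2.symm)

theorem mem_of_index_two_of_odd_pow {E : Type*} [Group E] {K : Subgroup E} (hK : K.index = 2)
    {x : E} {n : ℕ} (hn : Odd n) (h : x ^ n ∈ K) : x ∈ K := by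
  obtain ⟨m, rfl⟩ := hn
  rw [pow_succ, pow_mul] at h
  exact (K.mul_mem_cancel_left (K.pow_mem (Subgroup.sq_mem_of_index_two hK x) m)).1 h

theorem exists_index_two {E : Type*} [Group E] [Finite E] (h4 : ¬ 4 ∣ Nat.card E) {a : E}
    (ha : a * a = 1) (ha1 : a ≠ 1) : ∃ K : Subgroup E, K.Normal ∧ K.index = 2 := by
  let P : Sylow 2 E := default
  have hc := card_sylow_two h4 ha ha1 P
  have hcyc : IsCyclic P := isCyclic_of_prime_card (p := 2) hc
  have ho : orderOf a = 2 := orderOf_eq_prime (by rw [pow_two, ha]) ha1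
  have hmin : (Nat.card E).minFac = 2 := by
    rw [Nat.minFac_eq_two_iff]; exact ho ▸ orderOf_dvd_natCard a
  have := IsCyclic.isComplement' hmin hcyc
  exact ⟨_, MonoidHom.normal_ker _, this.symm.index_eq_card.trans hc⟩

/-- An involution in a group of order not divisible by four normalises a Sylow `p`-subgroup for each
odd `p`: by the Frattini argument the normaliser of any Sylow `p`-subgroup contains an involution,
and all involutions are conjugate. -/
theorem exists_invariant_sylow {E : Type*} [Group E] [Finite E] (h4 : ¬ 4 ∣ Nat.card E) {z : E}
    (hz : z * z = 1) (hz1 : z ≠ 1) {p : ℕ} [hp : Fact p.Prime] (hp2 : p ≠ 2) :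
    ∃ P : Sylow p E, ∀ x ∈ P, z * x * z ∈ P := by
  obtain ⟨K, hKn, hK⟩ := exists_index_two h4 hz hz1
  let P : Sylow p E := default
  have hPK : (P : Subgroup E) ≤ K := by
    intro x hx
    obtain ⟨m, hm⟩ := IsPGroup.iff_card.1 P.2
    apply mem_of_index_two_of_odd_pow hK (n := p ^ m) (hp.1.odd_of_ne_two hp2).pow
    have : x ^ p ^ m = 1 := by
      rw [← hm]; exact orderOf_dvd_iff_pow_eq_one.1 ((P : Subgroup E).orderOf_dvd_natCard hx)
    rw [this]; exact K.one_mem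
  have hF := P.normalizer_sup_eq_top' hPK
  have hnle : ¬ Subgroup.normalizer (P : Set E) ≤ K := by
    intro h
    rw [sup_of_le_right h] at hF
    rw [hF, Subgroup.index_top] at hK
    omega
  obtain ⟨g, hgN, hgK⟩ := SetLike.not_le_iff_exists.1 hnle
  have hcard : Nat.card K * 2 = Nat.card E := by rw [← hK]; exact K.card_mul_index
  have hodd : Odd (Nat.card K) := by
    rw [← Nat.not_even_iff_odd]
    rintro ⟨r, hr⟩
    exact h4 ⟨r, by omega⟩
  have heK : g ^ Nat.card K ∉ K := fun h => hgK (mem_of_index_two_of_odd_pow hK hodd h)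
  have he : g ^ Nat.card K * g ^ Nat.card K = 1 := by
    rw [← pow_two, ← pow_mul, hcard]; exact pow_card_eq_one'
  obtain ⟨h, hh⟩ := exists_conj_invol h4 he (fun h => heK (h ▸ K.one_mem)) hz hz1
  have heN : g ^ Nat.card K ∈ Subgroup.normalizer (P : Set E) := Subgroup.pow_mem _ hgN _
  refine ⟨h • P, ?_⟩
  rintro _ ⟨w, hw, rfl⟩
  have hzinv : z⁻¹ = z := inv_eq_of_mul_eq_one_left hz
  set e := g ^ Nat.card K
  have h1 : e * w * e⁻¹ ∈ P := (Subgroup.mem_normalizer_iff.1 heN w).1 hw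
  refine ⟨e * w * e⁻¹, h1, ?_⟩
  have h2 : z * (h * w * h⁻¹) * z = z * (h * w * h⁻¹) * z⁻¹ := by rw [hzinv]
  show h * (e * w * e⁻¹) * h⁻¹ = z * (h * w * h⁻¹) * z
  rw [h2, ← hh]; group

/-- The Sylow subgroup of `exists_invariant_sylow` can be chosen to contain a `p`-element `c`
commuting with `z` that generates a subgroup of index `p` in a Sylow subgroup: the normaliser of
`⟨c⟩` contains both `z` and a Sylow `p`-subgroup of the whole group. -/
theorem exists_invariant_sylow_mem {E : Type*} [Group E] [Finite E] (h4 : ¬ 4 ∣ Nat.card E) {z : E}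
    (hz : z * z = 1) (hz1 : z ≠ 1) {p : ℕ} [hp : Fact p.Prime] (hp2 : p ≠ 2) {c : E}
    (hzc : z * c = c * z) {s : ℕ} (hs : orderOf c = p ^ s)
    (hv : (Nat.card E).factorization p = s + 1) :
    ∃ P : Sylow p E, c ∈ P ∧ ∀ x ∈ P, z * x * z ∈ P := by
  have hcp : IsPGroup p (Subgroup.zpowers c) :=
    IsPGroup.of_card (n := s) (by rw [Nat.card_zpowers, hs])
  obtain ⟨P0, hP0⟩ := hcp.exists_le_sylow
  have hP0c : Nat.card (P0 : Subgroup E) = p * orderOf c := by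
    rw [hs, ← pow_succ', ← hv]; exact P0.card_eq_multiplicity
  have h1 := (zpowers_index_p P0.2 (hP0 (Subgroup.mem_zpowers c)) hP0c).1
  set J := Subgroup.normalizer (Subgroup.zpowers c : Set E) with hJ
  have hmemJ : ∀ g, g * c * g⁻¹ ∈ Subgroup.zpowers c → g ∈ J := by
    intro g hg
    have hle : (Subgroup.zpowers c).map (MulAut.conj g).toMonoidHom ≤ Subgroup.zpowers c := by
      rw [MonoidHom.map_zpowers]
      exact (Subgroup.zpowers_le).2 hg
    have heq : (Subgroup.zpowers c).map (MulAut.conj g).toMonoidHom = Subgroup.zpowers c :=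
      Subgroup.eq_of_le_of_card_ge hle
        (Nat.card_congr ((Subgroup.zpowers c).equivMapOfInjective _
          (MulAut.conj g).injective).toEquiv).le
    rw [hJ, Subgroup.mem_normalizer_iff]
    intro x
    constructor
    · intro hx
      rw [← heq]; exact ⟨x, hx, rfl⟩
    · intro hx
      change g * x * g⁻¹ ∈ Subgroup.zpowers c at hx
      rw [← heq] at hx
      obtain ⟨w, hw, hwx⟩ := hx
      have : w = x := (MulAut.conj g).injective hwx
      exact this ▸ hw
  have hPJ : (P0 : Subgroup E) ≤ J := fun g hg => hmemJ g (h1 g hg)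
  have hzJ : z ∈ J := hmemJ z (by
    rw [hzc, mul_assoc, mul_inv_cancel, mul_one]; exact Subgroup.mem_zpowers c)
  have hcJ : c ∈ J := hPJ (hP0 (Subgroup.mem_zpowers c))
  have h4J : ¬ 4 ∣ Nat.card J := fun h => h4 (h.trans J.card_subgroup_dvd_card)
  obtain ⟨Q, hQ⟩ := exists_invariant_sylow h4J (z := ⟨z, hzJ⟩) (Subtype.ext hz)
    (fun h => hz1 (congrArg Subtype.val h)) hp2
  have hQc : Nat.card ((Q : Subgroup J).map J.subtype) = p ^ (Nat.card E).factorization p := by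
    rw [Subgroup.card_map_of_injective J.subtype_injective]
    rw [← P0.card_eq_multiplicity, Q.card_eq_multiplicity,
      ← (P0.subtype hPJ).card_eq_multiplicity]
    exact Nat.card_congr (Subgroup.subgroupOfEquivOfLe hPJ).toEquiv
  refine ⟨Sylow.ofCard _ hQc, ?_, ?_⟩
  · have hn : ((Subgroup.zpowers c).subgroupOf J).Normal := Subgroup.normal_in_normalizer
    have hpg : IsPGroup p ((Subgroup.zpowers c).subgroupOf J) :=
      hcp.comap_of_injective J.subtype J.subtype_injective
    have := hpg.le_sylow_of_normal Q (x := ⟨c, hcJ⟩)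
      (Subgroup.mem_subgroupOf.2 (Subgroup.mem_zpowers c))
    exact ⟨⟨c, hcJ⟩, this, rfl⟩
  · rintro _ ⟨w, hw, rfl⟩
    exact ⟨_, hQ w hw, rfl⟩

/-- The normal closure of an involution in a group of order not divisible by four is already
generated by its own conjugates of that involution. -/
theorem normalClosure_self_eq_top {M : Type*} [Group M] [Finite M] (h4 : ¬ 4 ∣ Nat.card M) {z : M}
    (hz : z * z = 1) (hz1 : z ≠ 1) (hzE : z ∈ Subgroup.normalClosure {z}) :
    Subgroup.normalClosure {(⟨z, hzE⟩ : Subgroup.normalClosure {z})} = ⊤ := by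
  set E := Subgroup.normalClosure {z} with hE
  set N := Subgroup.normalClosure {(⟨z, hzE⟩ : E)} with hN
  have h4E : ¬ 4 ∣ Nat.card E := fun h => h4 (h.trans E.card_subgroup_dvd_card)
  have hEN : E ≤ N.map E.subtype := by
    refine (Subgroup.closure_le _).2 ?_
    intro w hw
    rw [Group.mem_conjugatesOfSet_iff] at hw
    obtain ⟨z', hz', hw⟩ := hw
    rw [Set.mem_singleton_iff.1 hz'] at hw
    obtain ⟨g, hg⟩ := isConj_iff.1 hw
    have hwE : w ∈ E := hg ▸ (Subgroup.normalClosure_normal).conj_mem z hzE g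
    obtain ⟨h, hh⟩ := exists_conj_invol h4E (a := (⟨z, hzE⟩ : E)) (b := ⟨w, hwE⟩)
      (Subtype.ext hz) (fun h => hz1 (congrArg Subtype.val h))
      (Subtype.ext (by
        show w * w = 1
        rw [← hg]
        have : g * z * g⁻¹ * (g * z * g⁻¹) = g * (z * z) * g⁻¹ := by group
        rw [this, hz]; simp))
      (fun h => hz1 (by
        have : w = 1 := congrArg Subtype.val h
        rw [← hg] at this
        simpa using this))
    refine ⟨⟨w, hwE⟩, ?_, rfl⟩
    rw [← hh]
    exact (Subgroup.normalClosure_normal).conj_mem _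
      (Subgroup.subset_normalClosure (Set.mem_singleton _)) h
  rw [eq_top_iff]
  rintro ⟨w, hw⟩ -
  obtain ⟨w', hw', h⟩ := hEN hw
  have : w' = ⟨w, hw⟩ := Subtype.ext h
  exact this ▸ hw'

/-- When `E` is the normal closure of an involution `z` centralising an element `c` of order `p ^ s`,
and `p ^ (s + v)` with `v ≤ 1` is the `p`-part of `|E|`, then `s ≤ v`. -/
theorem exponent_le {E : Type*} [Group E] [Finite E] [Group.IsSolvable E]
    (h4 : ¬ 4 ∣ Nat.card E) {z : E} (hz : z * z = 1) (hz1 : z ≠ 1)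
    (hcl : Subgroup.normalClosure {z} = ⊤) {p : ℕ} [hp : Fact p.Prime] (hp2 : p ≠ 2) {c : E}
    (hzc : z * c = c * z) {s v : ℕ} (hs : orderOf c = p ^ s)
    (hv : (Nat.card E).factorization p = s + v) (hv1 : v ≤ 1) : s ≤ v := by
  have hv01 : v = 0 ∨ v = 1 := by omega
  rcases hv01 with rfl | rfl
  · by_contra hs0
    have hc : Nat.card (Subgroup.zpowers c) = p ^ (Nat.card E).factorization p := by
      rw [Nat.card_zpowers, hs, hv, add_zero]
    refine not_dvd_of_centralizes_sylow hp2 _ E rfl z hz hcl (Sylow.ofCard _ hc) ?_ ?_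
    · rintro _ ⟨i, rfl⟩
      exact (show Commute z c from hzc).zpow_right i
    · exact ((dvd_pow_self p (by omega)).trans (hs ▸ dvd_rfl : p ^ s ∣ orderOf c)).trans
        (orderOf_dvd_natCard c)
  · obtain ⟨P, hcP, hP⟩ := exists_invariant_sylow_mem h4 hz hz1 hp2 hzc hs hv
    have hPc : Nat.card P = p * orderOf c := by
      rw [hs, ← pow_succ', ← hv]; exact P.card_eq_multiplicity
    have h1 := pow_eq_one_of_index_p hp2 _ E rfl z hz hcl P hP c hcP hzc hPc
    have h2 := orderOf_dvd_of_pow_eq_one h1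
    rw [hs] at h2
    nth_rw 2 [← pow_one p] at h2
    exact (Nat.pow_dvd_pow_iff_le_right hp.1.one_lt).1 h2

/-! ### The order of an element commuting with the involution -/

theorem mem_of_pow_index_coprime {M : Type*} [Group M] {E : Subgroup M} [E.Normal]
    {c : M} {m : ℕ} (hc : c ^ m ∈ E) (hco : Nat.Coprime m E.index) : c ∈ E := by
  rw [← QuotientGroup.eq_one_iff]
  have h1 : (c : M ⧸ E) ^ m = 1 := by
    rw [← QuotientGroup.mk_pow]; exact (QuotientGroup.eq_one_iff _).2 hc
  have h2 : (c : M ⧸ E) ^ E.index = 1 := by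
    rw [Subgroup.index_eq_card]; exact pow_card_eq_one'
  have := pow_gcd_eq_one.2 ⟨h1, h2⟩
  rwa [hco, pow_one] at this

/-- The exceptional configuration at the prime `3`, where the normal closure of the involution has
index `3`. -/
theorem exponent_le_one_of_index_three {M : Type*} [Group M] [Finite M] [Group.IsSolvable M]
    (h4 : ¬ 4 ∣ Nat.card M) {z a c : M} (hz : z * z = 1) (hz1 : z ≠ 1) (ha : a ^ 3 = 1)
    (htop : Subgroup.normalClosure {z} ⊔ Subgroup.zpowers a = ⊤)
    (hidx : (Subgroup.normalClosure {z}).index = 3)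
    (hzc : z * c = c * z) {s : ℕ} (hs : orderOf c = 3 ^ s)
    (hv : (Nat.card M).factorization 3 = s + 1) : s ≤ 1 := by
  by_contra! hs2
  have hp : Fact (Nat.Prime 3) := ⟨Nat.prime_three⟩
  have hzE : z ∈ Subgroup.normalClosure {z} := Subgroup.subset_normalClosure rfl
  have hcl := normalClosure_self_eq_top h4 hz hz1 hzE
  set E := Subgroup.normalClosure {z} with hE
  have hEn : E.Normal := Subgroup.normalClosure_normal
  have h4E : ¬ 4 ∣ Nat.card E := fun h => h4 (h.trans E.card_subgroup_dvd_card)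
  have hcardE : Nat.card E * 3 = Nat.card M := by rw [← hidx]; exact E.card_mul_index
  have hvE : (Nat.card E).factorization 3 = s := by
    rw [← hcardE, Nat.factorization_mul Nat.card_pos.ne' (by norm_num), Finsupp.add_apply,
      Nat.prime_three.factorization_self] at hv
    omega
  have hcubeE : ∀ w : M, w ^ 3 ∈ E := by
    intro w
    rw [← QuotientGroup.eq_one_iff, QuotientGroup.mk_pow, ← hidx, Subgroup.index_eq_card]
    exact pow_card_eq_one'
  by_cases hcE : c ∈ E
  · have := exponent_le (E := E) h4E (z := ⟨z, hzE⟩) (Subtype.ext hz)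
      (fun h => hz1 (congrArg Subtype.val h)) hcl (p := 3) (by norm_num) (c := ⟨c, hcE⟩)
      (Subtype.ext hzc) (s := s) (v := 0) (by rw [Subgroup.orderOf_mk, hs]) hvE (by norm_num)
    omega
  obtain ⟨P, hcP, hP⟩ := exists_invariant_sylow_mem h4 hz hz1 (p := 3) (by norm_num) hzc hs hv
  have hPc : Nat.card P = 3 * orderOf c := by
    rw [hs, ← pow_succ', ← hv]; exact P.card_eq_multiplicity
  by_cases hex : ∃ x ∈ P, z * x ≠ x * z
  swap
  · push Not at hex
    have h1 : E.relIndex P ∣ 3 := by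
      have := Subgroup.relIndex_dvd_index_of_normal E (P : Subgroup M)
      rwa [hidx] at this
    have h2 : Nat.card (E.subgroupOf (P : Subgroup M)) * E.relIndex P = Nat.card P :=
      (E.subgroupOf (P : Subgroup M)).card_mul_index
    have h3 : Nat.card (E.subgroupOf (P : Subgroup M)) =
        Nat.card ((P : Subgroup M).subgroupOf E) := by
      rw [← Subgroup.card_map_of_injective (P : Subgroup M).subtype_injective,
        ← Subgroup.card_map_of_injective E.subtype_injective,
        Subgroup.subgroupOf_map_subtype, Subgroup.subgroupOf_map_subtype, inf_comm]
    have hpg : IsPGroup 3 ((P : Subgroup M).subgroupOf E) :=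
      P.2.comap_of_injective E.subtype E.subtype_injective
    obtain ⟨m, hm⟩ := IsPGroup.iff_card.1 hpg
    have h5 : m ≤ s := by
      have : 3 ^ m ∣ Nat.card E := hm ▸ Subgroup.card_subgroup_dvd_card _
      rwa [Nat.prime_three.pow_dvd_iff_le_factorization Nat.card_pos.ne', hvE] at this
    have h6 : m = s := by
      rw [h3, hm, hPc, hs, ← pow_succ'] at h2
      have h7 : 3 ^ m * E.relIndex P ≤ 3 ^ m * 3 :=
        Nat.mul_le_mul_left _ (Nat.le_of_dvd (by norm_num) h1)
      rw [h2, ← pow_succ, Nat.pow_le_pow_iff_right (by norm_num)] at h7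
      omega
    rw [h6, ← hvE] at hm
    refine not_dvd_of_centralizes_sylow (p := 3) (by norm_num) _ E rfl ⟨z, hzE⟩ (Subtype.ext hz)
      hcl (Sylow.ofCard _ hm) ?_ ?_
    · intro x hx
      exact Subtype.ext (hex x hx)
    · apply Nat.dvd_of_factorization_pos
      omega
  -- `y = [x, z]` lies in `E`, and `P` is generated by `c` and `y`; a conjugate of `a` in `P` has order
  -- dividing three, so it is a product of a cube and a power of `y` and lies in `E`: a contradiction
  obtain ⟨x, hx, hne⟩ := hex
  obtain ⟨y, hy, hyP, hcy, hy3, hgen⟩ :=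
    exists_inverted (by norm_num) hz P.2 hP hcP hzc hPc hx hne
  have hyE : y ∈ E := by
    rw [hy]
    have h1 : x⁻¹ * z * x⁻¹⁻¹ ∈ E := hEn.conj_mem z hzE x⁻¹
    have := E.mul_mem h1 hzE
    simpa [mul_assoc] using this
  have hap : IsPGroup 3 (Subgroup.zpowers a) := by
    intro w
    refine ⟨1, Subtype.ext ?_⟩
    obtain ⟨_, i, rfl⟩ := w
    show (a ^ i) ^ 3 ^ 1 = 1
    rw [pow_one, ← zpow_natCast, ← zpow_mul, mul_comm, zpow_mul, zpow_natCast, ha, one_zpow]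
  obtain ⟨Q, hQ⟩ := hap.exists_le_sylow
  obtain ⟨g, hg⟩ := MulAction.exists_smul_eq M Q P
  have haP : g * a * g⁻¹ ∈ P := hg ▸ Subgroup.smul_mem_pointwise_smul _ (MulAut.conj g) _
    (hQ (Subgroup.mem_zpowers a))
  obtain ⟨i, j, hij⟩ := hgen _ haP
  have h3 : (g * a * g⁻¹) ^ 3 = 1 := by rw [conj_pow, ha]; simp
  have hcomm : Commute (c ^ i) (y ^ j) := (show Commute c y from hcy).zpow_zpow i j
  have h4' : c ^ (i * 3) = 1 := by
    rw [hij, hcomm.mul_pow, ← zpow_natCast (y ^ j), ← zpow_mul, mul_comm j, zpow_mul,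
      zpow_natCast, hy3, one_zpow, mul_one, ← zpow_natCast, ← zpow_mul] at h3
    exact h3
  have h5 : (3 : ℤ) ∣ i := by
    have h6 := orderOf_dvd_iff_zpow_eq_one.2 h4'
    rw [hs] at h6
    have h7 : (3 : ℤ) * 3 ∣ i * 3 := by
      refine dvd_trans ?_ h6
      have : (3 : ℕ) ^ 2 ∣ 3 ^ s := pow_dvd_pow 3 hs2
      exact_mod_cast this
    exact Int.dvd_of_mul_dvd_mul_right (by norm_num) h7
  obtain ⟨i', rfl⟩ := h5
  have hmem : g * a * g⁻¹ ∈ E := by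
    rw [hij]
    refine E.mul_mem ?_ (E.zpow_mem hyE j)
    rw [zpow_mul]
    exact E.zpow_mem (by exact_mod_cast hcubeE c) i'
  have haE : a ∈ E := by
    have := hEn.conj_mem _ hmem g⁻¹
    simpa [mul_assoc] using this
  have : E ⊔ Subgroup.zpowers a = E := sup_of_le_left ((Subgroup.zpowers_le).2 haE)
  rw [this] at htop
  rw [htop, Subgroup.index_top] at hidx
  omega

/-- Let `M` be solvable of order `6kn` with `n` odd and `k` squarefree and coprime to six, generated
by the conjugates of an involution `z` and an element `a` with `a ^ 3 = 1`. Then an element of order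
`n` commuting with `z` has order dividing `3k`. For each prime `p` this compares the `p`-part of the
element with a Sylow `p`-subgroup of the normal closure of `z`, which has index one or three. -/
theorem order_dvd_three_mul {M : Type*} [Group M] [Finite M] [Group.IsSolvable M]
    {k n : ℕ} (hk : Squarefree k) (hk6 : Nat.Coprime k 6) (hn : Odd n)
    (hM : Nat.card M = 6 * k * n) {z a c : M} (hz : z * z = 1) (hz1 : z ≠ 1) (ha : a ^ 3 = 1)
    (htop : Subgroup.normalClosure {z} ⊔ Subgroup.zpowers a = ⊤)
    (hzc : z * c = c * z) (hc : orderOf c = n) : n ∣ 3 * k := by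
  have hk0 : k ≠ 0 := hk.ne_zero
  have hn0 : n ≠ 0 := by rintro rfl; simp at hn
  have hkodd : Odd k := by
    rw [← Nat.not_even_iff_odd, even_iff_two_dvd]
    intro h
    have : 2 ∣ Nat.gcd k 6 := Nat.dvd_gcd h (by norm_num)
    rw [hk6] at this; omega
  have h4 : ¬ 4 ∣ Nat.card M := by
    rw [hM]
    obtain ⟨r, hr⟩ := hkodd.mul hn
    rintro ⟨q, hq⟩
    rw [mul_assoc, hr] at hq
    omega
  have hzE : z ∈ Subgroup.normalClosure {z} := Subgroup.subset_normalClosure rfl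
  have hcl := normalClosure_self_eq_top h4 hz hz1 hzE
  have hkey3 := fun c (hzc : z * c = c * z) s hs hv hidx =>
    exponent_le_one_of_index_three h4 hz hz1 ha htop hidx (c := c) hzc (s := s) hs hv
  set E := Subgroup.normalClosure {z} with hE
  have hEn : E.Normal := Subgroup.normalClosure_normal
  have h4E : ¬ 4 ∣ Nat.card E := fun h => h4 (h.trans E.card_subgroup_dvd_card)
  have hidx3 : E.index ∣ 3 := by
    have hgen : ∀ x : M ⧸ E, x ∈ Subgroup.zpowers (a : M ⧸ E) := by
      intro x
      obtain ⟨w, rfl⟩ := QuotientGroup.mk_surjective x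
      have hw : w ∈ E ⊔ Subgroup.zpowers a := htop ▸ Subgroup.mem_top w
      rw [Subgroup.mem_sup_of_normal_left] at hw
      obtain ⟨e, he, _, ⟨i, rfl⟩, rfl⟩ := hw
      refine ⟨i, ?_⟩
      have : (e : M ⧸ E) = 1 := (QuotientGroup.eq_one_iff e).2 he
      show (a : M ⧸ E) ^ i = _
      rw [QuotientGroup.mk_mul, this, one_mul]; rfl
    rw [Subgroup.index_eq_card, ← orderOf_eq_card_of_forall_mem_zpowers hgen]
    apply orderOf_dvd_of_pow_eq_one
    rw [← QuotientGroup.mk_pow, ha, QuotientGroup.mk_one]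
  rw [← Nat.factorization_le_iff_dvd hn0 (by positivity), Finsupp.le_def]
  intro p
  by_cases hpp : p.Prime
  swap
  · simp [Nat.factorization_eq_zero_of_not_prime _ hpp]
  have hp : Fact p.Prime := ⟨hpp⟩
  set s := n.factorization p with hs
  by_cases hs0 : s = 0
  · omega
  have hp2 : p ≠ 2 := by
    rintro rfl
    exact (Nat.not_even_iff_odd.2 hn) (even_iff_two_dvd.2 (Nat.dvd_of_factorization_pos hs0))
  have hv1 : (3 * k).factorization p ≤ 1 := by
    apply Squarefree.natFactorization_le_one
    rw [Nat.squarefree_mul_iff]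
    refine ⟨?_, Nat.prime_three.squarefree, hk⟩
    exact (Nat.Coprime.coprime_dvd_right (by norm_num) hk6).symm
  have hv : (Nat.card M).factorization p = s + (3 * k).factorization p := by
    have : 6 * k * n = 2 * (n * (3 * k)) := by ring
    rw [hM, this, Nat.factorization_mul (by norm_num) (by positivity),
      Nat.factorization_mul hn0 (by positivity)]
    have h2 : (Nat.factorization 2) p = 0 := by
      rw [Nat.prime_two.factorization, Finsupp.single_apply, if_neg (Ne.symm hp2)]
    simp [h2, hs]
  have hsn : p ^ s ∣ n := Nat.ordProj_dvd n p
  set d := c ^ (n / p ^ s) with hd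
  have hod : orderOf d = p ^ s := by
    rw [hd, orderOf_pow_of_dvd (Nat.div_pos (Nat.le_of_dvd (Nat.pos_of_ne_zero hn0) hsn)
      (pow_pos hpp.pos _)).ne' (by rw [hc]; exact Nat.div_dvd_of_dvd hsn), hc, Nat.div_div_self hsn hn0]
  have hzd : z * d = d * z := (show Commute z c from hzc).pow_right _
  have hcardE : Nat.card E * E.index = Nat.card M := E.card_mul_index
  rcases (Nat.dvd_prime Nat.prime_three).1 hidx3 with hi | hi
  · -- `E` is everything
    have hdE : d ∈ E := by rw [Subgroup.index_eq_one.1 hi]; trivial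
    rw [hi, mul_one] at hcardE
    exact exponent_le (E := E) h4E (z := ⟨z, hzE⟩) (Subtype.ext hz)
      (fun h => hz1 (congrArg Subtype.val h)) hcl hp2 (c := ⟨d, hdE⟩)
      (Subtype.ext hzd) (by rw [Subgroup.orderOf_mk, hod]) (by rw [hcardE, hv]) hv1
  by_cases hp3 : p = 3
  · subst hp3
    have hk3 : k.factorization 3 = 0 := by
      apply Nat.factorization_eq_zero_of_not_dvd
      intro h
      have : 3 ∣ Nat.gcd k 6 := Nat.dvd_gcd h (by norm_num)
      rw [hk6] at this; omega
    have h3k : (3 * k).factorization 3 = 1 := by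
      rw [Nat.factorization_mul (by norm_num) hk0, Finsupp.add_apply,
        Nat.prime_three.factorization_self, hk3]
    rw [h3k] at hv ⊢
    exact hkey3 d hzd s hod hv hi
  · have hdE : d ∈ E := by
      apply mem_of_pow_index_coprime (m := p ^ s)
      · rw [← hod, pow_orderOf_eq_one]; exact E.one_mem
      · rw [hi]
        exact Nat.Coprime.pow_left _ ((Nat.coprime_primes hpp Nat.prime_three).2 hp3)
    have hvE : (Nat.card E).factorization p = s + (3 * k).factorization p := by
      rw [← hv, ← hcardE, hi, Nat.factorization_mul Nat.card_pos.ne' (by norm_num),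
        Finsupp.add_apply, Nat.prime_three.factorization, Finsupp.single_apply,
        if_neg (Ne.symm hp3), add_zero]
    exact exponent_le (E := E) h4E (z := ⟨z, hzE⟩) (Subtype.ext hz)
      (fun h => hz1 (congrArg Subtype.val h)) hcl hp2 (c := ⟨d, hdE⟩)
      (Subtype.ext hzd) (by rw [Subgroup.orderOf_mk, hod]) hvE hv1

/-! ### Complements and actions on elementary abelian groups -/

/-- A central subgroup `U` of `S`, of order coprime to its index, has a complement in `S`: the
Schur–Zassenhaus complement, which consists of all elements of `S` whose order divides `|S : U|`
and hence is normal in every group in which `S` is normal. -/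
theorem exists_normal_complement {X : Type*} [Group X] [Finite X] {U S : Subgroup X}
    [hS : S.Normal] (hUS : U ≤ S) (hcen : ∀ u ∈ U, ∀ s ∈ S, s * u = u * s)
    {m : ℕ} (hm : Nat.card S = Nat.card U * m) (hco : Nat.Coprime (Nat.card U) m) :
    ∃ W : Subgroup X, W.Normal ∧ W ≤ S ∧ Nat.card W = m := by
  have hcU : Nat.card (U.subgroupOf S) = Nat.card U :=
    Nat.card_congr (Subgroup.subgroupOfEquivOfLe hUS).toEquiv
  have hUn : (U.subgroupOf S).Normal := ⟨by
    intro u hu s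
    have h1 : s * u = u * s := Subtype.ext (hcen u hu s s.2)
    rw [h1, mul_assoc, mul_inv_cancel, mul_one]; exact hu⟩
  have hidx : (U.subgroupOf S).index = m := by
    have := (U.subgroupOf S).card_mul_index
    rw [hcU, hm] at this
    exact Nat.eq_of_mul_eq_mul_left Nat.card_pos this
  obtain ⟨H, hH⟩ := Subgroup.exists_right_complement'_of_coprime (N := U.subgroupOf S)
    (by rw [hcU, hidx]; exact hco)
  have hHc : Nat.card H = m := hH.symm.index_eq_card.symm.trans hidx
  have hmem : ∀ x : S, x ∈ H ↔ (x : X) ^ m = 1 := by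
    intro x
    constructor
    · intro hx
      have := orderOf_dvd_iff_pow_eq_one.1 (H.orderOf_dvd_natCard hx)
      rw [hHc] at this
      exact congrArg Subtype.val this
    · intro hx
      have hx : x ^ m = 1 := Subtype.ext hx
      obtain ⟨⟨⟨u, hu⟩, ⟨h, hh⟩⟩, rfl⟩ := hH.2 x
      have hcomm : Commute u h := Subtype.ext (hcen u hu h h.2).symm
      change u * h ∈ H
      have hhm := orderOf_dvd_iff_pow_eq_one.1 (H.orderOf_dvd_natCard hh)
      rw [hHc] at hhm
      change (u * h) ^ m = 1 at hx
      rw [hcomm.mul_pow, hhm, mul_one] at hx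
      have hu2 := orderOf_dvd_iff_pow_eq_one.1 ((U.subgroupOf S).orderOf_dvd_natCard hu)
      rw [hcU] at hu2
      have := pow_gcd_eq_one.2 ⟨hu2, hx⟩
      rw [hco, pow_one] at this
      rw [this, one_mul]; exact hh
  refine ⟨H.map S.subtype, ⟨?_⟩, Subgroup.map_subtype_le H, ?_⟩
  · rintro _ ⟨x, hx, rfl⟩ g
    have hgx : g * (x : X) * g⁻¹ ∈ S := hS.conj_mem x x.2 g
    refine ⟨⟨_, hgx⟩, (hmem _).2 ?_, rfl⟩
    show (g * (x : X) * g⁻¹) ^ m = 1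
    rw [conj_pow, (hmem x).1 hx]; simp
  · rw [Subgroup.card_map_of_injective S.subtype_injective, hHc]

theorem pow_injOn_of_prime {U : Type*} [CommGroup U] {r : ℕ} (hr : r.Prime) (hr2 : r ≠ 2)
    {x : U} (hx : x ^ r = 1) (hx1 : x ≠ 1) {e f : Fin r}
    (h : x ^ (e : ℕ) * x ^ (e : ℕ) = x ^ (f : ℕ) * x ^ (f : ℕ)) : e = f := by
  have : Fact r.Prime := ⟨hr⟩
  have ho : orderOf x = r := orderOf_eq_prime hx hx1
  rw [← pow_add, ← pow_add, pow_inj_mod, ho] at h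
  have h2 : 2 * (e : ℕ) ≡ 2 * (f : ℕ) [MOD r] := by
    rw [two_mul, two_mul]; exact h
  have h3 : (e : ℕ) ≡ f [MOD r] := Nat.ModEq.cancel_left_of_coprime
    ((Nat.coprime_primes hr Nat.prime_two).2 hr2) h2
  exact Fin.ext (Nat.ModEq.eq_of_lt_of_lt h3 e.2 f.2)

/-- Two commuting involutory automorphisms `α`, `β` of an elementary abelian `r`-group of rank at
most two, such that `α`, `β`, `αβ` are cyclically permuted by conjugation with `γ`, are trivial: the
three nontrivial joint eigenspaces are permuted by `γ`, so have the same dimension. -/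
theorem eq_self_of_rotated {U : Type*} [CommGroup U] [Finite U] {r : ℕ} (hr : r.Prime)
    (hr2 : r ≠ 2) (hexp : ∀ x : U, x ^ r = 1) (hcard : Nat.card U < r ^ 3) (α β γ : U →* U)
    (hγ : Function.Injective γ) (hα : ∀ x, α (α x) = x) (hβ : ∀ x, β (β x) = x)
    (hαβ : ∀ x, α (β x) = β (α x)) (h1 : ∀ x, γ (α x) = β (γ x))
    (h2 : ∀ x, γ (β x) = α (β (γ x))) (x : U) : α x = x := by
  have s1 : ∀ y, α y = y → β y = y⁻¹ → α (γ y) = (γ y)⁻¹ ∧ β (γ y) = γ y := by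
    intro y ha hb
    have e1 : β (γ y) = γ y := by rw [← h1, ha]
    have e2 := h2 y
    rw [hb, e1, map_inv] at e2
    exact ⟨e2.symm, e1⟩
  have s2 : ∀ y, α y = y⁻¹ → β y = y → α (γ y) = (γ y)⁻¹ ∧ β (γ y) = (γ y)⁻¹ := by
    intro y ha hb
    have e1 : β (γ y) = (γ y)⁻¹ := by rw [← h1, ha, map_inv]
    have e2 := h2 y
    rw [hb, e1, map_inv] at e2
    exact ⟨by rw [e2, inv_inv]; nth_rw 2 [e2], e1⟩
  have s3 : ∀ y, α y = y⁻¹ → β y = y⁻¹ → α (γ y) = γ y ∧ β (γ y) = (γ y)⁻¹ := by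
    intro y ha hb
    have e1 : β (γ y) = (γ y)⁻¹ := by rw [← h1, ha, map_inv]
    have e2 := h2 y
    rw [hb, e1, map_inv, map_inv] at e2
    exact ⟨(inv_injective e2).symm, e1⟩
  have d1 : ∀ y, α y = y → β y = y⁻¹ → y = 1 := by
    intro y ha hb
    by_contra hy
    obtain ⟨ha2, hb2⟩ := s1 y ha hb
    obtain ⟨ha3, hb3⟩ := s2 _ ha2 hb2
    have hγ1 : ∀ w, w ≠ 1 → γ w ≠ 1 := fun w hw h => hw (hγ (h.trans (map_one γ).symm))
    have hy2 := hγ1 y hy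
    have hy3 := hγ1 _ hy2
    set y2 := γ y
    set y3 := γ y2
    let f : Fin r × Fin r × Fin r → U := fun e =>
      y ^ (e.1 : ℕ) * (y2 ^ (e.2.1 : ℕ) * y3 ^ (e.2.2 : ℕ))
    have hf : Function.Injective f := by
      rintro ⟨a, b, c⟩ ⟨a', b', c'⟩ h
      change y ^ (a : ℕ) * (y2 ^ (b : ℕ) * y3 ^ (c : ℕ)) =
        y ^ (a' : ℕ) * (y2 ^ (b' : ℕ) * y3 ^ (c' : ℕ)) at h
      have hA := congrArg α h
      have hB := congrArg β h
      simp only [map_mul, map_pow, ha, ha2, ha3, hb, hb2, hb3] at hA hB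
      have k1 : y ^ (a : ℕ) * y ^ (a : ℕ) = y ^ (a' : ℕ) * y ^ (a' : ℕ) := by
        have := congrArg₂ (· * ·) h hA
        calc _ = y ^ (a : ℕ) * (y2 ^ (b : ℕ) * y3 ^ (c : ℕ)) *
              (y ^ (a : ℕ) * (y2⁻¹ ^ (b : ℕ) * y3⁻¹ ^ (c : ℕ))) := by
              simp only [inv_pow]; rw [mul_mul_mul_comm, ← mul_inv, mul_inv_cancel, mul_one]
          _ = _ := this
          _ = _ := by simp only [inv_pow]; rw [mul_mul_mul_comm, ← mul_inv, mul_inv_cancel, mul_one]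
      have k2 : y2 ^ (b : ℕ) * y2 ^ (b : ℕ) = y2 ^ (b' : ℕ) * y2 ^ (b' : ℕ) := by
        have := congrArg₂ (· * ·) h hB
        calc _ = y ^ (a : ℕ) * (y2 ^ (b : ℕ) * y3 ^ (c : ℕ)) *
              (y⁻¹ ^ (a : ℕ) * (y2 ^ (b : ℕ) * y3⁻¹ ^ (c : ℕ))) := by
              simp only [inv_pow]; rw [mul_mul_mul_comm, mul_inv_cancel, one_mul, mul_mul_mul_comm, mul_inv_cancel, mul_one]
          _ = _ := this
          _ = _ := by simp only [inv_pow]; rw [mul_mul_mul_comm, mul_inv_cancel, one_mul, mul_mul_mul_comm, mul_inv_cancel, mul_one]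
      have e1 := pow_injOn_of_prime hr hr2 (hexp y) hy k1
      have e2 := pow_injOn_of_prime hr hr2 (hexp y2) hy2 k2
      subst e1 e2
      have k3 := mul_left_cancel (mul_left_cancel h)
      have e3 := pow_injOn_of_prime hr hr2 (hexp y3) hy3 (congrArg₂ (· * ·) k3 k3)
      rw [e3]
    have := Nat.card_le_card_of_injective f hf
    simp only [Nat.card_prod, Nat.card_fin] at this
    have e : r * (r * r) = r ^ 3 := by ring
    omega
  have d3 : ∀ y, α y = y⁻¹ → β y = y⁻¹ → y = 1 := by
    intro y ha hb
    obtain ⟨ha', hb'⟩ := s3 y ha hb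
    exact hγ ((d1 _ ha' hb').trans (map_one γ).symm)
  have d2 : ∀ y, α y = y⁻¹ → β y = y → y = 1 := by
    intro y ha hb
    obtain ⟨ha', hb'⟩ := s2 y ha hb
    exact hγ ((d3 _ ha' hb').trans (map_one γ).symm)
  have e1 : α (x⁻¹ * α x) = (x⁻¹ * α x)⁻¹ := by
    rw [map_mul, map_inv, hα]; simp [mul_comm]
  have e2 : (x⁻¹ * α x) * β (x⁻¹ * α x) = 1 := by
    apply d2
    · rw [map_mul, hαβ, e1, map_inv, ← mul_inv]
    · rw [map_mul, hβ, mul_comm]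
  have e3 := d3 _ e1 (eq_inv_of_mul_eq_one_right e2)
  rw [inv_mul_eq_one] at e3
  exact e3.symm

/-- Let `i`, `j = a i a⁻¹` and `i j ≡ a j a⁻¹` induce commuting involutions, or the identity, on a
normal elementary abelian `r`-subgroup `U` of rank at most two, with `r` odd. Then `i` centralises
`U`. -/
theorem commutes_of_rotated {X : Type*} [Group X] [Finite X] {r : ℕ} (hr : r.Prime)
    (hr2 : r ≠ 2) {U : Subgroup X} [U.Normal] (hcomm : ∀ x ∈ U, ∀ y ∈ U, x * y = y * x)
    (hexp : ∀ x ∈ U, x ^ r = 1) (hcard : Nat.card U < r ^ 3) {a i j : X}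
    (hi : i * i ∈ U) (hj : j * j ∈ U) (hij : i * j * i⁻¹ * j⁻¹ ∈ U) (h1 : a * i * a⁻¹ = j)
    (h2 : (i * j)⁻¹ * (a * j * a⁻¹) ∈ U) : ∀ u ∈ U, i * u = u * i := by
  let _ : CommGroup U :=
    { (inferInstance : Group U) with mul_comm := fun x y => Subtype.ext (hcomm x x.2 y y.2) }
  let φ : X →* MulAut U := MulAut.conjNormal
  have hφ : ∀ u ∈ U, φ u = 1 := by
    intro u hu
    ext x
    show ((MulAut.conjNormal u x : U) : X) = x
    rw [MulAut.conjNormal_apply, hcomm u hu x x.2]; group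
  have key : ∀ x : U, φ i x = x := by
    have e3 : φ a * φ j = φ i * φ j * φ a := by
      have := hφ _ h2
      rw [map_mul, map_inv, inv_mul_eq_one] at this
      rw [← map_mul φ i j, this, ← map_mul, ← map_mul]; congr 1; group
    refine eq_self_of_rotated hr hr2 (fun x => Subtype.ext (by simpa using hexp x x.2)) hcard
      (φ i).toMonoidHom (φ j).toMonoidHom (φ a).toMonoidHom (φ a).injective ?_ ?_ ?_ ?_ ?_
    · intro x
      show (φ i * φ i) x = x
      rw [← map_mul, hφ _ hi]; rfl
    · intro x
      show (φ j * φ j) x = x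
      rw [← map_mul, hφ _ hj]; rfl
    · intro x
      show (φ i * φ j) x = (φ j * φ i) x
      have := hφ _ hij
      simp only [map_mul, map_inv] at this
      rw [mul_inv_eq_one, mul_inv_eq_iff_eq_mul] at this
      rw [this]
    · intro x
      show (φ a * φ i) x = (φ j * φ a) x
      rw [← h1, ← map_mul, ← map_mul]; congr 2; group
    · intro x
      show (φ a * φ j) x = (φ i * φ j * φ a) x
      rw [e3]
  intro u hu
  have := congrArg Subtype.val (key ⟨u, hu⟩)
  change ((MulAut.conjNormal i ⟨u, hu⟩ : U) : X) = u at this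
  rw [MulAut.conjNormal_apply, mul_inv_eq_iff_eq_mul] at this
  exact this

theorem two_mul_card_le_of_lt {U : Type*} [Group U] [Finite U] {H K : Subgroup U} (h : H < K) :
    2 * Nat.card H ≤ Nat.card K := by
  obtain ⟨q, hq⟩ := Subgroup.card_dvd_of_le h.le
  have hlt : Nat.card H < Nat.card K := by
    refine lt_of_le_of_ne (Subgroup.card_le_of_le h.le) fun he => h.ne ?_
    exact Subgroup.eq_of_le_of_card_ge h.le he.ge
  have hpos : 0 < Nat.card H := Nat.card_pos
  rw [hq] at hlt ⊢
  have : 1 < q := by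
    by_contra! h'
    have : Nat.card H * q ≤ Nat.card H * 1 := Nat.mul_le_mul_left _ h'
    omega
  nlinarith

/-- A nilpotent endomorphism `δ` of a finite abelian group `U` with `|U : δ²U| ≤ 2` forces
`|U| ≤ 2`. -/
theorem card_le_two_of_nilpotent {U : Type*} [CommGroup U] [Finite U] (δ : U →* U) {N : ℕ}
    (hN : ∀ x, δ^[N] x = 1) (h : Nat.card U ≤ 2 * Nat.card (δ.range.map δ)) : Nat.card U ≤ 2 := by
  have hfix : ∀ R : Subgroup U, R.map δ = R → R = ⊥ := by
    intro R hR
    have : ∀ n, ∀ x ∈ R, ∃ y ∈ R, δ^[n] y = x := by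
      intro n
      induction n with
      | zero => exact fun x hx => ⟨x, hx, rfl⟩
      | succ n ih =>
        intro x hx
        obtain ⟨y, hy, hyx⟩ := ih x hx
        rw [← hR] at hy
        obtain ⟨w, hw, rfl⟩ := hy
        exact ⟨w, hw, by rw [Function.iterate_succ_apply]; exact hyx⟩
    rw [Subgroup.eq_bot_iff_forall]
    intro x hx
    obtain ⟨y, -, rfl⟩ := this N x hx
    exact hN y
  by_cases h0 : δ.range = ⊥
  · rw [h0, Subgroup.map_bot, Subgroup.card_bot] at h
    omega
  · have l1 : δ.range.map δ < δ.range := by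
      refine lt_of_le_of_ne ?_ fun he => h0 (hfix _ he)
      rintro _ ⟨x, -, rfl⟩
      exact ⟨x, rfl⟩
    have l2 : δ.range < ⊤ := by
      refine lt_of_le_of_ne le_top fun he => h0 (hfix _ ?_)
      rw [he, ← MonoidHom.range_eq_map, he]
    have k1 := two_mul_card_le_of_lt l1
    have k2 := two_mul_card_le_of_lt l2
    rw [Subgroup.card_top] at k2
    have : 0 < Nat.card (δ.range.map δ) := Nat.card_pos
    omega

/-- An elementary abelian normal 2-subgroup `U` that is covered by the commutators `[γ, t]`, where
`γ = d ^ 2` has 2-power order, and one translate of them, has order at most two: in characteristic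
two the map `t ↦ [γ, t]` is the square of the nilpotent map `t ↦ [d, t]`. -/
theorem card_le_two_of_twisted {X : Type*} [Group X] [Finite X] {U : Subgroup X} [hUn : U.Normal]
    (hcomm : ∀ x ∈ U, ∀ y ∈ U, x * y = y * x) (hexp : ∀ x ∈ U, x * x = 1) {d u₀ : X} {m : ℕ}
    (hd : d ^ 2 ^ m = 1)
    (h : ∀ u ∈ U, ∃ t ∈ U, u = d ^ 2 * t * (d ^ 2)⁻¹ * t⁻¹ ∨
      u = d ^ 2 * t * (d ^ 2)⁻¹ * t⁻¹ * u₀) : Nat.card U ≤ 2 := by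
  let _ : CommGroup U :=
    { (inferInstance : Group U) with mul_comm := fun x y => Subtype.ext (hcomm x x.2 y y.2) }
  have hexp' : ∀ x : U, x * x = 1 := fun x => Subtype.ext (hexp x x.2)
  have hinv : ∀ x : U, x⁻¹ = x := fun x => inv_eq_of_mul_eq_one_left (hexp' x)
  let φ : X →* MulAut U := MulAut.conjNormal
  let δ : U →* U := (φ d).toMonoidHom * MonoidHom.id U
  have hδ : ∀ x, δ x = φ d x * x := fun x => rfl
  have hδ2 : ∀ x, δ (δ x) = φ (d ^ 2) x * x := by
    intro x
    rw [hδ, hδ, map_mul, pow_two, map_mul]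
    show φ d (φ d x) * φ d x * (φ d x * x) = φ d (φ d x) * x
    rw [mul_assoc, ← mul_assoc (φ d x) (φ d x), hexp', one_mul]
  have hiter : ∀ n x, δ^[2 ^ n] x = φ (d ^ 2 ^ n) x * x := by
    intro n
    induction n with
    | zero => intro x; simp [hδ]
    | succ n ih =>
      intro x
      rw [pow_succ, mul_two, Function.iterate_add_apply, ih, ih, map_mul, ← mul_two, pow_mul,
        pow_two, map_mul φ]
      show φ (d ^ 2 ^ n) (φ (d ^ 2 ^ n) x) * φ (d ^ 2 ^ n) x * (φ (d ^ 2 ^ n) x * x) = _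
      rw [mul_assoc, ← mul_assoc (φ (d ^ 2 ^ n) x) (φ (d ^ 2 ^ n) x), hexp', one_mul]
      rfl
  apply card_le_two_of_nilpotent δ (N := 2 ^ m)
  · intro x
    rw [hiter, hd, map_one]; exact hexp' x
  · set T := δ.range.map δ with hT
    have hTmem : ∀ t : U, φ (d ^ 2) t * t⁻¹ ∈ T := by
      intro t
      rw [hinv, ← hδ2]
      exact ⟨δ t, ⟨t, rfl⟩, rfl⟩
    have hval : ∀ t : U, ((φ (d ^ 2) t * t⁻¹ : U) : X) = d ^ 2 * t * (d ^ 2)⁻¹ * (t : X)⁻¹ := by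
      intro t
      show ((MulAut.conjNormal (d ^ 2) t : U) : X) * (t : X)⁻¹ = _
      rw [MulAut.conjNormal_apply]
    let f : Bool × T → X := fun p => if p.1 then (p.2 : U) * u₀ else (p.2 : U)
    have hsub : (U : Set X) ⊆ Set.range f := by
      intro u hu
      obtain ⟨t, ht, h | h⟩ := h u hu
      · exact ⟨(false, ⟨_, hTmem ⟨t, ht⟩⟩), by simp only [f]; rw [h, hval]; rfl⟩
      · exact ⟨(true, ⟨_, hTmem ⟨t, ht⟩⟩), by simp only [f]; rw [h, hval]; rfl⟩
    calc Nat.card U ≤ Nat.card (Set.range f) := Nat.card_mono (Set.toFinite _) hsub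
      _ ≤ Nat.card (Bool × T) := Finite.card_range_le f
      _ = 2 * Nat.card T := by rw [Nat.card_prod]; simp

/-! ### Passing to a quotient group -/

section
variable {X : Type*} [Group X] {B : Subgroup X} [B.Normal]

theorem card_map_mk' {S : Subgroup X} (h : B ≤ S) :
    Nat.card S = Nat.card B * Nat.card (S.map (QuotientGroup.mk' B)) := by
  let f : S →* X ⧸ B := (QuotientGroup.mk' B).comp S.subtype
  have h1 := Subgroup.card_eq_card_quotient_mul_card_subgroup f.ker
  rw [Nat.card_congr (QuotientGroup.quotientKerEquivRange f).toEquiv] at h1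
  have h2 : f.range = S.map (QuotientGroup.mk' B) := by
    rw [MonoidHom.range_comp, Subgroup.range_subtype]
  have h3 : f.ker = B.subgroupOf S := by
    ext x
    simp [f, MonoidHom.mem_ker, Subgroup.mem_subgroupOf]
  rw [h2, h3, Nat.card_congr (Subgroup.subgroupOfEquivOfLe h).toEquiv] at h1
  rw [h1, mul_comm]

theorem mk_commute_iff {s u : X} :
    QuotientGroup.mk' B s * QuotientGroup.mk' B u = QuotientGroup.mk' B u * QuotientGroup.mk' B s ↔
      s * u * s⁻¹ * u⁻¹ ∈ B := by
  rw [← QuotientGroup.eq_one_iff, QuotientGroup.mk_mul, QuotientGroup.mk_mul, QuotientGroup.mk_mul,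
    mul_inv_eq_iff_eq_mul.symm, ← mul_inv_eq_one]
  rfl

theorem mem_of_mk_mem {S : Subgroup X} (h : B ≤ S) {x : X}
    (hx : QuotientGroup.mk' B x ∈ S.map (QuotientGroup.mk' B)) : x ∈ S := by
  have : x ∈ (S.map (QuotientGroup.mk' B)).comap (QuotientGroup.mk' B) := hx
  rwa [Subgroup.comap_map_eq_self] at this
  rw [QuotientGroup.ker_mk']
  exact h

instance map_mk_normal {S : Subgroup X} [S.Normal] : (S.map (QuotientGroup.mk' B)).Normal :=
  Subgroup.Normal.map ‹_› _ (QuotientGroup.mk'_surjective B)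

/-- The version of `exists_normal_complement` for a factor `U / B` that is central in `S / B`. -/
theorem exists_normal_complement_mod [Finite X] {U S : Subgroup X} [S.Normal] (hBU : B ≤ U)
    (hUS : U ≤ S) (hcen : ∀ s ∈ S, ∀ u ∈ U, s * u * s⁻¹ * u⁻¹ ∈ B) {p m : ℕ}
    (hp : Nat.card U = Nat.card B * p) (hm : Nat.card S = Nat.card B * p * m)
    (hco : Nat.Coprime p m) :
    ∃ W : Subgroup X, W.Normal ∧ W ≤ S ∧ Nat.card W = Nat.card B * m := by
  have hB0 : 0 < Nat.card B := Nat.card_pos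
  have hU := card_map_mk' hBU
  have hS := card_map_mk' (hBU.trans hUS)
  have eU : Nat.card (U.map (QuotientGroup.mk' B)) = p :=
    Nat.eq_of_mul_eq_mul_left hB0 (hU.symm.trans hp)
  have eS : Nat.card (S.map (QuotientGroup.mk' B)) = p * m :=
    Nat.eq_of_mul_eq_mul_left hB0 (by rw [← hS, hm, mul_assoc])
  obtain ⟨W, hWn, hWS, hWc⟩ := exists_normal_complement (U := U.map (QuotientGroup.mk' B))
    (S := S.map (QuotientGroup.mk' B)) (m := m) (Subgroup.map_mono hUS) (by
      rintro _ ⟨u, hu, rfl⟩ _ ⟨s, hs, rfl⟩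
      exact mk_commute_iff.2 (hcen s hs u hu)) (by rw [eS, eU]) (by rw [eU]; exact hco)
  have hBW : B ≤ W.comap (QuotientGroup.mk' B) := by
    intro x hx
    rw [Subgroup.mem_comap, QuotientGroup.mk'_apply, (QuotientGroup.eq_one_iff x).2 hx]
    exact W.one_mem
  refine ⟨W.comap (QuotientGroup.mk' B), inferInstance, fun x hx => ?_, ?_⟩
  · exact mem_of_mk_mem (hBU.trans hUS) (hWS hx)
  · rw [card_map_mk' hBW, Subgroup.map_comap_eq_self_of_surjective (QuotientGroup.mk'_surjective B),
      hWc]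

/-- The version of `commutes_of_rotated` for the action on an elementary abelian factor `U / B`. -/
theorem commutes_of_rotated_mod [Finite X] {r : ℕ} (hr : r.Prime) (hr2 : r ≠ 2)
    {U : Subgroup X} [U.Normal] (hBU : B ≤ U) (hU : ElemAbMod r B U)
    (hcard : Nat.card U < Nat.card B * r ^ 3) {a i j : X} (hi : i * i ∈ U) (hj : j * j ∈ U)
    (hij : i * j * i⁻¹ * j⁻¹ ∈ U) (h1 : a * i * a⁻¹ = j) (h2 : (i * j)⁻¹ * (a * j * a⁻¹) ∈ U) :
    ∀ u ∈ U, i * u * i⁻¹ * u⁻¹ ∈ B := by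
  intro u hu
  let π := QuotientGroup.mk' B
  rw [← mk_commute_iff]
  refine commutes_of_rotated (X := X ⧸ B) hr hr2 (U := U.map π) ?_ ?_ ?_
    (a := π a) (i := π i) (j := π j) ⟨_, hi, map_mul π i i⟩ ⟨_, hj, map_mul π j j⟩
    ⟨_, hij, by simp⟩ (by rw [← h1]; simp) ⟨_, h2, by simp⟩ _ ⟨u, hu, rfl⟩
  · rintro _ ⟨x, hx, rfl⟩ _ ⟨y, hy, rfl⟩
    exact mk_commute_iff.2 (hU.comm x hx y hy)
  · rintro _ ⟨x, hx, rfl⟩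
    rw [← map_pow]
    exact (QuotientGroup.eq_one_iff _).2 (hU.pow x hx)
  · rw [card_map_mk' hBU] at hcard
    exact Nat.lt_of_mul_lt_mul_left hcard

/-- If the elements `a i` obtained from `1` by iterating `x ↦ γ x γ⁻¹ u₀`, where `γ = d ^ 2` has
2-power order, exhaust an elementary abelian 2-group `U / B`, then `|U / B| ≤ 2`. -/
theorem card_le_two_of_iterate_mod [Finite X] {U : Subgroup X} [U.Normal] (hBU : B ≤ U)
    (hU : ElemAbMod 2 B U) {d u₀ : X} {m : ℕ} (hd : d ^ 2 ^ m = 1) (hu₀ : u₀ ∈ U) {a : ℕ → X}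
    (ha0 : a 0 = 1) (ha : ∀ i, a (i + 1) = d ^ 2 * a i * (d ^ 2)⁻¹ * u₀)
    (h : ∀ u ∈ U, ∃ i, ∃ b ∈ B, b * a i = u) : Nat.card U ≤ Nat.card B * 2 := by
  let π := QuotientGroup.mk' B
  have hcomm : ∀ x ∈ U.map π, ∀ y ∈ U.map π, x * y = y * x := by
    rintro _ ⟨x, hx, rfl⟩ _ ⟨y, hy, rfl⟩
    exact mk_commute_iff.2 (hU.comm x hx y hy)
  have hexp : ∀ x ∈ U.map π, x * x = 1 := by
    rintro _ ⟨x, hx, rfl⟩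
    rw [← map_mul, ← pow_two]
    exact (QuotientGroup.eq_one_iff _).2 (hU.pow x hx)
  set g := π d ^ 2 with hg
  have hgd : π (d ^ 2) = g := map_pow π d 2
  have hconj : ∀ t ∈ U.map π, g * t * g⁻¹ ∈ U.map π := fun t ht => map_mk_normal.conj_mem t ht g
  have hseq : ∀ i, ∃ t ∈ U.map π, π (a i) = g * t * g⁻¹ * t⁻¹ ∨
      π (a i) = g * t * g⁻¹ * t⁻¹ * π u₀ := by
    intro i
    induction i with
    | zero => exact ⟨1, one_mem _, Or.inl (by rw [ha0]; simp)⟩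
    | succ i ih =>
      obtain ⟨t, ht, e | e⟩ := ih
      · refine ⟨g * t * g⁻¹, hconj t ht, Or.inr ?_⟩
        rw [ha, map_mul, map_mul, map_mul, map_inv, hgd, e]
        group
      · have hu : π u₀ ∈ U.map π := ⟨u₀, hu₀, rfl⟩
        refine ⟨g * t * g⁻¹ * π u₀, mul_mem (hconj t ht) hu, Or.inl ?_⟩
        rw [ha, map_mul, map_mul, map_mul, map_inv, hgd, e]
        have e1 : (π u₀)⁻¹ = π u₀ := inv_eq_of_mul_eq_one_left (hexp _ hu)
        have e2 : g * π u₀ * g⁻¹ * π u₀ * (g * t * g⁻¹)⁻¹ =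
            (g * t * g⁻¹)⁻¹ * (g * π u₀ * g⁻¹ * π u₀) :=
          hcomm _ (mul_mem (hconj _ hu) hu) _ (inv_mem (hconj t ht))
        rw [mul_inv_rev (g * t * g⁻¹), e1]
        calc _ = g * (g * t * g⁻¹) * g⁻¹ * ((g * t * g⁻¹)⁻¹ * (g * π u₀ * g⁻¹ * π u₀)) := by group
          _ = g * (g * t * g⁻¹) * g⁻¹ * (g * π u₀ * g⁻¹ * π u₀ * (g * t * g⁻¹)⁻¹) := by rw [e2]
          _ = _ := by group
  rw [card_map_mk' hBU]
  refine Nat.mul_le_mul_left _ (card_le_two_of_twisted (X := X ⧸ B) (U := U.map π) hcomm hexp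
    (d := π d) (u₀ := π u₀) (m := m) (by rw [← map_pow, hd, map_one]) ?_)
  rintro _ ⟨u, hu, rfl⟩
  obtain ⟨i, b, hb, rfl⟩ := h u hu
  have hb1 : π b = 1 := (QuotientGroup.eq_one_iff _).2 hb
  rw [map_mul, hb1, one_mul]
  exact hseq i

end

/-! ### Orbits of a normal subgroup -/

section
variable {V G : Type*} [Group G] [MulAction G V]

/-- The set of orbits of the subgroup `L` on `V`. -/
def Blk (L : Subgroup G) (V : Type*) [MulAction G V] : Type _ := MulAction.orbitRel.Quotient L V

/-- The `L`-orbit of a point. -/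
def Blk.mk (L : Subgroup G) (v : V) : Blk L V := Quotient.mk'' v

instance (L : Subgroup G) [Finite V] : Finite (Blk L V) :=
  inferInstanceAs (Finite (MulAction.orbitRel.Quotient L V))

theorem Blk.mk_eq {L : Subgroup G} {v w : V} :
    Blk.mk L v = Blk.mk L w ↔ ∃ l ∈ L, l • v = w := by
  constructor
  · intro h
    obtain ⟨l, hl⟩ := (Quotient.exact (s := MulAction.orbitRel L V) h.symm : w ∈ MulAction.orbit L v)
    exact ⟨l, l.2, hl⟩
  · rintro ⟨l, hl, rfl⟩
    exact (Quotient.sound (s := MulAction.orbitRel L V)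
      (⟨⟨l, hl⟩, rfl⟩ : l • v ∈ MulAction.orbit L v)).symm

theorem Blk.mk_surj {L : Subgroup G} (x : Blk L V) : ∃ v, Blk.mk L v = x :=
  Quotient.exists_rep (s := MulAction.orbitRel L V) x

theorem Blk.mk_smul_mem {L : Subgroup G} {l : G} (hl : l ∈ L) (v : V) :
    Blk.mk L (l • v) = Blk.mk L v := (Blk.mk_eq.2 ⟨l, hl, rfl⟩).symm

theorem Blk.mk_smul_congr {L : Subgroup G} [L.Normal] (g : G) {v w : V}
    (h : Blk.mk L v = Blk.mk L w) : Blk.mk L (g • v) = Blk.mk L (g • w) := by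
  obtain ⟨l, hl, rfl⟩ := Blk.mk_eq.1 h
  exact Blk.mk_eq.2 ⟨g * l * g⁻¹, ‹L.Normal›.conj_mem l hl g, by simp [mul_smul]⟩

/-- `G` permutes the orbits of a normal subgroup. -/
instance (L : Subgroup G) [L.Normal] : MulAction G (Blk L V) where
  smul g := Quotient.lift (s := MulAction.orbitRel L V) (fun v => Blk.mk L (g • v))
    (fun _ _ h => Blk.mk_smul_congr g (Quotient.sound (s := MulAction.orbitRel L V) h))
  one_smul x := by
    obtain ⟨v, rfl⟩ := Blk.mk_surj x
    exact congrArg (Blk.mk L) (one_smul G v)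
  mul_smul g h x := by
    obtain ⟨v, rfl⟩ := Blk.mk_surj x
    exact congrArg (Blk.mk L) (mul_smul g h v)

theorem Blk.smul_mk {L : Subgroup G} [L.Normal] (g : G) (v : V) :
    g • Blk.mk L v = Blk.mk L (g • v) := rfl

theorem Blk.smul_of_mem {L : Subgroup G} [L.Normal] {l : G} (hl : l ∈ L) (x : Blk L V) :
    l • x = x := by
  obtain ⟨v, rfl⟩ := Blk.mk_surj x
  exact Blk.mk_smul_mem hl v

/-- Points in the same `L`-orbit are in the same orbit of any larger subgroup. -/
theorem Blk.mk_mono {L S : Subgroup G} (h : L ≤ S) {v w : V} (e : Blk.mk L v = Blk.mk L w) :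
    Blk.mk S v = Blk.mk S w := by
  obtain ⟨l, hl, e⟩ := Blk.mk_eq.1 e
  exact Blk.mk_eq.2 ⟨l, h hl, e⟩

/-- Orbit counting for a normal subgroup of a transitive group. -/
theorem card_mul_stab [Finite V] [Finite G] (N : Subgroup G) [N.Normal]
    (htr : ∀ v w : V, ∃ g : G, g • v = w) (v : V) :
    Nat.card V * Nat.card (MulAction.stabilizer N v) = Nat.card (Blk N V) * Nat.card N := by
  have horb : ∀ w : V, Nat.card (MulAction.orbit N w) = Nat.card (MulAction.orbit N v) := by
    intro w
    obtain ⟨g, rfl⟩ := htr v w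
    refine (Nat.card_congr (Equiv.ofBijective (fun x : MulAction.orbit N v =>
      (⟨g • x.1, ?_⟩ : MulAction.orbit N (g • v))) ⟨?_, ?_⟩)).symm
    · obtain ⟨l, hl⟩ := x.2
      exact ⟨⟨g * l * g⁻¹, ‹N.Normal›.conj_mem l l.2 g⟩, by
        rw [← hl]; simp [Subgroup.smul_def, mul_smul]⟩
    · intro x y h
      exact Subtype.ext (smul_left_cancel g (congrArg Subtype.val h))
    · rintro ⟨_, ⟨l, rfl⟩⟩
      refine ⟨⟨g⁻¹ • ((l : G) • g • v), ⟨⟨g⁻¹ * l * g⁻¹⁻¹, ‹N.Normal›.conj_mem l l.2 g⁻¹⟩, ?_⟩⟩, ?_⟩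
      · simp [Subgroup.smul_def, mul_smul]
      · apply Subtype.ext; simp [Subgroup.smul_def]
  have h1 : Nat.card V = Nat.card (Blk N V) * Nat.card (MulAction.orbit N v) := by
    have := Fintype.ofFinite (MulAction.orbitRel.Quotient N V)
    rw [Nat.card_congr (MulAction.selfEquivSigmaOrbits N V), Nat.card_sigma,
      Finset.sum_congr rfl (fun ω _ => horb _)]
    simp only [Finset.sum_const, Finset.card_univ, smul_eq_mul]
    rw [← Nat.card_eq_fintype_card]
    rfl
  rw [h1, mul_assoc, Nat.card_congr (MulAction.orbitEquivQuotientStabilizer N v),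
    ← Subgroup.card_eq_card_quotient_mul_card_subgroup]

/-- A semiregular group on a finite set: the number of points is the number of orbits times the
order of the group. -/
theorem card_of_free {Y H : Type*} [Group H] [MulAction H Y]
    (h : ∀ (g : H) (y : Y), g • y = y → g = 1) :
    Nat.card Y = Nat.card (MulAction.orbitRel.Quotient H Y) * Nat.card H := by
  rw [← Nat.card_prod]
  refine Nat.card_congr (MulAction.selfEquivOrbitsQuotientProd fun y => ?_)
  exact (Subgroup.eq_bot_iff_forall _).2 fun g hg => h g y hg

theorem card_blk_mul {L : Subgroup G} (h : ∀ g ∈ L, ∀ v : V, g • v = v → g = 1) :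
    Nat.card V = Nat.card (Blk L V) * Nat.card L :=
  card_of_free (H := L) fun g v e => Subtype.ext (h g g.2 v e)

/-- The number of points in a given orbit of a semiregular group is its order. -/
theorem card_fiber {L : Subgroup G} (h : ∀ g ∈ L, ∀ v : V, g • v = v → g = 1) (x : Blk L V) :
    Nat.card {v : V // Blk.mk L v = x} = Nat.card L := by
  obtain ⟨v, rfl⟩ := Blk.mk_surj x
  refine (Nat.card_congr (Equiv.ofBijective
    (fun l : L => (⟨(l : G) • v, Blk.mk_smul_mem l.2 v⟩ : {w : V // Blk.mk L w = Blk.mk L v}))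
    ⟨?_, ?_⟩)).symm
  · intro a b e
    have e1 : (a : G) • v = (b : G) • v := congrArg Subtype.val e
    have := h ((b : G)⁻¹ * a) (L.mul_mem (L.inv_mem b.2) a.2) v (by rw [mul_smul, e1, inv_smul_smul])
    exact Subtype.ext (inv_mul_eq_one.1 this).symm
  · rintro ⟨w, hw⟩
    obtain ⟨l, hl, e⟩ := Blk.mk_eq.1 hw.symm
    exact ⟨⟨l, hl⟩, Subtype.ext e⟩

/-- If `d` generates a semiregular group whose order is the full power of two dividing `|V|`, then
all cycles of `d` on the orbits of a semiregular normal subgroup `L` have length divisible by the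
full power of two dividing the number of orbits. -/
theorem two_pow_dvd_of_smul_eq [Finite V] [Finite G] {d : G} {e f m : ℕ}
    (hd : orderOf d = 2 ^ e) (hsemi : ∀ (i : ℕ) (v : V), d ^ i • v = v → d ^ i = 1)
    (hV : ¬ 2 ^ (e + 1) ∣ Nat.card V) {L : Subgroup G} [L.Normal]
    (hL : ∀ g ∈ L, ∀ v : V, g • v = v → g = 1) (hf : 2 ^ f ∣ Nat.card (Blk L V))
    (x : Blk L V) (hm : d ^ m • x = x) : 2 ^ f ∣ m := by
  have hst : Subgroup.zpowers (d ^ m) ≤ MulAction.stabilizer G x := by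
    rw [Subgroup.zpowers_le]; exact hm
  let _ : MulAction (Subgroup.zpowers (d ^ m)) {v : V // Blk.mk L v = x} :=
    { smul := fun h v => ⟨(h : G) • v.1, by
        rw [← Blk.smul_mk, v.2]; exact hst h.2⟩
      one_smul := fun v => Subtype.ext (one_smul G v.1)
      mul_smul := fun a b v => Subtype.ext (mul_smul (a : G) (b : G) v.1) }
  have h1 : orderOf (d ^ m) ∣ Nat.card L := by
    rw [← card_fiber hL x, ← Nat.card_zpowers]
    refine Dvd.intro_left _ (card_of_free ?_).symm
    rintro ⟨h, hh⟩ y e1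
    have e2 : h • y.1 = y.1 := congrArg Subtype.val e1
    obtain ⟨i, rfl⟩ := (mem_powers_iff_mem_zpowers (x := d ^ m)).2 hh
    apply Subtype.ext
    change (d ^ m) ^ i = 1
    change (d ^ m) ^ i • y.1 = y.1 at e2
    rw [← pow_mul] at e2 ⊢
    exact hsemi _ _ e2
  by_contra hcon
  obtain ⟨j, hj, hjm⟩ := (Nat.dvd_prime_pow Nat.prime_two).1 (Nat.gcd_dvd_left (2 ^ e) m)
  have hjf : j < f := by
    by_contra h
    push Not at h
    apply hcon
    exact (pow_dvd_pow 2 h).trans (hjm ▸ Nat.gcd_dvd_right _ _)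
  rw [orderOf_pow, hd, hjm, Nat.pow_div hj (by norm_num)] at h1
  apply hV
  rw [card_blk_mul hL]
  refine (pow_dvd_pow 2 ?_).trans ((pow_add 2 f (e - j)) ▸ mul_dvd_mul hf h1)
  omega

end

/-! ### Arc-transitive group actions on cubic graphs -/

/-- `Γ` is a connected cubic graph on which the group `G` acts arc-transitively by automorphisms. -/
structure CubicArc {V : Type*} (Γ : SimpleGraph V) (G : Type*) [Group G] [MulAction G V] : Prop where
  conn : Γ.Connected
  cubic : ∀ v, Nat.card (Γ.neighborSet v) = 3
  adj : ∀ (g : G) (a b : V), Γ.Adj a b → Γ.Adj (g • a) (g • b)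
  arc : ∀ a b c d : V, Γ.Adj a b → Γ.Adj c d → ∃ g : G, g • a = c ∧ g • b = d

theorem conn_induct {V : Type*} {Γ : SimpleGraph V} (h : Γ.Connected) (P : V → Prop) {v : V}
    (hv : P v) (step : ∀ a b, Γ.Adj a b → P a → P b) (w : V) : P w := by
  obtain ⟨p⟩ := h.preconnected v w
  induction p with
  | nil => exact hv
  | cons hadj _ ih => exact ih (step _ _ hadj hv)

namespace CubicArc
variable {V G : Type*} [Group G] [MulAction G V] {Γ : SimpleGraph V}

theorem exists_nbr (hΓ : CubicArc Γ G) (v : V) : ∃ w, Γ.Adj v w := by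
  have : (Γ.neighborSet v).Nonempty := by
    rw [Set.nonempty_iff_ne_empty]
    intro h
    have := hΓ.cubic v
    rw [h] at this
    simp at this
  exact this

theorem trans (hΓ : CubicArc Γ G) (v w : V) : ∃ g : G, g • v = w := by
  obtain ⟨a, ha⟩ := hΓ.exists_nbr v
  obtain ⟨b, hb⟩ := hΓ.exists_nbr w
  obtain ⟨g, hg, -⟩ := hΓ.arc v a w b ha hb
  exact ⟨g, hg⟩

theorem adj' (hΓ : CubicArc Γ G) {g : G} {a b : V} (h : Γ.Adj (g • a) b) : Γ.Adj a (g⁻¹ • b) := by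
  have := hΓ.adj g⁻¹ _ _ h
  rwa [inv_smul_smul] at this

theorem nbrs (hΓ : CubicArc Γ G) {v w : V} (h : Γ.Adj v w) :
    ∃ x y, Γ.Adj v x ∧ Γ.Adj v y ∧ w ≠ x ∧ w ≠ y ∧ x ≠ y ∧
      ∀ z, Γ.Adj v z → z = w ∨ z = x ∨ z = y := by
  have h3 : (Γ.neighborSet v).ncard = 3 := hΓ.cubic v
  obtain ⟨a, b, c, hab, hac, hbc, e⟩ := Set.ncard_eq_three.1 h3
  have hmem : ∀ z, Γ.Adj v z ↔ z = a ∨ z = b ∨ z = c := by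
    intro z
    rw [← SimpleGraph.mem_neighborSet, e]; simp
  rcases (hmem w).1 h with rfl | rfl | rfl
  · exact ⟨b, c, (hmem b).2 (by simp), (hmem c).2 (by simp), hab, hac, hbc, fun z hz => (hmem z).1 hz⟩
  · exact ⟨a, c, (hmem a).2 (by simp), (hmem c).2 (by simp), hab.symm, hbc, hac,
      fun z hz => by rcases (hmem z).1 hz with h | h | h <;> simp [h]⟩
  · exact ⟨a, b, (hmem a).2 (by simp), (hmem b).2 (by simp), hac.symm, hbc.symm, hab,
      fun z hz => by rcases (hmem z).1 hz with h | h | h <;> simp [h]⟩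

theorem even_card [Finite V] (hΓ : CubicArc Γ G) : 2 ∣ Nat.card V := by
  classical
  have := Fintype.ofFinite V
  have h := Γ.sum_degrees_eq_twice_card_edges
  have h3 : ∀ v, Γ.degree v = 3 := fun v => by
    rw [← hΓ.cubic v, Nat.card_eq_fintype_card, SimpleGraph.card_neighborSet_eq_degree]
  simp only [h3, Finset.sum_const, Finset.card_univ, smul_eq_mul] at h
  rw [Nat.card_eq_fintype_card]
  omega

/-- An element fixing a vertex and one of its neighbours has a square fixing all neighbours. -/
theorem sq_fix (hΓ : CubicArc Γ G) {g : G} {v w : V} (h : Γ.Adj v w) (hv : g • v = v)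
    (hw : g • w = w) (x : V) (hx : Γ.Adj v x) : g • g • x = x := by
  have hg : ∀ z, Γ.Adj v z → Γ.Adj v (g • z) := fun z hz => by
    have := hΓ.adj g _ _ hz
    rwa [hv] at this
  obtain ⟨a, b, ha, hb, hwa, hwb, hab, hall⟩ := hΓ.nbrs h
  have key : ∀ {p q : V}, Γ.Adj v p → Γ.Adj v q → w ≠ p → w ≠ q → p ≠ q →
      (∀ z, Γ.Adj v z → z = w ∨ z = p ∨ z = q) → g • g • p = p := by
    intro p q hp hq hwp hwq hpq hall
    have n1 : ∀ z, g • z = w → z = w := fun z hz => smul_left_cancel g (hz.trans hw.symm)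
    rcases hall _ (hg p hp) with e | e | e
    · exact absurd (n1 _ e).symm hwp
    · rw [e, e]
    · rw [e]
      rcases hall _ (hg q hq) with e' | e' | e'
      · exact absurd (n1 _ e').symm hwq
      · exact e'
      · exact absurd (smul_left_cancel g (e.trans e'.symm)) hpq
  rcases hall x hx with rfl | rfl | rfl
  · rw [hw, hw]
  · exact key ha hb hwa hwb hab hall
  · exact key hb ha hwb hwa hab.symm (fun z hz => (hall z hz).imp_right Or.symm)

/-- An automorphism fixing the neighbourhood of every vertex that it fixes is trivial. -/
theorem eq_one_of_local [FaithfulSMul G V] (hΓ : CubicArc Γ G) {g : G} {v : V} (hv : g • v = v)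
    (h : ∀ u x, g • u = u → Γ.Adj u x → g • x = x) : g = 1 := by
  apply FaithfulSMul.eq_of_smul_eq_smul (α := V)
  intro u
  rw [one_smul]
  exact conn_induct hΓ.conn (fun u => g • u = u) hv (fun a b hab ha => h a b ha hab) u

/-- An element of odd order fixing two adjacent vertices is trivial: `sq_fix` propagates its fixed
points along edges. -/
theorem eq_one_of_odd [FaithfulSMul G V] (hΓ : CubicArc Γ G) {g : G} {n : ℕ} (hn : Odd n)
    (hg : g ^ n = 1) {v w : V} (hvw : Γ.Adj v w) (hv : g • v = v) (hw : g • w = w) : g = 1 := by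
  have hloc : ∀ {v w : V}, Γ.Adj v w → g • v = v → g • w = w → ∀ x, Γ.Adj v x → g • x = x := by
    intro v w hvw hv hw x hx
    obtain ⟨m, rfl⟩ := hn
    have h2 : (g * g) • x = x := by rw [mul_smul]; exact hΓ.sq_fix hvw hv hw x hx
    have h3 : ((g * g) ^ m * (g * g)) • x = x := by
      have h4 : ∀ i : ℕ, (g * g) ^ i • x = x := by
        intro i
        induction i with
        | zero => simp
        | succ i ih => rw [pow_succ, mul_smul, h2, ih]
      rw [← pow_succ]; exact h4 _
    have e : (g * g) ^ m * (g * g) = g := by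
      calc _ = g ^ (2 * m + 1) * g := by rw [← pow_two, ← pow_mul]; simp [pow_succ, mul_assoc]
        _ = g := by rw [hg, one_mul]
    rwa [e] at h3
  apply FaithfulSMul.eq_of_smul_eq_smul (α := V)
  intro u
  rw [one_smul]
  refine (conn_induct hΓ.conn (fun u => g • u = u ∧ ∃ x, Γ.Adj u x ∧ g • x = x) ⟨hv, w, hvw, hw⟩
    ?_ u).1
  rintro a b hab ⟨ha, x, hax, hx⟩
  exact ⟨hloc hax ha hx b hab, a, hab.symm, ha⟩

/-! ### Normal quotients -/

variable {L : Subgroup G} [L.Normal]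

/-- A normal subgroup with at least two orbits has no edge inside an orbit. -/
theorem mk_ne_of_adj (hΓ : CubicArc Γ G) (h : 1 < Nat.card (Blk L V)) {v w : V}
    (hvw : Γ.Adj v w) : Blk.mk L v ≠ Blk.mk L w := by
  intro e
  have hall : ∀ a b, Γ.Adj a b → Blk.mk L a = Blk.mk L b := by
    intro a b hab
    obtain ⟨g, rfl, rfl⟩ := hΓ.arc v w a b hvw hab
    exact Blk.mk_smul_congr g e
  have h1 : ∀ u, Blk.mk L u = Blk.mk L v :=
    conn_induct hΓ.conn (fun u => Blk.mk L u = Blk.mk L v) rfl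
      (fun a b hab ha => (hall a b hab).symm.trans ha)
  have : Subsingleton (Blk L V) := ⟨fun x y => by
    obtain ⟨a, rfl⟩ := Blk.mk_surj x
    obtain ⟨b, rfl⟩ := Blk.mk_surj y
    rw [h1, h1 b]⟩
  rw [Nat.card_of_subsingleton (Blk.mk L v)] at h
  omega

/-- If a normal subgroup has at least three orbits, the neighbours of a vertex lie in different
orbits. -/
theorem mk_ne_of_nbrs [Finite V] (hΓ : CubicArc Γ G) (h : 2 < Nat.card (Blk L V)) {v w w' : V}
    (hw : Γ.Adj v w) (hw' : Γ.Adj v w') (hne : w ≠ w') : Blk.mk L w ≠ Blk.mk L w' := by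
  intro e
  -- invariance under the vertex stabiliser puts all three neighbours in one orbit
  have h1 : ∀ z, Γ.Adj v z → Blk.mk L z = Blk.mk L w := by
    intro z hz
    by_cases hz1 : z = w
    · rw [hz1]
    by_cases hz2 : z = w'
    · rw [hz2, e]
    obtain ⟨g, hgv, hgw⟩ := hΓ.arc v w v z hw hz
    have e2 := Blk.mk_smul_congr (L := L) g e
    rw [hgw] at e2
    have h3 : Γ.Adj v (g • w') := by have := hΓ.adj g _ _ hw'; rwa [hgv] at this
    obtain ⟨a, b, -, -, -, -, -, hall⟩ := hΓ.nbrs hw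
    have hz' := hall z hz
    have hw2 := hall w' hw'
    have h5 := hall _ h3
    have h6 : g • w' ≠ z := fun h => hne (smul_left_cancel g (hgw.trans h.symm))
    have : g • w' = w ∨ g • w' = w' := by grind
    rcases this with h7 | h7
    · rw [e2, h7]
    · rw [e2, h7, e]
  have h2 : ∀ u z z', Γ.Adj u z → Γ.Adj u z' → Blk.mk L z = Blk.mk L z' := by
    intro u z z' hz hz'
    obtain ⟨g, rfl⟩ := hΓ.trans v u
    have := Blk.mk_smul_congr (L := L) g
      ((h1 _ (hΓ.adj' hz)).trans (h1 _ (hΓ.adj' hz')).symm)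
    simpa using this
  have h3 : ∀ u, Blk.mk L u = Blk.mk L v ∨ Blk.mk L u = Blk.mk L w := by
    refine conn_induct hΓ.conn (fun u => Blk.mk L u = Blk.mk L v ∨ Blk.mk L u = Blk.mk L w)
      (Or.inl rfl) ?_
    rintro a b hab (ha | ha)
    · right
      obtain ⟨l, hl, rfl⟩ := Blk.mk_eq.1 ha.symm
      rw [← h1 _ (hΓ.adj' hab)]
      exact (Blk.mk_smul_mem (L.inv_mem hl) _).symm
    · left
      obtain ⟨l, hl, rfl⟩ := Blk.mk_eq.1 ha.symm
      rw [← h2 w _ _ (hΓ.adj' hab) hw.symm]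
      exact (Blk.mk_smul_mem (L.inv_mem hl) _).symm
  have hsurj : Function.Surjective
      (fun b : Fin 2 => if b = 0 then Blk.mk L v else Blk.mk L w) := by
    intro x
    obtain ⟨u, rfl⟩ := Blk.mk_surj x
    rcases h3 u with h | h
    · exact ⟨0, by simp [h]⟩
    · exact ⟨1, by simp [h]⟩
  have := Nat.card_le_card_of_surjective _ hsurj
  rw [Nat.card_fin] at this
  omega

/-- An element that fixes a vertex and all orbits of `L` is trivial. -/
theorem eq_one_of_fix_blk [Finite V] [FaithfulSMul G V] (hΓ : CubicArc Γ G)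
    (h : 2 < Nat.card (Blk L V)) {g : G} {v : V} (hv : g • v = v)
    (hg : ∀ x : Blk L V, g • x = x) : g = 1 := by
  refine hΓ.eq_one_of_local hv fun u x hu hx => ?_
  by_contra hne
  have hx' : Γ.Adj u (g • x) := by have := hΓ.adj g _ _ hx; rwa [hu] at this
  exact hΓ.mk_ne_of_nbrs h hx' hx hne (hg (Blk.mk L x))

/-- A normal subgroup with at least three orbits is semiregular. -/
theorem semireg [Finite V] [FaithfulSMul G V] (hΓ : CubicArc Γ G)
    (h : 2 < Nat.card (Blk L V)) (g : G) (hg : g ∈ L) (v : V) (hv : g • v = v) : g = 1 :=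
  hΓ.eq_one_of_fix_blk h hv (Blk.smul_of_mem hg)

/-- A normal subgroup with at least three orbits is the kernel of the action on its orbits. -/
theorem mem_of_fix_blk [Finite V] [FaithfulSMul G V] (hΓ : CubicArc Γ G)
    (h : 2 < Nat.card (Blk L V)) {g : G} (hg : ∀ x : Blk L V, g • x = x) : g ∈ L := by
  obtain ⟨v⟩ := hΓ.conn.nonempty
  obtain ⟨l, hl, e⟩ := Blk.mk_eq.1 (hg (Blk.mk L v)).symm
  have : l⁻¹ * g = 1 := by
    refine hΓ.eq_one_of_fix_blk h (v := v) ?_ ?_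
    · rw [mul_smul, ← e, inv_smul_smul]
    · intro x
      rw [mul_smul, hg, Blk.smul_of_mem (L.inv_mem hl)]
  rw [inv_mul_eq_one] at this
  exact this ▸ hl

end CubicArc

/-- The quotient graph of `Γ` by the orbits of `L`. -/
def quo {V G : Type*} [Group G] [MulAction G V] (Γ : SimpleGraph V) (L : Subgroup G) :
    SimpleGraph (Blk L V) where
  Adj x y := x ≠ y ∧ ∃ a b, Blk.mk L a = x ∧ Blk.mk L b = y ∧ Γ.Adj a b
  symm := ⟨fun _ _ ⟨h, a, b, ha, hb, hab⟩ => ⟨h.symm, b, a, hb, ha, hab.symm⟩⟩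
  loopless := ⟨fun _ h => h.1 rfl⟩

/-- The quotient by a normal subgroup with at least three orbits is again cubic and arc-transitive.
-/
theorem CubicArc.quo {V G : Type*} [Group G] [MulAction G V] {Γ : SimpleGraph V} [Finite V]
    {L : Subgroup G} [L.Normal] (hΓ : CubicArc Γ G) (h : 2 < Nat.card (Blk L V)) :
    CubicArc (quo Γ L) G where
  conn := by
    obtain ⟨v⟩ := hΓ.conn.nonempty
    have : Nonempty (Blk L V) := ⟨Blk.mk L v⟩
    have h1 : ∀ u, (_root_.quo Γ L).Reachable (Blk.mk L v) (Blk.mk L u) :=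
      conn_induct hΓ.conn (fun u => (_root_.quo Γ L).Reachable (Blk.mk L v) (Blk.mk L u))
        (SimpleGraph.Reachable.refl _) (fun a b hab ha => ha.trans
          (SimpleGraph.Adj.reachable ⟨hΓ.mk_ne_of_adj (by omega) hab, a, b, rfl, rfl, hab⟩))
    refine SimpleGraph.Connected.mk fun x y => ?_
    obtain ⟨a, rfl⟩ := Blk.mk_surj x
    obtain ⟨b, rfl⟩ := Blk.mk_surj y
    exact (h1 a).symm.trans (h1 b)
  cubic := by
    intro x
    obtain ⟨v, rfl⟩ := Blk.mk_surj x
    rw [← hΓ.cubic v]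
    refine (Nat.card_congr (Equiv.ofBijective (fun w : Γ.neighborSet v =>
      (⟨Blk.mk L w.1, hΓ.mk_ne_of_adj (by omega) w.2, v, w.1, rfl, rfl, w.2⟩ :
        (_root_.quo Γ L).neighborSet (Blk.mk L v))) ⟨?_, ?_⟩)).symm
    · intro a b e
      by_contra hne
      exact hΓ.mk_ne_of_nbrs h a.2 b.2 (fun h => hne (Subtype.ext h)) (congrArg Subtype.val e)
    · rintro ⟨y, hy, a, b, ha, rfl, hab⟩
      obtain ⟨l, hl, rfl⟩ := Blk.mk_eq.1 ha
      exact ⟨⟨l • b, hΓ.adj l _ _ hab⟩, Subtype.ext (Blk.mk_smul_mem hl b)⟩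
  adj := by
    rintro g x y ⟨hne, a, b, rfl, rfl, hab⟩
    exact ⟨fun e => hne (smul_left_cancel g e), g • a, g • b, rfl, rfl, hΓ.adj g _ _ hab⟩
  arc := by
    rintro _ _ _ _ ⟨-, a, b, rfl, rfl, hab⟩ ⟨-, c, d, rfl, rfl, hcd⟩
    obtain ⟨g, rfl, rfl⟩ := hΓ.arc a b c d hab hcd
    exact ⟨g, rfl, rfl⟩

/-! ### Cubic graphs with a transitive cyclic group -/

theorem zmod_two_mul {N : ℕ} [NeZero N] {a b : ZMod N} (ha : a + a = 0) (hb : b + b = 0)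
    (ha0 : a ≠ 0) (hb0 : b ≠ 0) : a = b := by
  have key : ∀ c : ZMod N, c + c = 0 → c ≠ 0 → 2 * c.val = N := by
    intro c hc hc0
    have h1 : ((2 * c.val : ℕ) : ZMod N) = 0 := by
      push_cast
      rw [ZMod.natCast_zmod_val, two_mul, hc]
    rw [ZMod.natCast_eq_zero_iff] at h1
    have h2 := ZMod.val_lt c
    have h3 : c.val ≠ 0 := fun h => hc0 ((ZMod.val_eq_zero c).1 h)
    obtain ⟨q, hq⟩ := h1
    have : q = 1 := by
      have : q < 2 := by
        by_contra hcon
        push Not at hcon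
        nlinarith
      have : q ≠ 0 := by rintro rfl; omega
      omega
    rw [this] at hq; omega
  apply ZMod.val_injective
  have := key a ha ha0
  have := key b hb hb0
  omega

/-- A set of three nonzero residues closed under negation consists of the element of order two and
a pair `±x`. -/
theorem zmod_symm_triple {N : ℕ} [NeZero N] {B : ZMod N → Prop} (hneg : ∀ z, B z → B (-z))
    (h0 : ¬ B 0) {a b c : ZMod N} (ha : B a) (hb : B b) (hc : B c) (hab : a ≠ b) (hac : a ≠ c)
    (hbc : b ≠ c) (hall : ∀ z, B z → z = a ∨ z = b ∨ z = c) :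
    ∃ h x, h + h = 0 ∧ h ≠ 0 ∧ x ≠ 0 ∧ x ≠ -x ∧ x ≠ h ∧ -x ≠ h ∧ B h ∧ B x ∧ B (-x) ∧
      ∀ z, B z → z = h ∨ z = x ∨ z = -x := by
  have hne : ∀ {z}, B z → z ≠ 0 := fun hz e => h0 (e ▸ hz)
  have huniq : ∀ {y z}, B y → B z → -y = y → -z = z → y = z := fun hy hz ey ez =>
    zmod_two_mul (neg_eq_iff_add_eq_zero.1 ey) (neg_eq_iff_add_eq_zero.1 ez) (hne hy) (hne hz)
  have mk : ∀ {p q r : ZMod N}, B p → B q → B r → p ≠ q → p ≠ r → q ≠ r →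
      (∀ z, B z → z = p ∨ z = q ∨ z = r) → -p = p → ∃ h x, h + h = 0 ∧ h ≠ 0 ∧ x ≠ 0 ∧ x ≠ -x ∧
      x ≠ h ∧ -x ≠ h ∧ B h ∧ B x ∧ B (-x) ∧ ∀ z, B z → z = h ∨ z = x ∨ z = -x := by
    intro p q r hp hq hr hpq hpr hqr hall e
    have e2 : -q = r := by
      rcases hall _ (hneg q hq) with h | h | h
      · exact absurd (by rw [← neg_neg q, h, e]) hpq.symm
      · exact absurd (huniq hp hq e h) hpq
      · exact h
    refine ⟨p, q, neg_eq_iff_add_eq_zero.1 e, hne hp, hne hq, ?_, hpq.symm, ?_, hp, hq, ?_, ?_⟩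
    · rw [e2]; exact hqr
    · rw [e2]; exact hpr.symm
    · rw [e2]; exact hr
    · rw [e2]; exact hall
  rcases hall _ (hneg a ha) with h | h | h
  · exact mk ha hb hc hab hac hbc hall h
  · refine mk hc ha hb hac.symm hbc.symm hab (fun z hz => by have := hall z hz; tauto) ?_
    rcases hall _ (hneg c hc) with h' | h' | h'
    · exact absurd (by rw [← h, ← h', neg_neg]) hbc
    · exact absurd (neg_injective (h.trans h'.symm)) hac
    · exact h'
  · refine mk hb ha hc hab.symm hbc hac (fun z hz => by have := hall z hz; tauto) ?_
    rcases hall _ (hneg b hb) with h' | h' | h'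
    · exact absurd (by rw [← h, ← h', neg_neg]) hbc.symm
    · exact h'
    · exact absurd (neg_injective (h.trans h'.symm)) hab

/-- A cubic arc-transitive graph of 2-power order `N` with a transitive cyclic group has four
vertices. Identifying the vertices with `ZMod N`, the neighbours of `0` are the residue of order two
and a pair `±x`; the graph can be arc-transitive only if `N = 4`. -/
theorem CubicArc.card_eq_four {V G : Type*} [Group G] [MulAction G V] {Γ : SimpleGraph V}
    [Finite V] (hΓ : CubicArc Γ G) {m : ℕ} (hm : Nat.card V = 2 ^ m) {c : G}
    (hc : ∀ v w : V, ∃ i : ℤ, c ^ i • v = w) : Nat.card V = 4 := by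
  obtain ⟨x₀⟩ := hΓ.conn.nonempty
  obtain ⟨N, hN⟩ : ∃ N, N = Function.minimalPeriod (c • ·) x₀ := ⟨_, rfl⟩
  have hper : ∀ k l : ℤ, c ^ k • x₀ = c ^ l • x₀ ↔ (k : ZMod N) = l := by
    intro k l
    have h1 : c ^ k • x₀ = c ^ l • x₀ ↔ c ^ (k - l) • x₀ = x₀ := by
      rw [zpow_sub, ← zpow_neg, ← zpow_add, add_comm, zpow_add, mul_smul, zpow_neg,
        inv_smul_eq_iff]
    rw [h1, MulAction.zpow_smul_eq_iff_minimalPeriod_dvd, ← hN,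
      ← ZMod.intCast_zmod_eq_zero_iff_dvd]
    push_cast
    exact sub_eq_zero
  let φ : ZMod N → V := fun z => c ^ (z.cast : ℤ) • x₀
  have hφ : ∀ k : ℤ, φ (k : ZMod N) = c ^ k • x₀ := by
    intro k
    rw [hper]; simp
  have hinj : Function.Injective φ := by
    intro a b h
    obtain ⟨k, rfl⟩ := ZMod.intCast_surjective a
    obtain ⟨l, rfl⟩ := ZMod.intCast_surjective b
    rw [hφ, hφ, hper] at h
    exact h
  have hsurj : Function.Surjective φ := by
    intro v
    obtain ⟨i, hi⟩ := hc x₀ v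
    exact ⟨i, (hφ i).trans hi⟩
  have hshift : ∀ (a : ZMod N) (k : ℤ), c ^ k • φ a = φ (a + k) := by
    intro a k
    obtain ⟨l, rfl⟩ := ZMod.intCast_surjective a
    rw [hφ, ← Int.cast_add, hφ, add_comm, zpow_add, mul_smul]
  have hcard : N = Nat.card V := by
    rw [← Nat.card_congr (Equiv.ofBijective φ ⟨hinj, hsurj⟩), Nat.card_zmod]
  have : NeZero N := ⟨by rw [hcard, hm]; positivity⟩
  have hadj : ∀ a b z, Γ.Adj (φ a) (φ b) → Γ.Adj (φ (a + z)) (φ (b + z)) := by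
    intro a b z h
    obtain ⟨k, rfl⟩ := ZMod.intCast_surjective z
    rw [← hshift, ← hshift]
    exact hΓ.adj _ _ _ h
  have hB : ∀ a b, Γ.Adj (φ a) (φ b) ↔ Γ.Adj (φ 0) (φ (b - a)) := by
    intro a b
    constructor
    · intro h; simpa [sub_eq_add_neg] using hadj a b (-a) h
    · intro h; simpa using hadj _ _ a h
  obtain ⟨h, x, hh, hh0, hx0, hxx, hxh, hxh', Bh, Bx, Bx', hall⟩ : ∃ h x : ZMod N, h + h = 0 ∧
      h ≠ 0 ∧ x ≠ 0 ∧ x ≠ -x ∧ x ≠ h ∧ -x ≠ h ∧ Γ.Adj (φ 0) (φ h) ∧ Γ.Adj (φ 0) (φ x) ∧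
      Γ.Adj (φ 0) (φ (-x)) ∧ ∀ z, Γ.Adj (φ 0) (φ z) → z = h ∨ z = x ∨ z = -x := by
    obtain ⟨w, hw⟩ := hΓ.exists_nbr (φ 0)
    obtain ⟨y, z, hy, hz, h1, h2, h3, hall⟩ := hΓ.nbrs hw
    obtain ⟨w, rfl⟩ := hsurj w
    obtain ⟨y, rfl⟩ := hsurj y
    obtain ⟨z, rfl⟩ := hsurj z
    refine zmod_symm_triple (B := fun z => Γ.Adj (φ 0) (φ z)) ?_ (Γ.loopless.irrefl _) hw hy hz
      (fun e => h1 (e ▸ rfl)) (fun e => h2 (e ▸ rfl)) (fun e => h3 (e ▸ rfl)) ?_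
    · intro a ha
      have := (hB a 0).1 ha.symm
      rwa [zero_sub] at this
    · intro a ha
      rcases hall _ ha with e | e | e
      · exact Or.inl (hinj e)
      · exact Or.inr (Or.inl (hinj e))
      · exact Or.inr (Or.inr (hinj e))
  -- move the pair `(φ h, φ (±x))`, which has a common neighbour other than `φ 0`, to `(φ x, φ (-x))`
  obtain ⟨g, hg0, hgh⟩ := hΓ.arc _ _ _ _ Bh Bx
  obtain ⟨y, hy, hgy⟩ : ∃ y, (y = x ∨ y = -x) ∧ g • φ y = φ (-x) := by
    obtain ⟨y, hy⟩ := hsurj (g⁻¹ • φ (-x))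
    have hgy : g • φ y = φ (-x) := by rw [hy, smul_inv_smul]
    refine ⟨y, ?_, hgy⟩
    have : Γ.Adj (φ 0) (φ y) := by
      rw [hy]
      apply hΓ.adj'
      rw [hg0]; exact Bx'
    rcases hall y this with e | e | e
    · rw [e, hgh] at hgy
      exact absurd (hinj hgy) hxx
    · exact Or.inl e
    · exact Or.inr e
  have hyB : Γ.Adj (φ 0) (φ y) := by rcases hy with rfl | rfl <;> assumption
  obtain ⟨w, hw⟩ := hsurj (g • φ (h + y))
  have hw0 : w ≠ 0 := by
    rintro rfl
    rw [← hg0] at hw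
    have := hinj (smul_left_cancel g hw)
    have hyh : y = h := by linear_combination -this - hh
    rcases hy with rfl | rfl
    · exact hxh hyh
    · exact hxh' hyh
  have w1 : Γ.Adj (φ 0) (φ (w - x)) := by
    rw [← hB, hw, ← hgh]
    apply hΓ.adj
    rw [hB]; simpa using hyB
  have w2 : Γ.Adj (φ 0) (φ (w + x)) := by
    have : Γ.Adj (φ 0) (φ (w - (-x))) := by
      rw [← hB, hw, ← hgy]
      apply hΓ.adj
      rw [hB]; simpa using Bh
    simpa using this
  have h4x : 4 * x = 0 := by
    have h3x : 3 * x = h → False := by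
      intro e
      have hu : IsUnit ((3 : ℕ) : ZMod N) := by
        rw [ZMod.isUnit_iff_coprime, hcard, hm]
        exact Nat.Coprime.pow_right _ (by norm_num)
      have e2 : ((3 : ℕ) : ZMod N) * (x + x) = 0 := by
        push_cast
        linear_combination 2 * e + hh
      rw [hu.mul_right_eq_zero] at e2
      exact hxx (eq_neg_of_add_eq_zero_left e2)
    rcases hall _ w1 with e | e | e <;> rcases hall _ w2 with e' | e' | e'
    · exact absurd (by linear_combination e' - e) hxx
    · exact absurd (by linear_combination e') hw0
    · exact absurd (by linear_combination e' - e - hh) h3x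
    · exact absurd (by linear_combination e' - e) h3x
    · exact absurd (by linear_combination e') hw0
    · linear_combination e' - e
    all_goals exact absurd (by linear_combination e) hw0
  have h4 : ∀ z : ZMod N, 4 * z = 0 := by
    intro z
    refine conn_induct hΓ.conn (fun v => ∀ z, φ z = v → 4 * z = 0) (v := φ 0) ?_ ?_ (φ z) z rfl
    · intro z e
      rw [hinj e, mul_zero]
    · rintro a b hab ha z rfl
      obtain ⟨a, rfl⟩ := hsurj a
      have h1 := ha a rfl
      rcases hall _ ((hB a z).1 hab) with e | e | e
      · linear_combination h1 + 4 * e + 2 * hh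
      · linear_combination h1 + 4 * e + h4x
      · linear_combination h1 + 4 * e - h4x
  have hdvd : N ∣ 4 := by
    rw [← ZMod.natCast_eq_zero_iff]
    simpa using h4 1
  have hnd : ¬ N ∣ 2 := by
    rw [← ZMod.natCast_eq_zero_iff]
    intro e
    apply hxx
    push_cast at e
    linear_combination x * e
  rw [← hcard]
  clear * - hdvd hnd
  have := Nat.le_of_dvd (by norm_num) hdvd
  interval_cases N <;> omega

/-! ### Elementary abelian factors of even order -/

/-- The setting of the theorem: an arc-transitive action on a cubic graph with `k * n` vertices,
where `k ≥ 5` is squarefree and coprime to six, and an element `c` of order `n` all of whose cycles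
on vertices have length `n`. -/
structure Sys {V : Type*} (Γ : SimpleGraph V) (G : Type*) [Group G] [MulAction G V]
    (k n : ℕ) (c : G) : Prop extends CubicArc Γ G where
  k5 : 5 ≤ k
  sqf : Squarefree k
  cop : Nat.Coprime k 6
  card : Nat.card V = k * n
  ord : orderOf c = n
  free : ∀ (i : ℕ) (v : V), c ^ i • v = v → c ^ i = 1

namespace CubicArc
variable {V G : Type*} [Group G] [MulAction G V] {Γ : SimpleGraph V}

/-- A vertex stabiliser is transitive on the neighbours of the vertex. -/
theorem orbit_nbr (hΓ : CubicArc Γ G) {v w : V} (hw : Γ.Adj v w) :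
    MulAction.orbit (MulAction.stabilizer G v) w = Γ.neighborSet v := by
  ext x
  constructor
  · rintro ⟨⟨g, hg⟩, rfl⟩
    have := hΓ.adj g _ _ hw
    rwa [MulAction.mem_stabilizer_iff.1 hg] at this
  · intro hx
    obtain ⟨g, h1, h2⟩ := hΓ.arc v w v x hw hx
    exact ⟨⟨g, h1⟩, h2⟩

/-- Some element of order three fixes a given vertex. -/
theorem exists_rot [Finite V] [Finite G] (hΓ : CubicArc Γ G) (v : V) :
    ∃ a : G, a • v = v ∧ a ^ 3 = 1 ∧ a ≠ 1 := by
  have := Fact.mk Nat.prime_three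
  obtain ⟨w, hw⟩ := hΓ.exists_nbr v
  have h3 : 3 ∣ Nat.card (MulAction.stabilizer G v) := by
    have h1 := MulAction.index_stabilizer (MulAction.stabilizer G v) w
    rw [hΓ.orbit_nbr hw, ← Nat.card_coe_set_eq, hΓ.cubic v] at h1
    exact h1 ▸ Subgroup.index_dvd_card _
  obtain ⟨⟨a, ha⟩, ho⟩ := exists_prime_orderOf_dvd_card' 3 h3
  rw [Subgroup.orderOf_mk] at ho
  refine ⟨a, ha, ?_, ?_⟩
  · rw [← ho, pow_orderOf_eq_one]
  · rintro rfl
    simp at ho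

/-- A nontrivial element `a` with `a ^ 3 = 1` fixing a vertex permutes its neighbours cyclically. -/
theorem rot_cycle [FaithfulSMul G V] (hΓ : CubicArc Γ G) {a : G} {v w : V} (hv : a • v = v)
    (ha : a ^ 3 = 1) (ha1 : a ≠ 1) (hw : Γ.Adj v w) :
    Γ.Adj v (a • w) ∧ Γ.Adj v (a • a • w) ∧ w ≠ a • w ∧ w ≠ a • a • w ∧ a • w ≠ a • a • w ∧
      ∀ z, Γ.Adj v z → z = w ∨ z = a • w ∨ z = a • a • w := by
  have hadj : ∀ z, Γ.Adj v z → Γ.Adj v (a • z) := fun z hz => by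
    have := hΓ.adj a _ _ hz
    rwa [hv] at this
  have hne : w ≠ a • w := fun e =>
    ha1 (hΓ.eq_one_of_odd (n := 3) (by decide) ha hw hv e.symm)
  have h3 : a • a • a • w = w := by
    rw [← mul_smul, ← mul_smul, ← pow_two, ← pow_succ, ha, one_smul]
  have hne2 : a • w ≠ a • a • w := fun e => hne (smul_left_cancel a e)
  have hne3 : w ≠ a • a • w := fun e => hne (by
    have := congrArg (a • ·) e
    simp only [h3] at this
    exact this.symm)
  refine ⟨hadj w hw, hadj _ (hadj w hw), hne, hne3, hne2, fun z hz => ?_⟩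
  obtain ⟨x, y, hx, hy, h1, h2, h4, hall⟩ := hΓ.nbrs hw
  have e1 := hall _ (hadj w hw)
  have e2 := hall _ (hadj _ (hadj w hw))
  have e3 := hall z hz
  grind

/-- A cubic graph on four vertices is complete. -/
theorem adj_of_card_four [Finite V] (hΓ : CubicArc Γ G) (h4 : Nat.card V = 4) {v w : V}
    (h : v ≠ w) : Γ.Adj v w := by
  obtain ⟨a, ha⟩ := hΓ.exists_nbr v
  obtain ⟨b, c, hb, hc, hab, hac, hbc, -⟩ := hΓ.nbrs ha
  by_contra hw
  have hinj : Function.Injective ![v, w, a, b, c] := by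
    have n1 : ∀ z, Γ.Adj v z → z ≠ v ∧ z ≠ w := fun z hz =>
      ⟨fun e => Γ.loopless.irrefl v (e ▸ hz), fun e => hw (e ▸ hz)⟩
    have ea := n1 a ha
    have eb := n1 b hb
    have ec := n1 c hc
    intro i j hij
    fin_cases i <;> fin_cases j <;> simp_all
  have := Nat.card_le_card_of_injective _ hinj
  rw [Nat.card_fin] at this
  omega

end CubicArc

namespace Sys
variable {V G : Type*} [Group G] [MulAction G V] {Γ : SimpleGraph V} {k n : ℕ} {c : G}

theorem k_odd (h : Sys Γ G k n c) : ¬ 2 ∣ k := by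
  intro h2
  have := Nat.dvd_gcd h2 (show 2 ∣ 6 by norm_num)
  rw [h.cop] at this
  omega

theorem k_three (h : Sys Γ G k n c) : ¬ 3 ∣ k := by
  intro h2
  have := Nat.dvd_gcd h2 (show 3 ∣ 6 by norm_num)
  rw [h.cop] at this
  omega

theorem n_pos [Finite G] (h : Sys Γ G k n c) : 0 < n := by
  rw [← h.ord]; exact orderOf_pos c

/-- A power `d` of `c` generating the Sylow 2-subgroup of `⟨c⟩`. -/
theorem exists_two_part [Finite G] (h : Sys Γ G k n c) : ∃ (d : G) (e : ℕ), (∃ o, d = c ^ o) ∧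
    orderOf d = 2 ^ e ∧ (∀ (i : ℕ) (v : V), d ^ i • v = v → d ^ i = 1) ∧
    ¬ 2 ^ (e + 1) ∣ Nat.card V := by
  obtain ⟨e, o, ho, hn⟩ := Nat.exists_eq_pow_mul_and_not_dvd h.n_pos.ne' 2 (by norm_num)
  have ho0 : 0 < o := Nat.pos_of_ne_zero (by rintro rfl; simp at ho)
  refine ⟨c ^ o, e, ⟨o, rfl⟩, ?_, ?_, ?_⟩
  · rw [orderOf_pow, h.ord, hn, Nat.gcd_eq_right (Dvd.intro_left _ rfl), Nat.mul_div_cancel _ ho0]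
  · intro i v hv
    rw [← pow_mul] at hv ⊢
    exact h.free _ v hv
  · rw [h.card, hn, mul_left_comm, pow_succ]
    intro hd
    have := Nat.dvd_of_mul_dvd_mul_left (by positivity) hd
    rcases (Nat.Prime.dvd_mul Nat.prime_two).1 this with h1 | h1
    · exact h.k_odd h1
    · exact ho h1

variable [Finite V] [Finite G]

/-- `⟨c⟩` is transitive on the orbits of a semiregular normal subgroup whose number of orbits is a
power of two. -/
theorem trans_of_two_pow (h : Sys Γ G k n c) {L : Subgroup G} [L.Normal]
    (hL : ∀ g ∈ L, ∀ v : V, g • v = v → g = 1) {m : ℕ} (hm : Nat.card (Blk L V) = 2 ^ m)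
    (x y : Blk L V) : ∃ i : ℤ, c ^ i • x = y := by
  obtain ⟨d, e, ⟨o, hdo⟩, hde, hfree, hV⟩ := h.exists_two_part
  have hP := fun (x : Blk L V) (j : ℕ) =>
    two_pow_dvd_of_smul_eq (m := j) (x := x) hde hfree hV hL (dvd_of_eq hm.symm)
  let f : Fin (2 ^ m) → Blk L V := fun i => d ^ (i : ℕ) • x
  have key : ∀ i j : ℕ, i ≤ j → j < 2 ^ m → d ^ i • x = d ^ j • x → i = j := by
    intro i j hij hj e1
    obtain ⟨s, rfl⟩ := Nat.exists_eq_add_of_le hij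
    rw [pow_add, mul_smul] at e1
    have := hP x s (smul_left_cancel _ e1).symm
    have := Nat.eq_zero_of_dvd_of_lt this (by omega)
    omega
  have hf : Function.Injective f := by
    intro i j e1
    apply Fin.ext
    rcases le_total (i : ℕ) j with hl | hl
    · exact key i j hl j.2 e1
    · exact (key j i hl i.2 e1.symm).symm
  have hb := (Nat.bijective_iff_injective_and_card f).2 ⟨hf, by rw [Nat.card_fin, hm]⟩
  obtain ⟨i, hi⟩ := hb.2 y
  refine ⟨(o * (i : ℕ) : ℕ), ?_⟩
  rw [zpow_natCast, pow_mul, ← hdo]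
  exact hi

theorem four_of_two_pow [FaithfulSMul G V] (h : Sys Γ G k n c) {L : Subgroup G} [L.Normal]
    (hL : 2 < Nat.card (Blk L V)) {m : ℕ} (hm : Nat.card (Blk L V) = 2 ^ m) :
    Nat.card (Blk L V) = 4 :=
  (h.toCubicArc.quo hL).card_eq_four hm (h.trans_of_two_pow (h.semireg hL) hm)

/-- If `L` has at least three orbits and `S / L` is an elementary abelian 2-group, then `S` has at
least three orbits. -/
theorem not_typeII [FaithfulSMul G V] [Group.IsSolvable G] (h : Sys Γ G k n c) {L S : Subgroup G}
    [L.Normal] [S.Normal] (hL : 2 < Nat.card (Blk L V)) (hLS : L ≤ S) (hch : ElemAbMod 2 L S)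
    (hS1 : 1 ≤ Nat.card (Blk S V)) (hS2 : Nat.card (Blk S V) ≤ 2) : False := by
  have hk5 := h.k5
  have hsemi := h.semireg hL
  have hcardL := card_blk_mul hsemi
  have hLpos : 0 < Nat.card L := Nat.card_pos
  -- the number of `L`-orbits is a power of two, hence four
  have h4 : Nat.card (Blk L V) = 4 := by
    obtain ⟨r, hr⟩ := hch.card Nat.prime_two hLS
    obtain ⟨v⟩ := h.conn.nonempty
    have e1 := card_mul_stab S h.trans v
    rw [hcardL, hr, mul_right_comm, mul_left_comm, mul_comm (Nat.card L)] at e1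
    have e2 := Nat.eq_of_mul_eq_mul_right hLpos
      (e1.trans (by ring : _ = Nat.card (Blk S V) * 2 ^ r * Nat.card L))
    have e3 : Nat.card (Blk S V) * 2 ^ r ∣ 2 ^ (r + 1) := by
      rw [pow_succ, mul_comm]
      apply Nat.mul_dvd_mul_left
      interval_cases Nat.card (Blk S V) <;> norm_num
    obtain ⟨m, -, hm⟩ := (Nat.dvd_prime_pow Nat.prime_two).1 ((Dvd.intro _ e2).trans e3)
    exact h.four_of_two_pow hL hm
  have hQ := h.toCubicArc.quo hL
  -- an elementary abelian factor `L / L₁` of order `r ^ δ`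
  have hL0 : L ≠ ⊥ := by
    rintro rfl
    rw [Subgroup.card_bot, h4, h.card, mul_one] at hcardL
    have h1 : k ∣ 2 ^ 2 := ⟨n, hcardL.symm⟩
    obtain ⟨m, -, rfl⟩ := (Nat.dvd_prime_pow Nat.prime_two).1 h1
    have := h.k_odd
    cases m with
    | zero => omega
    | succ m => exact this (dvd_pow_self 2 (by omega))
  obtain ⟨r, L₁, hr, hL1n, hL1, hch1⟩ := exists_chief_top L hL0
  obtain ⟨δ, hδ⟩ := hch1.card hr hL1.le
  have hL1pos : 0 < Nat.card L₁ := Nat.card_pos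
  have hδ0 : δ ≠ 0 := by
    rintro rfl
    rw [pow_zero, mul_one] at hδ
    exact hL1.ne (Subgroup.eq_of_le_of_card_ge hL1.le hδ.le)
  have hsemi1 : ∀ g ∈ L₁, ∀ v : V, g • v = v → g = 1 := fun g hg => hsemi g (hL1.le hg)
  have hblk1 : Nat.card (Blk L₁ V) = 4 * r ^ δ := by
    have e1 := card_blk_mul hsemi1
    rw [hcardL, h4, hδ, mul_left_comm, mul_comm] at e1
    exact (Nat.eq_of_mul_eq_mul_right hL1pos e1).symm
  have hrδ : 0 < r ^ δ := pow_pos hr.pos δ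
  have hr2 : r ≠ 2 := by
    rintro rfl
    have h1 : Nat.card (Blk L₁ V) = 2 ^ (2 + δ) := by rw [hblk1, pow_add]; norm_num
    have h2 := h.four_of_two_pow (by omega) h1
    have h3 : 2 ≤ 2 ^ δ := by
      calc 2 = 2 ^ 1 := rfl
        _ ≤ 2 ^ δ := Nat.pow_le_pow_right (by norm_num) (by omega)
    omega
  have hcop2 : Nat.Coprime r 2 := (Nat.coprime_primes hr Nat.prime_two).2 hr2
  -- `L / L₁` has rank at most two
  have hδ3 : r ^ δ < r ^ 3 := by
    have hc24 : c ^ 24 ∈ L := by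
      refine h.mem_of_fix_blk hL fun x => ?_
      have h1 : MulAction.toPermHom G (Blk L V) (c ^ 24) = 1 := by
        rw [map_pow]
        have h2 : Nat.card (Equiv.Perm (Blk L V)) = 24 := by
          rw [Nat.card_perm, h4]; rfl
        rw [← h2]
        exact pow_card_eq_one'
      exact congrArg (fun p : Equiv.Perm (Blk L V) => p x) h1
    have hc1 : c ^ (24 * r) ∈ L₁ := by
      rw [pow_mul]; exact hch1.pow _ hc24
    have h1 : n / n.gcd (24 * r) ∣ Nat.card L₁ := by
      have := Subgroup.orderOf_dvd_natCard _ hc1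
      rwa [orderOf_pow, h.ord] at this
    obtain ⟨s, hs⟩ := h1
    have hg := Nat.div_mul_cancel (Nat.gcd_dvd_left n (24 * r))
    have hg2 := Nat.gcd_dvd_right n (24 * r)
    set g := n.gcd (24 * r)
    have hn := h.n_pos
    have h2 : k * g = 4 * s * r ^ δ := by
      have hq0 : 0 < n / g := Nat.pos_of_ne_zero (by intro e; rw [e] at hg; omega)
      apply Nat.eq_of_mul_eq_mul_left hq0
      have e1 : k * n = 4 * (Nat.card L₁ * r ^ δ) := by
        rw [← h.card, hcardL, h4, hδ]
      rw [hs] at e1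
      calc n / g * (k * g) = k * (n / g * g) := by ring
        _ = _ := by rw [hg, e1]; ring
    have h3 : r ^ δ ∣ k * (24 * r) :=
      (Dvd.intro_left _ h2.symm).trans (Nat.mul_dvd_mul_left k hg2)
    by_contra hcon
    have hδ2 : 3 ≤ δ := by
      by_contra h5
      exact hcon (Nat.pow_lt_pow_right hr.one_lt (by omega))
    have h4 : r * r ∣ k * 24 := by
      apply Nat.dvd_of_mul_dvd_mul_right hr.pos
      have h5 := (pow_dvd_pow r hδ2).trans h3
      rwa [show r ^ 3 = r * r * r by ring, ← mul_assoc] at h5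
    by_cases hr3 : r = 3
    · subst hr3
      have : 3 ∣ k * 8 := by omega
      rcases (Nat.Prime.dvd_mul Nat.prime_three).1 this with h5 | h5
      · exact h.k_three h5
      · omega
    · have hc3 : Nat.Coprime r 3 := (Nat.coprime_primes hr Nat.prime_three).2 hr3
      have hc24' : Nat.Coprime (r * r) 24 := by
        have : Nat.Coprime r 24 := by
          rw [show 24 = 2 ^ 3 * 3 by norm_num]
          exact (hcop2.pow_right 3).mul_right hc3
        exact Nat.Coprime.mul_left this this
      have := h.sqf r (hc24'.dvd_of_dvd_mul_right h4)
      rw [Nat.isUnit_iff] at this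
      exact hr.one_lt.ne' this
  -- `S` acts regularly on the four `L`-orbits
  have hSone : Nat.card (Blk S V) = 1 := by
    by_contra hne
    have h2 : 1 < Nat.card (Blk S V) := by omega
    obtain ⟨v⟩ := h.conn.nonempty
    obtain ⟨w, hw⟩ := h.exists_nbr v
    obtain ⟨x, y, hx, hy, hwx, hwy, hxy, -⟩ := h.nbrs hw
    obtain ⟨-, a, b, ha, hb, hab⟩ := hQ.adj_of_card_four h4 (h.mk_ne_of_nbrs hL hw hx hwx)
    have e1 := h.mk_ne_of_adj h2 hw
    have e2 := h.mk_ne_of_adj h2 hx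
    have e3 := h.mk_ne_of_adj h2 hab
    rw [Blk.mk_mono hLS ha, Blk.mk_mono hLS hb] at e3
    have hinj : Function.Injective ![Blk.mk S v, Blk.mk S w, Blk.mk S x] := by
      intro i j hij
      fin_cases i <;> fin_cases j <;> simp_all
    have := Nat.card_le_card_of_injective _ hinj
    rw [Nat.card_fin] at this
    omega
  have hStr : ∀ v w : V, ∃ s ∈ S, s • v = w := by
    intro v w
    have := (Finite.card_le_one_iff_subsingleton (α := Blk S V)).1 hSone.le
    exact Blk.mk_eq.1 (Subsingleton.elim _ _)
  have hSfix : ∀ s ∈ S, ∀ x : Blk L V, s • x = x → s ∈ L := by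
    intro s hs x hx
    refine h.mem_of_fix_blk hL fun y => ?_
    obtain ⟨v, rfl⟩ := Blk.mk_surj x
    obtain ⟨w, rfl⟩ := Blk.mk_surj y
    obtain ⟨t, ht, rfl⟩ := hStr v w
    have e1 := Blk.smul_of_mem (hch.comm s hs t ht) (t • s • Blk.mk L v)
    rw [mul_smul, mul_smul, mul_smul, inv_smul_smul, inv_smul_smul, hx] at e1
    exact e1
  have hSsemi : ∀ g ∈ S, ∀ v : V, g • v = v → g = 1 := fun g hg v hv =>
    hsemi g (hSfix g hg (Blk.mk L v) (congrArg (Blk.mk L) hv)) v hv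
  have hScard : Nat.card S = 4 * Nat.card L := by
    rw [← h4, ← hcardL, card_blk_mul hSsemi, hSone, one_mul]
  -- three cosets of `L` in `S`, rotated by an element of order three
  obtain ⟨v⟩ := h.conn.nonempty
  obtain ⟨w, hw⟩ := h.exists_nbr v
  obtain ⟨a, hav, ha3, ha1⟩ := h.exists_rot v
  obtain ⟨haw, haaw, n1, n2, n3, hall⟩ := h.rot_cycle hav ha3 ha1 hw
  obtain ⟨i, hi, hiv⟩ := hStr v w
  have hvw := h.mk_ne_of_adj (L := L) (by omega) hw
  have hvaw := h.mk_ne_of_adj (L := L) (by omega) haw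
  have hvaaw := h.mk_ne_of_adj (L := L) (by omega) haaw
  have m1 := h.mk_ne_of_nbrs hL hw haw n1
  have m2 := h.mk_ne_of_nbrs hL hw haaw n2
  have m3 := h.mk_ne_of_nbrs hL haw haaw n3
  have hblk : ∀ x : Blk L V, x = Blk.mk L v ∨ ∃ z, Γ.Adj v z ∧ Blk.mk L z = x := by
    intro x
    by_cases hx : x = Blk.mk L v
    · exact Or.inl hx
    · obtain ⟨-, p, q, hp, hq, hpq⟩ := hQ.adj_of_card_four h4 (Ne.symm hx)
      obtain ⟨l, hl, rfl⟩ := Blk.mk_eq.1 hp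
      exact Or.inr ⟨l • q, h.adj l _ _ hpq, (Blk.mk_smul_mem hl q).trans hq⟩
  have hav' : a⁻¹ • v = v := by rw [inv_smul_eq_iff, hav]
  obtain ⟨j, hj⟩ : ∃ j, a * i * a⁻¹ = j := ⟨_, rfl⟩
  have hjS : j ∈ S := hj ▸ ‹S.Normal›.conj_mem i hi a
  have hjv : j • v = a • w := by rw [← hj, mul_smul, mul_smul, hav', hiv]
  have hii : i * i ∈ L := pow_two i ▸ hch.pow i hi
  have hjj : j * j ∈ L := pow_two j ▸ hch.pow j hjS
  have hij2 : (i * j)⁻¹ * (a * j * a⁻¹) ∈ L := by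
    refine hSfix _ (S.mul_mem (S.inv_mem (S.mul_mem hi hjS)) (‹S.Normal›.conj_mem j hjS a))
      (Blk.mk L v) ?_
    have e1 : (a * j * a⁻¹) • Blk.mk L v = Blk.mk L (a • a • w) := by
      rw [Blk.smul_mk, mul_smul, mul_smul, hav', hjv]
    rw [mul_smul, e1, inv_smul_eq_iff, mul_smul]
    have ej : j • Blk.mk L v = Blk.mk L (a • w) := by rw [Blk.smul_mk, hjv]
    have ei : i • Blk.mk L v = Blk.mk L w := by rw [Blk.smul_mk, hiv]
    have eii : ∀ x : Blk L V, i • i • x = x := fun x => by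
      rw [← mul_smul, Blk.smul_of_mem hii]
    rcases hblk (i • j • Blk.mk L v) with e | ⟨z, hz, e⟩
    · exfalso
      have := congrArg (i • ·) e
      simp only [eii, ei, ej] at this
      exact m1 this.symm
    · rw [← e]
      rcases hall z hz with rfl | rfl | rfl
      · exfalso
        rw [← ei] at e
        have := smul_left_cancel _ e
        rw [ej] at this
        exact hvaw this
      · exfalso
        have ec := Blk.smul_of_mem (hch.comm i hi j hjS) (j • i • Blk.mk L v)
        rw [mul_smul, mul_smul, mul_smul, inv_smul_smul, inv_smul_smul, ← e, ← ej] at ec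
        have := smul_left_cancel _ ec
        rw [ei] at this
        exact hvw this
      · rfl
  have hicen := commutes_of_rotated_mod hr hr2 hL1.le hch1 (by
    rw [hδ]; exact Nat.mul_lt_mul_of_pos_left hδ3 hL1pos) hii hjj (hch.comm i hi j hjS) hj hij2
  -- so `S` centralises `L / L₁`
  have hconj : ∀ (b : G) (u : G), u ∈ L → (b * i * b⁻¹) * u * (b * i * b⁻¹)⁻¹ * u⁻¹ ∈ L₁ := by
    intro b u hu
    have h1 := hL1n.conj_mem _ (hicen (b⁻¹ * u * b⁻¹⁻¹) (‹L.Normal›.conj_mem u hu b⁻¹)) b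
    convert h1 using 1
    group
  have hcen : ∀ s ∈ S, ∀ u ∈ L, s * u * s⁻¹ * u⁻¹ ∈ L₁ := by
    intro s hs u hu
    rcases hblk (s • Blk.mk L v) with e | ⟨z, hz, e⟩
    · exact hch1.comm s (hSfix s hs _ e) u hu
    · obtain ⟨b, hbv, hbw⟩ := h.arc v w v z hw hz
      have hbv' : b⁻¹ • v = v := by rw [inv_smul_eq_iff, hbv]
      have hl : (b * i * b⁻¹)⁻¹ * s ∈ L := by
        refine hSfix _ (S.mul_mem (S.inv_mem (‹S.Normal›.conj_mem i hi b)) hs) (Blk.mk L v) ?_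
        rw [mul_smul, ← e, inv_smul_eq_iff, Blk.smul_mk, mul_smul, mul_smul, hbv', hiv, hbw]
      set l := (b * i * b⁻¹)⁻¹ * s with hldef
      have hs' : s = (b * i * b⁻¹) * l := by rw [hldef]; group
      have h1 := hconj b (l * u * l⁻¹) (L.mul_mem (L.mul_mem hl hu) (L.inv_mem hl))
      have h2 := L₁.mul_mem h1 (hch1.comm l hl u hu)
      convert h2 using 1
      rw [hs']
      group
  obtain ⟨W, hWn, hWS, hWc⟩ := exists_normal_complement_mod hL1.le hLS hcen hδ
    (m := 4) (by rw [hScard, hδ]; ring) (Nat.Coprime.pow_left δ (by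
      rw [show 4 = 2 ^ 2 by norm_num]; exact hcop2.pow_right 2))
  -- the complement `W / L₁` of `L / L₁` has order four, so `W` has an odd number of orbits
  have hWblk : Nat.card (Blk W V) = r ^ δ := by
    have e1 := card_blk_mul (fun g hg => hSsemi g (hWS hg))
    rw [card_blk_mul hSsemi, hSone, hScard, hWc, hδ] at e1
    apply Nat.eq_of_mul_eq_mul_right (Nat.mul_pos hL1pos (by norm_num : 0 < 4))
    rw [← e1]; ring
  have hr3 : 3 ≤ r := by have := hr.two_le; omega
  have h5 : r ≤ r ^ δ := Nat.le_self_pow hδ0 r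
  have h6 := (h.toCubicArc.quo (L := W) (by omega)).even_card
  rw [hWblk] at h6
  have := Nat.prime_two.dvd_of_dvd_pow h6
  rw [Nat.prime_dvd_prime_iff_eq Nat.prime_two hr] at this
  exact hr2 this.symm

end Sys

/-! ### Elementary abelian factors of odd order -/

theorem eq_of_card_two {X : Type*} [Finite X] (h : Nat.card X = 2) {a b c : X} (hab : a ≠ b)
    (hac : a ≠ c) : b = c := by
  by_contra hbc
  have hinj : Function.Injective ![a, b, c] := by
    intro i j hij
    fin_cases i <;> fin_cases j <;> simp_all
  have := Nat.card_le_card_of_injective _ hinj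
  rw [Nat.card_fin] at this
  omega

/-- On a set whose size is not divisible by four, an element of 2-power order has a cycle of length
at most two. -/
theorem exists_sq_fixed {X G : Type*} [Group G] [MulAction G X] [Finite X] {d : G} {e : ℕ}
    (hd : orderOf d = 2 ^ e) (h4 : ¬ 4 ∣ Nat.card X) : ∃ x : X, d ^ 2 • x = x := by
  by_contra hcon
  push Not at hcon
  apply h4
  have := Fintype.ofFinite (MulAction.orbitRel.Quotient (Subgroup.zpowers d) X)
  rw [Nat.card_congr (MulAction.selfEquivSigmaOrbits (Subgroup.zpowers d) X), Nat.card_sigma]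
  refine Finset.dvd_sum fun ω _ => ?_
  obtain ⟨x, hx⟩ : ∃ x, x = Quotient.out ω := ⟨_, rfl⟩
  rw [← hx, Nat.card_congr (MulAction.orbitZPowersEquiv d x), Nat.card_zmod]
  have h1 : Function.minimalPeriod (d • ·) x ∣ 2 ^ e := by
    rw [← MulAction.pow_smul_eq_iff_minimalPeriod_dvd, ← hd, pow_orderOf_eq_one, one_smul]
  obtain ⟨j, -, hj⟩ := (Nat.dvd_prime_pow Nat.prime_two).1 h1
  have h2 : ¬ Function.minimalPeriod (d • ·) x ∣ 2 := by
    rw [← MulAction.pow_smul_eq_iff_minimalPeriod_dvd]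
    exact hcon x
  rw [hj] at h2 ⊢
  have : 2 ≤ j := by
    by_contra h
    apply h2
    have : j = 0 ∨ j = 1 := by omega
    rcases this with rfl | rfl <;> norm_num
  exact pow_dvd_pow 2 this

/-- A factor `A / B` of order two is central. -/
theorem central_of_card_two {X : Type*} [Group X] [Finite X] {B A : Subgroup X} [B.Normal]
    [A.Normal] (hBA : B ≤ A) (h : Nat.card A = Nat.card B * 2) (x u : X) (hu : u ∈ A) :
    x * u * x⁻¹ * u⁻¹ ∈ B := by
  have hidx : (B.subgroupOf A).index = 2 := by
    have h1 := Subgroup.card_mul_index (B.subgroupOf A)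
    rw [Nat.card_congr (Subgroup.subgroupOfEquivOfLe hBA).toEquiv, h] at h1
    exact Nat.eq_of_mul_eq_mul_left Nat.card_pos h1
  have hxu : x * u * x⁻¹ ∈ A := ‹A.Normal›.conj_mem u hu x
  have h1 := Subgroup.mul_mem_iff_of_index_two hidx (a := ⟨x * u * x⁻¹, hxu⟩) (b := ⟨u⁻¹, A.inv_mem hu⟩)
  rw [Subgroup.mem_subgroupOf, Subgroup.mem_subgroupOf, Subgroup.mem_subgroupOf] at h1
  refine h1.2 ⟨fun h2 => ?_, fun h2 => ?_⟩
  · have := ‹B.Normal›.conj_mem _ h2 x⁻¹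
    apply B.inv_mem
    simpa [mul_assoc] using this
  · exact ‹B.Normal›.conj_mem _ (B.inv_mem_iff.1 h2) x

namespace Sys
variable {V G : Type*} [Group G] [MulAction G V] {Γ : SimpleGraph V} {k n : ℕ} {c : G}
variable [Finite V] [Finite G]

/-- Let `S / L` be an elementary abelian factor of odd order such that `L` has at least three orbits
and `S` at most two. Then `S` has exactly two orbits, and its order is odd. -/
theorem typeI [FaithfulSMul G V] [Group.IsSolvable G] (h : Sys Γ G k n c) {L S : Subgroup G}
    [L.Normal] [hSn : S.Normal] (hL : 2 < Nat.card (Blk L V)) (hLS : L ≤ S) {q : ℕ}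
    (hq : q.Prime) (hq2 : q ≠ 2) (hch : ElemAbMod q L S) (hS1 : 1 ≤ Nat.card (Blk S V))
    (hS2 : Nat.card (Blk S V) ≤ 2) : Nat.card (Blk S V) = 2 ∧ ¬ 2 ∣ Nat.card S := by
  have hsemi := h.semireg hL
  have hcardL := card_blk_mul hsemi
  have hLpos : 0 < Nat.card L := Nat.card_pos
  obtain ⟨r, hr⟩ := hch.card hq hLS
  obtain ⟨v₀⟩ := h.conn.nonempty
  have e2 : Nat.card (Blk L V) * Nat.card (MulAction.stabilizer S v₀) =
      Nat.card (Blk S V) * q ^ r := by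
    have e1 := card_mul_stab S h.trans v₀
    rw [hcardL, hr] at e1
    apply Nat.eq_of_mul_eq_mul_right hLpos
    calc _ = Nat.card (Blk L V) * Nat.card L * Nat.card (MulAction.stabilizer S v₀) := by ring
      _ = _ := by rw [e1]; ring
  have hqodd : ¬ 2 ∣ q ^ r := fun hd => hq2
    ((Nat.prime_dvd_prime_iff_eq Nat.prime_two hq).1 (Nat.prime_two.dvd_of_dvd_pow hd)).symm
  have hev := (h.toCubicArc.quo hL).even_card
  have hS : Nat.card (Blk S V) = 2 := by
    have h1 : Nat.card (Blk S V) ≠ 1 := by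
      intro h1
      rw [h1, one_mul] at e2
      exact hqodd (hev.trans (Dvd.intro _ e2))
    omega
  refine ⟨hS, fun hSeven => ?_⟩
  have hL4 : ¬ 4 ∣ Nat.card (Blk L V) := by
    intro h4
    rw [hS] at e2
    have h1 : 2 * 2 ∣ 2 * q ^ r := h4.trans (Dvd.intro _ e2)
    exact hqodd (Nat.dvd_of_mul_dvd_mul_left (by norm_num) h1)
  have hLeven : 2 ∣ Nat.card L := by
    rw [hr] at hSeven
    exact (Nat.prime_two.dvd_mul.1 hSeven).resolve_right hqodd
  -- `A` is minimal among the normal subgroups of even order and odd index in `L`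
  obtain ⟨A, ⟨hAn, hAL, hA2, o, ho, hAo⟩, hmin⟩ := Set.Finite.exists_minimal
    (s := {A : Subgroup G | A.Normal ∧ A ≤ L ∧ 2 ∣ Nat.card A ∧
      ∃ o, ¬ 2 ∣ o ∧ Nat.card L = Nat.card A * o}) (Set.toFinite _)
    ⟨L, inferInstance, le_rfl, hLeven, 1, by norm_num, (mul_one _).symm⟩
  have hApos : 0 < Nat.card A := Nat.card_pos
  have hA0 : A ≠ ⊥ := by
    rintro rfl
    rw [Subgroup.card_bot] at hA2
    omega
  obtain ⟨p, B, hp, hBn, hBA, hchA⟩ := exists_chief_top A hA0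
  have hBpos : 0 < Nat.card B := Nat.card_pos
  obtain ⟨s, hs⟩ := hchA.card hp hBA.le
  have hp2 : p = 2 := by
    by_contra hp2
    have hpodd : ¬ 2 ∣ p ^ s := fun hd => hp2
      ((Nat.prime_dvd_prime_iff_eq Nat.prime_two hp).1 (Nat.prime_two.dvd_of_dvd_pow hd)).symm
    refine hBA.not_ge (hmin (y := B) ⟨hBn, hBA.le.trans hAL, ?_, p ^ s * o, ?_, ?_⟩ hBA.le)
    · rw [hs] at hA2
      exact (Nat.prime_two.dvd_mul.1 hA2).resolve_right hpodd
    · intro hd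
      exact (Nat.prime_two.dvd_mul.1 hd).elim hpodd ho
    · rw [hAo, hs, mul_assoc]
  subst hp2
  have hs0 : s ≠ 0 := by
    rintro rfl
    rw [pow_zero, mul_one] at hs
    exact hBA.ne (Subgroup.eq_of_le_of_card_ge hBA.le hs.le)
  have hAsemi : ∀ g ∈ A, ∀ v : V, g • v = v → g = 1 := fun g hg => hsemi g (hAL hg)
  have hBsemi : ∀ g ∈ B, ∀ v : V, g • v = v → g = 1 := fun g hg => hAsemi g (hBA.le hg)
  have hblkA : Nat.card (Blk A V) = Nat.card (Blk L V) * o := by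
    apply Nat.eq_of_mul_eq_mul_right hApos
    rw [← card_blk_mul hAsemi, hcardL, hAo]; ring
  have hblkB : Nat.card (Blk B V) = Nat.card (Blk A V) * 2 ^ s := by
    apply Nat.eq_of_mul_eq_mul_right hBpos
    rw [← card_blk_mul hBsemi, card_blk_mul hAsemi, hs]; ring
  have hA4 : ¬ 4 ∣ Nat.card (Blk A V) := by
    rw [hblkA]
    intro hd
    have hco : Nat.Coprime 4 o := by
      rw [show 4 = 2 ^ 2 by norm_num]
      exact Nat.Coprime.pow_left 2 ((Nat.prime_two.coprime_iff_not_dvd).2 ho)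
    exact hL4 (hco.dvd_of_dvd_mul_right hd)
  have hAev : 2 ∣ Nat.card (Blk A V) := hblkA ▸ hev.mul_right o
  -- an orbit of `A` on which the square of the 2-part of `c` acts
  obtain ⟨d, e, -, hde, hfree, hV⟩ := h.exists_two_part
  obtain ⟨x, hx⟩ := exists_sq_fixed hde hA4
  obtain ⟨v, rfl⟩ := Blk.mk_surj x
  obtain ⟨u₀, hu₀, hu₀v⟩ := Blk.mk_eq.1 hx.symm
  -- `a i` lies in `A` and moves `v` in the same way as `(d ^ 2) ^ i`
  let a : ℕ → G := fun i => Nat.rec 1 (fun _ y => d ^ 2 * y * (d ^ 2)⁻¹ * u₀) i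
  have ha0 : a 0 = 1 := rfl
  have hasucc : ∀ i, a (i + 1) = d ^ 2 * a i * (d ^ 2)⁻¹ * u₀ := fun i => rfl
  have haA : ∀ i, a i ∈ A := by
    intro i
    induction i with
    | zero => exact A.one_mem
    | succ i ih => rw [hasucc]; exact A.mul_mem (hAn.conj_mem _ ih _) hu₀
  have hav : ∀ i, a i • v = (d ^ 2) ^ i • v := by
    intro i
    induction i with
    | zero => simp [ha0]
    | succ i ih =>
      rw [hasucc, mul_smul, hu₀v, mul_smul, inv_smul_smul, mul_smul, ih, ← mul_smul, ← pow_succ']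
  -- `⟨d ^ 2⟩` is regular on the `B`-orbits in the `A`-orbit of `v`, so the `a i` represent `A / B`
  have hinj : Function.Injective
      (fun y : Fin (2 ^ s) × B => (⟨y.2 * a y.1, A.mul_mem (hBA.le y.2.2) (haA _)⟩ : A)) := by
    have key : ∀ i j : ℕ, i ≤ j → j < 2 ^ s → ∀ b ∈ B, ∀ b' ∈ B, b * a i = b' * a j → i = j := by
      intro i j hij hj b hb b' hb' e1
      obtain ⟨t, rfl⟩ := Nat.exists_eq_add_of_le hij
      have e3 : Blk.mk B (a i • v) = Blk.mk B (a (i + t) • v) := by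
        rw [← Blk.mk_smul_mem hb, ← mul_smul, e1, mul_smul, Blk.mk_smul_mem hb']
      rw [hav, hav, pow_add, mul_smul, ← Blk.smul_mk, ← Blk.smul_mk] at e3
      have e4 : d ^ (2 * t) • Blk.mk B v = Blk.mk B v := by
        rw [pow_mul]; exact (smul_left_cancel _ e3).symm
      have h1 : 2 ^ (s + 1) ∣ Nat.card (Blk B V) := by
        rw [hblkB, pow_succ, mul_comm]
        exact Nat.mul_dvd_mul_right hAev _
      have h2 := two_pow_dvd_of_smul_eq hde hfree hV hBsemi h1 _ e4
      rw [pow_succ, mul_comm] at h2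
      have h3 := Nat.dvd_of_mul_dvd_mul_left (by norm_num) h2
      have := Nat.eq_zero_of_dvd_of_lt h3 (by omega)
      omega
    rintro ⟨i, b⟩ ⟨j, b'⟩ e1
    have e3 : (b : G) * a i = b' * a j := congrArg Subtype.val e1
    have hij : i = j := by
      apply Fin.ext
      rcases le_total (i : ℕ) j with hl | hl
      · exact key i j hl j.2 b b.2 b' b'.2 e3
      · exact (key j i hl i.2 b' b'.2 b b.2 e3.symm).symm
    subst hij
    exact Prod.ext rfl (Subtype.ext (mul_right_cancel e3))
  have hsurj := ((Nat.bijective_iff_injective_and_card _).2 ⟨hinj, by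
    rw [Nat.card_prod, Nat.card_fin, hs, mul_comm]⟩).2
  have hle : Nat.card A ≤ Nat.card B * 2 := by
    refine card_le_two_of_iterate_mod hBA.le hchA (m := e) (by rw [← hde, pow_orderOf_eq_one])
      hu₀ ha0 hasucc fun u hu => ?_
    obtain ⟨⟨i, b⟩, e1⟩ := hsurj ⟨u, hu⟩
    exact ⟨i, b, b.2, congrArg Subtype.val e1⟩
  -- `A / B` has order two, so it is central
  have hs1 : s = 1 := by
    rw [hs] at hle
    have h1 := Nat.le_of_mul_le_mul_left hle hBpos
    by_contra hne
    have : 2 ^ 2 ≤ 2 ^ s := Nat.pow_le_pow_right (by norm_num) (by omega)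
    omega
  subst hs1
  rw [pow_one] at hs hblkB
  -- a normal subgroup `W` of index two in `S`
  have hodd : ¬ 2 ∣ o * q ^ r := fun hd => (Nat.prime_two.dvd_mul.1 hd).elim ho hqodd
  have hScard : Nat.card S = Nat.card B * 2 * (o * q ^ r) := by
    rw [hr, hAo, hs]; ring
  obtain ⟨W, hWn, hWS, hWc⟩ := exists_normal_complement_mod hBA.le (hAL.trans hLS)
    (fun x _ u hu => central_of_card_two hBA.le hs x u hu) hs hScard
    ((Nat.prime_two.coprime_iff_not_dvd).2 hodd)
  have hWidx : (W.subgroupOf S).index = 2 := by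
    have h1 := Subgroup.card_mul_index (W.subgroupOf S)
    rw [Nat.card_congr (Subgroup.subgroupOfEquivOfLe hWS).toEquiv] at h1
    apply Nat.eq_of_mul_eq_mul_left (Nat.card_pos : 0 < Nat.card W)
    rw [h1, hScard, hWc]; ring
  have hW4 : 4 ∣ Nat.card (Blk W V) := by
    have e1 := card_mul_stab W h.trans v
    rw [card_blk_mul hBsemi, hWc] at e1
    have e3 : Nat.card (Blk B V) * Nat.card (MulAction.stabilizer W v) =
        Nat.card (Blk W V) * (o * q ^ r) := by
      apply Nat.eq_of_mul_eq_mul_right hBpos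
      calc _ = Nat.card (Blk B V) * Nat.card B * Nat.card (MulAction.stabilizer W v) := by ring
        _ = _ := by rw [e1]; ring
    have h4 : 4 ∣ Nat.card (Blk B V) := by
      rw [hblkB]
      exact Nat.mul_dvd_mul_right hAev 2
    have hco : Nat.Coprime 4 (o * q ^ r) := by
      rw [show 4 = 2 ^ 2 by norm_num]
      exact Nat.Coprime.pow_left 2 ((Nat.prime_two.coprime_iff_not_dvd).2 hodd)
    exact hco.dvd_of_dvd_mul_right (h4.trans (Dvd.intro _ e3))
  have hW3 : 2 < Nat.card (Blk W V) := by
    have : Nonempty (Blk W V) := ⟨Blk.mk W v⟩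
    have h1 : 0 < Nat.card (Blk W V) := Nat.card_pos
    have := Nat.le_of_dvd h1 hW4
    omega
  -- two of the three neighbours of `v` lie in the same orbit of `W`
  obtain ⟨w, hw⟩ := h.exists_nbr v
  obtain ⟨y, z, hy, hz, hwy, hwz, hyz, -⟩ := h.nbrs hw
  have hne : ∀ {w}, Γ.Adj v w → Blk.mk S v ≠ Blk.mk S w := fun hw => h.mk_ne_of_adj (by omega) hw
  obtain ⟨s₂, hs₂, e₂⟩ := Blk.mk_eq.1 (eq_of_card_two hS (hne hw) (hne hy))
  obtain ⟨s₃, hs₃, e₃⟩ := Blk.mk_eq.1 (eq_of_card_two hS (hne hw) (hne hz))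
  have n2 : s₂ ∉ W := fun hm => h.mk_ne_of_nbrs hW3 hw hy hwy (Blk.mk_eq.2 ⟨s₂, hm, e₂⟩)
  have n3 : s₃ ∉ W := fun hm => h.mk_ne_of_nbrs hW3 hw hz hwz (Blk.mk_eq.2 ⟨s₃, hm, e₃⟩)
  have h1 := Subgroup.mul_mem_iff_of_index_two hWidx (a := ⟨s₃, hs₃⟩) (b := ⟨s₂⁻¹, S.inv_mem hs₂⟩)
  rw [Subgroup.mem_subgroupOf, Subgroup.mem_subgroupOf, Subgroup.mem_subgroupOf] at h1
  have hm : s₃ * s₂⁻¹ ∈ W := h1.2 ⟨fun h2 => absurd h2 n3, fun h2 => absurd (W.inv_mem_iff.1 h2) n2⟩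
  refine h.mk_ne_of_nbrs hW3 hy hz hyz (Blk.mk_eq.2 ⟨_, hm, ?_⟩)
  rw [mul_smul, ← e₂, inv_smul_smul, e₃]

end Sys

/-! ### Vertex stabilisers -/

namespace CubicArc
variable {V G : Type*} [Group G] [MulAction G V] {Γ : SimpleGraph V}

/-- A vertex stabiliser has order three times a power of two: no element of odd prime order fixes an
arc. -/
theorem card_stabilizer [Finite V] [Finite G] [FaithfulSMul G V] (hΓ : CubicArc Γ G) (v : V) :
    ∃ s, Nat.card (MulAction.stabilizer G v) = 3 * 2 ^ s := by
  obtain ⟨w, hw⟩ := hΓ.exists_nbr v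
  have h1 := MulAction.index_stabilizer (MulAction.stabilizer G v) w
  rw [hΓ.orbit_nbr hw, ← Nat.card_coe_set_eq, hΓ.cubic v] at h1
  have h2 := Subgroup.card_mul_index (MulAction.stabilizer (MulAction.stabilizer G v) w)
  rw [h1] at h2
  have hp : ∀ {p : ℕ}, p.Prime → p ∣ Nat.card (MulAction.stabilizer (MulAction.stabilizer G v) w) →
      p = 2 := by
    intro p hp hd
    by_contra hp2
    have := Fact.mk hp
    obtain ⟨⟨⟨g, hgv⟩, hgw⟩, ho⟩ := exists_prime_orderOf_dvd_card' p hd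
    rw [Subgroup.orderOf_mk, Subgroup.orderOf_mk] at ho
    have : g = 1 := hΓ.eq_one_of_odd (hp.odd_of_ne_two hp2) (by rw [← ho, pow_orderOf_eq_one]) hw
      hgv hgw
    rw [this, orderOf_one] at ho
    exact hp.one_lt.ne ho
  have h3 := Nat.eq_prime_pow_of_unique_prime_dvd (Nat.card_pos
    (α := MulAction.stabilizer (MulAction.stabilizer G v) w)).ne' hp
  exact ⟨_, by rw [← h2, mul_comm, ← h3]⟩

/-- An element of square one fixing a vertex, and commuting with its conjugate under a rotation at
that vertex, fixes all adjacent vertices. -/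
theorem fix_nbrs_of_comm [FaithfulSMul G V] (hΓ : CubicArc Γ G) {y a : G} {v : V}
    (hy : y • v = v) (hyy : y * y = 1) (hav : a • v = v) (ha : a ^ 3 = 1) (ha1 : a ≠ 1)
    (hcomm : y * (a * y * a⁻¹) = a * y * a⁻¹ * y) {x : V} (hx : Γ.Adj v x) : y • x = x := by
  have hadj : ∀ z, Γ.Adj v z → Γ.Adj v (y • z) := fun z hz => by
    have := hΓ.adj y _ _ hz
    rwa [hy] at this
  have hyy' : ∀ z : V, y • y • z = z := fun z => by rw [← mul_smul, hyy, one_smul]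
  have hinj : ∀ {p q : V}, y • p = y • q → p = q := fun e => smul_left_cancel y e
  have key : ∀ w, Γ.Adj v w → y • w = w → ∀ z, Γ.Adj v z → y • z = z := by
    intro w hw hyw
    obtain ⟨h1, h2, h3, h4, h5, hall⟩ := hΓ.rot_cycle hav ha ha1 hw
    have h6 : a • a • a • w = w := by
      rw [← mul_smul, ← mul_smul, ← pow_two, ← pow_succ, ha, one_smul]
    have h7 : a⁻¹ • w = a • a • w := by rw [inv_smul_eq_iff, h6]
    have e1 : y • (a * y * a⁻¹) • w = (a * y * a⁻¹) • w := by
      rw [← mul_smul, hcomm, mul_smul, hyw]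
    rw [mul_smul, mul_smul, h7] at e1
    have i1 := hall _ (hadj _ h1)
    have i2 := hall _ (hadj _ h2)
    have hcase : y • a • a • w = a • a • w := by
      rcases i2 with e | e | e
      · exact absurd (hinj (hyw.trans e.symm)) h4
      · rw [e] at e1
        exact e1
      · exact e
    intro z hz
    rcases hall z hz with rfl | rfl | rfl
    · exact hyw
    · rcases i1 with e | e | e
      · exact absurd (hinj (hyw.trans e.symm)) h3
      · exact e
      · exact absurd (hinj (hcase.trans e.symm)).symm h5
    · exact hcase
  obtain ⟨p, q, hp, hq, hxp, hxq, hpq, hall⟩ := hΓ.nbrs hx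
  by_cases hp' : y • p = p
  · exact key p hp hp' x hx
  by_cases hq' : y • q = q
  · exact key q hq hq' x hx
  have i1 := hall _ (hadj _ hx)
  have i2 := hall _ (hadj _ hp)
  have i3 := hall _ (hadj _ hq)
  have j1 := hyy' x
  have j2 := hyy' p
  have j3 := hyy' q
  grind

/-- A maximal normal subgroup of odd order with two orbits is not semiregular. -/
theorem exists_mem_stab [Finite V] [Finite G] [FaithfulSMul G V] [Group.IsSolvable G]
    (hΓ : CubicArc Γ G) {N : Subgroup G} [hNn : N.Normal] (hN : ¬ 2 ∣ Nat.card N)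
    (hb : Nat.card (Blk N V) = 2)
    (hmax : ∀ Y : Subgroup G, Y.Normal → N ≤ Y → ¬ 2 ∣ Nat.card Y → Y ≤ N) :
    ∃ a ∈ N, a ≠ 1 ∧ ∃ v : V, a • v = v := by
  by_contra hcon
  push Not at hcon
  have hfree : ∀ g ∈ N, ∀ v : V, g • v = v → g = 1 := fun g hg v hv => by
    by_contra h1
    exact hcon g hg h1 v hv
  let P : Subgroup G := (MulAction.toPermHom G (Blk N V)).ker
  have hP : ∀ g, g ∈ P ↔ ∀ x : Blk N V, g • x = x := fun g => by
    rw [MonoidHom.mem_ker, Equiv.ext_iff]; rfl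
  have hNP : N ≤ P := fun g hg => (hP g).2 (Blk.smul_of_mem hg)
  obtain ⟨v₀⟩ := hΓ.conn.nonempty
  have hlt : N < P := by
    refine lt_of_le_of_ne hNP fun e => ?_
    obtain ⟨a, hav, ha, ha1⟩ := hΓ.exists_rot v₀
    refine ha1 (hfree a (e ▸ (hP a).2 fun x => ?_) v₀ hav)
    have h0 : a • Blk.mk N v₀ = Blk.mk N v₀ := by rw [Blk.smul_mk, hav]
    by_cases hx : x = Blk.mk N v₀
    · rw [hx, h0]
    · refine eq_of_card_two hb (a := Blk.mk N v₀) (fun e => hx ?_) (Ne.symm hx)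
      exact smul_left_cancel a (e.symm.trans h0.symm)
  -- a factor `Y / N` inside the kernel `P` on the two orbits is a 2-group by maximality; it will turn
  -- out that `Y` is semiregular, hence equal to `N`
  obtain ⟨q, Y, hq, hYn, hNY, hYP, hch⟩ := exists_chief N P hlt
  have hq2 : q = 2 := by
    by_contra hq2
    obtain ⟨r, hr⟩ := hch.card hq hNY.le
    refine hNY.not_ge (hmax Y hYn hNY.le fun hd => ?_)
    rw [hr] at hd
    rcases Nat.prime_two.dvd_mul.1 hd with h | h
    · exact hN h
    · exact hq2 ((Nat.prime_dvd_prime_iff_eq Nat.prime_two hq).1 (Nat.prime_two.dvd_of_dvd_pow h)).symm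
  subst hq2
  have hloc : ∀ y ∈ Y, ∀ v : V, y • v = v → ∀ x, Γ.Adj v x → y • x = x := by
    intro y hy v hv x hx
    obtain ⟨a, hav, ha, ha1⟩ := hΓ.exists_rot v
    have hav' : a⁻¹ • v = v := by rw [inv_smul_eq_iff, hav]
    have hv' : y⁻¹ • v = v := by rw [inv_smul_eq_iff, hv]
    refine hΓ.fix_nbrs_of_comm hv ?_ hav ha ha1 ?_ hx
    · rw [← pow_two]
      refine hfree _ (hch.pow y hy) v ?_
      rw [pow_two, mul_smul, hv, hv]
    · have h1 := hfree _ (hch.comm y hy _ (hYn.conj_mem y hy a)) v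
        (by simp only [mul_smul, mul_inv_rev, inv_inv, hv, hv', hav, hav'])
      rw [mul_inv_eq_one, mul_inv_eq_iff_eq_mul] at h1
      exact h1
  have hYfree : ∀ y ∈ Y, ∀ v : V, y • v = v → y = 1 := fun y hy v hv =>
    hΓ.eq_one_of_local hv fun u x hu hx => hloc y hy u hu x hx
  refine hNY.not_ge fun g hg => ?_
  obtain ⟨l, hl, e⟩ := Blk.mk_eq.1 ((hP g).1 (hYP hg) (Blk.mk N v₀)).symm
  have h1 : l⁻¹ * g = 1 := hYfree _ (Y.mul_mem (Y.inv_mem (hNY.le hl)) hg) v₀ (by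
    rw [mul_smul, ← e, inv_smul_smul])
  rw [inv_mul_eq_one] at h1
  exact h1 ▸ hl

/-- In a normal subgroup of odd order, a nontrivial element fixing a vertex is a rotation there and
generates the stabiliser. -/
theorem stab_of_odd [Finite V] [Finite G] [FaithfulSMul G V] (hΓ : CubicArc Γ G) {N : Subgroup G}
    (hN : Odd (Nat.card N)) {a : G} (ha : a ∈ N) (ha1 : a ≠ 1) {v : V} (hv : a • v = v) :
    a ^ 3 = 1 ∧ ∀ b ∈ N, b • v = v → b ∈ Subgroup.zpowers a := by
  have hodd : ∀ b ∈ N, b ^ Nat.card N = 1 := fun b hb =>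
    congrArg Subtype.val (pow_card_eq_one' (x := (⟨b, hb⟩ : N)))
  have hone : ∀ b ∈ N, b • v = v → ∀ w, Γ.Adj v w → b • w = w → b = 1 := fun b hb hbv w hw hbw =>
    hΓ.eq_one_of_odd hN (hodd b hb) hw hbv hbw
  have hadj : ∀ b : G, b • v = v → ∀ z, Γ.Adj v z → Γ.Adj v (b • z) := fun b hb z hz => by
    have := hΓ.adj b _ _ hz
    rwa [hb] at this
  obtain ⟨w, hw⟩ := hΓ.exists_nbr v
  have n1 : ∀ z, Γ.Adj v z → a • z ≠ z := fun z hz e => ha1 (hone a ha hv z hz e)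
  have h3 : a ^ 3 = 1 := by
    refine hone _ (N.pow_mem ha 3) (by simp [pow_succ, mul_smul, hv]) w hw ?_
    have hs : a ^ 3 • w = a • a • a • w := by simp [pow_succ, mul_smul]
    rw [hs]
    obtain ⟨p, q, hp, hq, hwp, hwq, hpq, hall⟩ := hΓ.nbrs hw
    have i1 := hall _ (hadj a hv _ hw)
    have i2 := hall _ (hadj a hv _ hp)
    have i3 := hall _ (hadj a hv _ hq)
    have m1 := n1 _ hw
    have m2 := n1 _ hp
    have m3 := n1 _ hq
    have hinj : ∀ {p q : V}, a • p = a • q → p = q := fun e => smul_left_cancel a e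
    grind
  refine ⟨h3, fun b hb hbv => ?_⟩
  obtain ⟨-, -, -, -, -, hall⟩ := hΓ.rot_cycle hv h3 ha1 hw
  have hkey : ∀ i : ℕ, b • w = a ^ i • w → b ∈ Subgroup.zpowers a := by
    intro i e
    have hai : a ^ i • v = v := by
      induction i with
      | zero => simp
      | succ i _ =>
        have : a ∈ MulAction.stabilizer G v := hv
        exact (MulAction.stabilizer G v).pow_mem this _
    have h1 := hone ((a ^ i)⁻¹ * b) (N.mul_mem (N.inv_mem (N.pow_mem ha i)) hb)
      (by rw [mul_smul, hbv, inv_smul_eq_iff, hai]) w hw (by rw [mul_smul, e, inv_smul_smul])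
    rw [inv_mul_eq_one] at h1
    exact h1 ▸ Subgroup.npow_mem_zpowers a i
  rcases hall _ (hadj b hbv w hw) with e | e | e
  · exact hkey 0 (by rw [e, pow_zero, one_smul])
  · exact hkey 1 (by rw [e, pow_one])
  · exact hkey 2 (by rw [e, pow_two, mul_smul])

end CubicArc

/-! ### The bound -/

/-- Let `N` have index two in the group `M` of order `2m`, with `m` odd. Then the `m`-th power of
every element of `M` outside `N` is a conjugate in `M` of the involution `z`. -/
theorem conj_of_notMem {G : Type*} [Group G] [Finite G] {N M : Subgroup G}
    {m : ℕ} (hm : Odd m) (hidx : (N.subgroupOf M).index = 2)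
    (hM : Nat.card M = 2 * m) (z : M) (hz : z * z = 1) (hz1 : z ≠ 1) (g : M)
    (hg : (g : G) ∉ N) : ∃ x : M, x * z * x⁻¹ = g ^ m := by
  have h4 : ¬ 4 ∣ Nat.card M := by
    obtain ⟨r, rfl⟩ := hm
    omega
  refine exists_conj_invol h4 hz hz1 ?_ fun h1 => hg ?_
  · rw [← pow_add, ← two_mul, ← hM, pow_card_eq_one']
  · exact mem_of_index_two_of_odd_pow (K := N.subgroupOf M) hidx hm (h1 ▸ Subgroup.one_mem _)

namespace Sys
variable {V G : Type*} [Group G] [MulAction G V] {Γ : SimpleGraph V} {k n : ℕ} {c : G}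
variable [Finite V] [Finite G]

/-- Some normal subgroup of odd order has exactly two orbits. -/
theorem exists_odd_two_orbits [FaithfulSMul G V] [Group.IsSolvable G] (h : Sys Γ G k n c) :
    ∃ S : Subgroup G, S.Normal ∧ Nat.card (Blk S V) = 2 ∧ ¬ 2 ∣ Nat.card S := by
  have hne := h.conn.nonempty
  obtain ⟨L, ⟨hLn, hL⟩, hmax⟩ := Set.Finite.exists_maximal
    (s := {L : Subgroup G | L.Normal ∧ 2 < Nat.card (Blk L V)}) (Set.toFinite _) ⟨⊥, inferInstance, by
      have h1 := card_blk_mul (V := V) (L := (⊥ : Subgroup G)) fun g hg _ _ => Subgroup.mem_bot.1 hg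
      rw [Subgroup.card_bot, mul_one] at h1
      rw [← h1, h.card]
      nlinarith [h.k5, h.n_pos]⟩
  have htop : Nat.card (Blk (⊤ : Subgroup G) V) ≤ 1 := by
    rw [Finite.card_le_one_iff_subsingleton]
    refine ⟨fun x y => ?_⟩
    obtain ⟨v, rfl⟩ := Blk.mk_surj x
    obtain ⟨w, rfl⟩ := Blk.mk_surj y
    obtain ⟨g, hg⟩ := h.trans v w
    exact Blk.mk_eq.2 ⟨g, trivial, hg⟩
  have hlt : L < ⊤ := lt_top_iff_ne_top.2 (by rintro rfl; omega)
  obtain ⟨q, S, hq, hSn, hLS, -, hch⟩ := exists_chief L ⊤ hlt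
  have hS1 : 1 ≤ Nat.card (Blk S V) := by
    have : Nonempty (Blk S V) := hne.map (Blk.mk S)
    exact Nat.card_pos
  have hS2 : Nat.card (Blk S V) ≤ 2 := by
    by_contra hcon
    exact hLS.not_ge (hmax (y := S) ⟨hSn, by omega⟩ hLS.le)
  have hq2 : q ≠ 2 := by
    rintro rfl
    exact h.not_typeII hL hLS.le hch hS1 hS2
  exact ⟨S, hSn, h.typeI hL hLS.le hq hq2 hch hS1 hS2⟩

/-- There is a normal subgroup of odd order with exactly two orbits that is maximal among all normal
subgroups of odd order. -/
theorem exists_max_odd_two_orbits [FaithfulSMul G V] [Group.IsSolvable G] (h : Sys Γ G k n c) :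
    ∃ N : Subgroup G, N.Normal ∧ Nat.card (Blk N V) = 2 ∧ ¬ 2 ∣ Nat.card N ∧
      ∀ Y : Subgroup G, Y.Normal → N ≤ Y → ¬ 2 ∣ Nat.card Y → Y ≤ N := by
  obtain ⟨S, hSn, hS2, hSodd⟩ := h.exists_odd_two_orbits
  obtain ⟨N, ⟨hNn, hNodd, hSN⟩, hmax⟩ := Set.Finite.exists_maximal
    (s := {N : Subgroup G | N.Normal ∧ ¬ 2 ∣ Nat.card N ∧ S ≤ N}) (Set.toFinite _)
    ⟨S, hSn, hSodd, le_rfl⟩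
  refine ⟨N, hNn, ?_, hNodd, fun Y hY hNY hYodd => hmax (y := Y) ⟨hY, hYodd, hSN.trans hNY⟩ hNY⟩
  obtain ⟨v⟩ := h.conn.nonempty
  have hle : Nat.card (Blk N V) ≤ 2 := by
    rw [← hS2]
    refine Nat.card_le_card_of_surjective
      (fun x : Blk S V => Blk.mk N (Classical.choose (Blk.mk_surj x))) fun y => ?_
    obtain ⟨w, rfl⟩ := Blk.mk_surj y
    exact ⟨Blk.mk S w, Blk.mk_mono hSN (Classical.choose_spec (Blk.mk_surj (Blk.mk S w)))⟩
  have hpos : 0 < Nat.card (Blk N V) := by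
    have : Nonempty (Blk N V) := ⟨Blk.mk N v⟩
    exact Nat.card_pos
  have h1 : Nat.card (Blk N V) ≠ 1 := by
    intro h1
    have e := card_mul_stab N h.trans v
    rw [h1, one_mul] at e
    exact hNodd (h.even_card.trans (Dvd.intro _ e))
  omega

/-- The bound `|V| ≤ 6k²`. With `N` as above and `z` the involution of `⟨c⟩`, the order of `c ^ 2`
is bounded by `order_dvd_three_mul` applied to `N⟨z⟩`. -/
theorem card_le [FaithfulSMul G V] [Group.IsSolvable G] (h : Sys Γ G k n c) :
    Nat.card V ≤ 6 * k ^ 2 := by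
  obtain ⟨N, hNn, hb, hN2, hmax⟩ := h.exists_max_odd_two_orbits
  have hNodd : Odd (Nat.card N) := by
    rw [← Nat.not_even_iff_odd, even_iff_two_dvd]; exact hN2
  obtain ⟨a, haN, ha1, v, hav⟩ := h.exists_mem_stab hN2 hb hmax
  obtain ⟨ha3, hstab⟩ := h.stab_of_odd hNodd haN ha1 hav
  obtain ⟨n', rfl⟩ : 2 ∣ n := by
    have h1 := h.even_card
    rw [h.card] at h1
    exact (Nat.prime_two.dvd_mul.1 h1).resolve_left h.k_odd
  have hn0 : 0 < n' := by have := h.n_pos; omega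
  have hNcard : Nat.card N = 3 * k * n' := by
    have h1 : MulAction.stabilizer N v = Subgroup.zpowers (⟨a, haN⟩ : N) := by
      ext ⟨b, hb⟩
      constructor
      · intro hbv
        obtain ⟨i, hi⟩ := hstab b hb hbv
        exact ⟨i, Subtype.ext (by simpa using hi)⟩
      · intro hbz
        have h2 : Subgroup.zpowers (⟨a, haN⟩ : N) ≤ MulAction.stabilizer N v := by
          rw [Subgroup.zpowers_le]; exact hav
        exact h2 hbz
    have h3 : orderOf (⟨a, haN⟩ : N) = 3 := by
      have := Fact.mk Nat.prime_three
      rw [Subgroup.orderOf_mk]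
      exact orderOf_eq_prime ha3 ha1
    have e := card_mul_stab N h.trans v
    rw [h1, Nat.card_zpowers, h3, hb, h.card] at e
    nlinarith
  have hn' : Odd n' := (Nat.odd_mul.1 (hNcard ▸ hNodd)).2
  -- the involution in `⟨c⟩`
  obtain ⟨z, hzdef⟩ : ∃ z, z = c ^ n' := ⟨_, rfl⟩
  have hzz : z * z = 1 := by
    rw [hzdef, ← pow_add, ← two_mul, ← h.ord, pow_orderOf_eq_one]
  have hz1 : z ≠ 1 := by
    rw [hzdef]
    refine pow_ne_one_of_lt_orderOf hn0.ne' ?_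
    rw [h.ord]; omega
  have hzfix : ∀ w : V, z • w ≠ w := fun w hw => hz1 (hzdef ▸ h.free n' w (hzdef ▸ hw))
  have hzN : z ∉ N := fun hz => hz1 (eq_one_of_sq_of_odd hzz hNodd
    (congrArg Subtype.val (pow_card_eq_one' (x := (⟨z, hz⟩ : N)))))
  obtain ⟨M, hMdef⟩ : ∃ M, M = N ⊔ Subgroup.zpowers z := ⟨_, rfl⟩
  have hNM : N ≤ M := hMdef ▸ le_sup_left
  have hzM : z ∈ M := hMdef ▸ (le_sup_right : Subgroup.zpowers z ≤ _) (Subgroup.mem_zpowers z)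
  have hidx : (N.subgroupOf M).index = 2 := by
    rw [hMdef]
    change N.relIndex _ = 2
    rw [Subgroup.relIndex_sup_left, Subgroup.relIndex, show N.subgroupOf (Subgroup.zpowers z) = ⊥ from ?_,
      Subgroup.index_bot, Nat.card_zpowers]
    · exact orderOf_eq_prime (by rw [pow_two, hzz]) hz1
    · rw [Subgroup.subgroupOf_eq_bot, disjoint_iff_inf_le]
      rintro g ⟨hgN, i, rfl⟩
      have h2 : z ^ (2 : ℤ) = 1 := by exact_mod_cast (pow_two z).trans hzz
      rcases Int.even_or_odd' i with ⟨j, rfl | rfl⟩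
      · simp [zpow_mul, h2]
      · simp only [zpow_add, zpow_mul, h2, one_zpow, one_mul, zpow_one] at hgN
        exact absurd hgN hzN
  have hMcard : Nat.card M = 2 * Nat.card N := by
    have h1 := Subgroup.card_mul_index (N.subgroupOf M)
    rw [Nat.card_congr (Subgroup.subgroupOfEquivOfLe hNM).toEquiv, hidx] at h1
    omega
  have hconj : ∀ g : M, (g : G) ∉ N → ∃ x : M, x * ⟨z, hzM⟩ * x⁻¹ = g ^ Nat.card N :=
    fun g hg => conj_of_notMem hNodd hidx hMcard ⟨z, hzM⟩ (Subtype.ext hzz)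
      (fun e => hz1 (congrArg Subtype.val e)) g hg
  have hpowfix : ∀ (g : G) (w : V), g • w = w → ∀ i : ℕ, g ^ i • w = w := fun g w hg i =>
    (MulAction.stabilizer G w).pow_mem (MulAction.mem_stabilizer_iff.2 hg) i
  -- `z` is semiregular, so vertex stabilisers in `M` lie in `N`
  have hMstab : ∀ g ∈ M, ∀ w : V, g • w = w → g ∈ N := by
    intro g hg w hw
    by_contra hgN
    obtain ⟨x, hx⟩ := hconj ⟨g, hg⟩ hgN
    have hx' : (x : G) * z * (x : G)⁻¹ = g ^ Nat.card N := congrArg Subtype.val hx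
    have h1 := hpowfix g w hw (Nat.card N)
    rw [← hx', mul_smul, mul_smul, ← eq_inv_smul_iff] at h1
    exact hzfix _ h1
  have hblk : ∀ w : V, Blk.mk N (z • w) ≠ Blk.mk N w := by
    intro w e
    obtain ⟨l, hl, e⟩ := Blk.mk_eq.1 e
    refine hzN ((N.mul_mem_cancel_left hl).1 (hMstab _ (M.mul_mem (hNM hl) hzM) w ?_))
    rw [mul_smul, e]
  -- vertex stabilisers in `N` are transitive on neighbours
  have hvstab : ∀ x y w : V, Γ.Adj y x → Γ.Adj y w → ∃ b ∈ N, b • y = y ∧ b • w = x := by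
    intro x y w hx hw
    obtain ⟨g, hg⟩ := h.trans v y
    have hg' : g⁻¹ • y = v := by rw [inv_smul_eq_iff, hg]
    have hay : (g * a * g⁻¹) • y = y := by rw [mul_smul, mul_smul, hg', hav, hg]
    have hbN := hNn.conj_mem a haN g
    have hb1 : g * a * g⁻¹ ≠ 1 := fun e => ha1 (conj_eq_one_iff.1 e)
    have hb3 := (h.stab_of_odd hNodd hbN hb1 hay).1
    obtain ⟨-, -, -, -, -, hall⟩ := h.rot_cycle hay hb3 hb1 hw
    rcases hall x hx with e | e | e
    · exact ⟨1, N.one_mem, one_smul _ _, by rw [one_smul, e]⟩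
    · exact ⟨_, hbN, hay, e.symm⟩
    · exact ⟨_, N.mul_mem hbN hbN, by rw [mul_smul, hay, hay], by rw [mul_smul, e]⟩
  -- every edge is reversed by a conjugate of `z`, so these conjugates generate a transitive group
  obtain ⟨E, hE⟩ : ∃ E, E = Subgroup.normalClosure {(⟨z, hzM⟩ : M)} := ⟨_, rfl⟩
  have hflip : ∀ x y : V, Γ.Adj x y → ∃ g ∈ E, (g : G) • x = y := by
    intro x y hxy
    have hxyb := h.mk_ne_of_adj (L := N) (by omega) hxy
    obtain ⟨l, hl, e⟩ := Blk.mk_eq.1 (eq_of_card_two hb (hblk x).symm hxyb)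
    have hadj : Γ.Adj y ((l * z) • y) := by
      have := h.adj (l * z) _ _ hxy
      rwa [mul_smul l z x, e] at this
    obtain ⟨b, hbN, hby, hbx⟩ := hvstab x y _ hxy.symm hadj
    have hg : b * (l * z) ∈ M := M.mul_mem (hNM hbN) (M.mul_mem (hNM hl) hzM)
    have g1 : (b * (l * z)) • x = y := by rw [mul_smul, mul_smul, e, hby]
    have g2 : (b * (l * z)) • y = x := by rw [mul_smul, hbx]
    obtain ⟨u, hu⟩ := hconj ⟨_, hg⟩ fun hgN =>
      hzN ((N.mul_mem_cancel_left hl).1 ((N.mul_mem_cancel_left hbN).1 hgN))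
    refine ⟨⟨_, hg⟩ ^ Nat.card N, ?_, ?_⟩
    · rw [← hu, hE]
      exact Subgroup.normalClosure_normal.conj_mem _
        (Subgroup.subset_normalClosure (Set.mem_singleton _)) u
    · obtain ⟨r, hr⟩ := hNodd
      rw [hr, Subgroup.coe_pow, pow_succ, mul_smul, g1, pow_mul]
      exact hpowfix _ y (by rw [pow_two, mul_smul, g2, g1]) r
  have htr : ∀ u : V, ∃ g ∈ E, (g : G) • v = u := fun u =>
    conn_induct h.conn (fun u => ∃ g ∈ E, (g : G) • v = u) ⟨1, E.one_mem, one_smul _ _⟩ (by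
      rintro x y hxy ⟨g, hg, rfl⟩
      obtain ⟨g', hg', e⟩ := hflip _ _ hxy
      exact ⟨g' * g, E.mul_mem hg' hg, by rw [Subgroup.coe_mul, mul_smul, e]⟩) u
  have htop : Subgroup.normalClosure {(⟨z, hzM⟩ : M)} ⊔ Subgroup.zpowers ⟨a, hNM haN⟩ = ⊤ := by
    rw [← hE, eq_top_iff]
    intro m _
    obtain ⟨g, hg, e⟩ := htr ((m : G) • v)
    have h1 : ((g⁻¹ * m : M) : G) • v = v := by
      rw [Subgroup.coe_mul, mul_smul, ← e, Subgroup.coe_inv, inv_smul_smul]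
    obtain ⟨i, hi⟩ := hstab _ (hMstab _ (g⁻¹ * m : M).2 v h1) h1
    have h2 : g⁻¹ * m ∈ Subgroup.zpowers (⟨a, hNM haN⟩ : M) :=
      ⟨i, Subtype.ext (by simpa using hi)⟩
    have h3 := (E ⊔ Subgroup.zpowers (⟨a, hNM haN⟩ : M)).mul_mem
      ((le_sup_left : E ≤ _) hg) ((le_sup_right : Subgroup.zpowers (⟨a, hNM haN⟩ : M) ≤ _) h2)
    rwa [mul_inv_cancel_left] at h3
  have hcord : orderOf (c ^ 2) = n' := by
    rw [orderOf_pow, h.ord, Nat.gcd_eq_right (Dvd.intro _ rfl), Nat.mul_div_cancel_left _ (by norm_num)]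
  -- the index of `N` is a power of two, so `N` contains all elements of odd order
  have hcN : c ^ 2 ∈ N := by
    refine mem_of_pow_index_coprime (m := n') (by rw [← hcord, pow_orderOf_eq_one]; exact N.one_mem) ?_
    obtain ⟨s, hs⟩ := h.card_stabilizer v
    have h1 := MulAction.index_stabilizer G v
    have h2 := Subgroup.card_mul_index (MulAction.stabilizer G v)
    have h3 : MulAction.orbit G v = Set.univ := Set.eq_univ_of_forall fun w => h.trans v w
    rw [h3, Set.ncard_univ, h.card] at h1
    rw [h1, hs, ← Subgroup.card_mul_index N, hNcard] at h2
    have hpos : 0 < 3 * k * n' := by rw [← hNcard]; exact Nat.card_pos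
    have h4 : N.index = 2 ^ (s + 1) := by
      apply Nat.eq_of_mul_eq_mul_left hpos
      rw [← h2]; ring
    rw [h4]
    exact Nat.Coprime.pow_right _ hn'.coprime_two_right
  have hdvd := order_dvd_three_mul (M := M) h.sqf h.cop hn' (by rw [hMcard, hNcard]; ring)
    (z := ⟨z, hzM⟩) (a := ⟨a, hNM haN⟩) (c := ⟨c ^ 2, hNM hcN⟩) (Subtype.ext hzz)
    (fun e => hz1 (congrArg Subtype.val e)) (Subtype.ext ha3) htop
    (Subtype.ext (by
      change z * c ^ 2 = c ^ 2 * z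
      rw [hzdef, ← pow_add, ← pow_add, add_comm])) (by rw [Subgroup.orderOf_mk, hcord])
  have hle := Nat.le_of_dvd (by have := h.k5; omega) hdvd
  rw [h.card]
  nlinarith

end Sys

/-! ### Arcs -/

/-- In a graph of minimum degree at least two every edge is the beginning of an arc of any positive
length. -/
theorem exists_arc {V : Type*} {Γ : SimpleGraph V}
    (h : ∀ p q : V, Γ.Adj p q → ∃ r, Γ.Adj q r ∧ r ≠ p) (t : ℕ) {a b : V} (hab : Γ.Adj a b) :
    ∃ f : Fin (t + 1 + 1) → V, IsNArc Γ (t + 1) f ∧ f 0 = a ∧ f 1 = b := by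
  choose nb h1 h2 using h
  -- the sequence of oriented edges of a walk which never turns back
  let s : ℕ → {e : V × V // Γ.Adj e.1 e.2} := fun i =>
    Nat.rec ⟨(a, b), hab⟩ (fun _ e => ⟨(e.1.2, nb _ _ e.2), h1 _ _ e.2⟩) i
  have hs : ∀ i, (s (i + 1)).1.1 = (s i).1.2 := fun i => rfl
  have hs2 : ∀ i, (s (i + 2)).1.1 ≠ (s i).1.1 := fun i => h2 _ _ (s i).2
  have hadj : ∀ i, Γ.Adj (s i).1.1 (s (i + 1)).1.1 := fun i => (s i).2
  refine ⟨fun i => (s i).1.1, ⟨fun i => hadj i, fun i j hij e => ?_⟩, rfl, ?_⟩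
  · obtain ⟨d, hd⟩ := Nat.exists_eq_add_of_lt (Fin.lt_def.1 hij)
    simp only [hd] at e ⊢
    by_contra hcon
    have : d = 0 ∨ d = 1 := by omega
    rcases this with rfl | rfl
    · exact (hadj i).ne e
    · exact hs2 i e.symm
  · rfl

/-- Every edge, in either direction, begins a `(t + 1)`-arc, so transitivity on `(t + 1)`-arcs gives
transitivity on arcs. -/
theorem cubicArc_of_arcRegular {V : Type*} {t : ℕ} {Γ : SimpleGraph V} (hconn : Γ.Connected)
    (hcubic : ∀ v : V, Nat.card (Γ.neighborSet v) = 3) {G : Subgroup (Equiv.Perm V)}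
    (hGaut : ∀ g ∈ G, IsGraphAut Γ g) (hGreg : ArcRegular Γ G (t + 1)) : CubicArc Γ ↥G where
  conn := hconn
  cubic := hcubic
  adj g a b h := (hGaut g g.2 a b).2 h
  arc a b c d hab hcd := by
    have hext : ∀ p q : V, Γ.Adj p q → ∃ r, Γ.Adj q r ∧ r ≠ p := by
      intro p q _
      have h3 : (Γ.neighborSet q).ncard = 3 := hcubic q
      exact Set.exists_ne_of_one_lt_ncard (h3.symm ▸ by norm_num : 1 < (Γ.neighborSet q).ncard) p
    obtain ⟨f, hf, rfl, rfl⟩ := exists_arc hext t hab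
    obtain ⟨f', hf', rfl, rfl⟩ := exists_arc hext t hcd
    obtain ⟨g, hg, -⟩ := hGreg f f' hf hf'
    exact ⟨g, hg 0, hg 1⟩

/-- Under Hypothesis 5.1, if `G` is soluble, then `Γ` has order at most
`6 * k ^ 2`. -/
theorem order_le_of_solvable
    (k t : ℕ) (hk5 : 5 ≤ k) (hsf : Squarefree k) (hcop : Nat.Coprime k 6)
    (V : Type*) [Fintype V] (Γ : SimpleGraph V) (hconn : Γ.Connected)
    (hcubic : ∀ v : V, Nat.card (Γ.neighborSet v) = 3)
    (G : Subgroup (Equiv.Perm V))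
    (hGaut : ∀ g ∈ G, IsGraphAut Γ g)
    (hGreg : ArcRegular Γ G (t + 1))
    (C : Subgroup ↥G) (hCcyc : IsCyclic ↥C)
    (hCsemi : IsSemiregular ↥C V)
    (hCorb : Nat.card (MulAction.orbitRel.Quotient ↥C V) = k)
    (hGsol : IsSolvable ↥G) :
    Nat.card V ≤ 6 * k ^ 2 := by
  have : Group.IsSolvable ↥G := hGsol
  have hΓ := cubicArc_of_arcRegular hconn hcubic hGaut hGreg
  obtain ⟨⟨c, hcC⟩, hc⟩ := hCcyc.exists_generator
  have hord : orderOf c = Nat.card C := by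
    exact (Subgroup.orderOf_mk c hcC).symm.trans (orderOf_eq_card_of_forall_mem_zpowers hc)
  have h : Sys Γ ↥G k (Nat.card C) c :=
    { hΓ with
      k5 := hk5
      sqf := hsf
      cop := hcop
      card := by
        rw [card_of_free (H := C) fun g v e => hCsemi g ⟨v, e⟩, hCorb]
      ord := hord
      free := fun i v e => congrArg Subtype.val (hCsemi (⟨c, hcC⟩ ^ i) ⟨v, e⟩) }
  exact h.card_le
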